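/- arXiv:1203.1198 — 2 statements merged into one kernel-verified Lean document; each statement's English description precedes it below -/
import Mathlib

section
/- Let G be an Artin group of large type satisfying the (3,3,m)-hypothesis (no pairwise distinct indices i, j, k with m_{ij} = m_{ik} = 3 and m_{jk} < ∞), let g ∈ G and let i ≠ j. Then either (1) every geodesic word representing g has a prefix representing LD_{ij}(g); or (2) there exist a letter a ∈ {x_i^{±1}, x_j^{±1}}, unique with this property, and an element h' ∈ G(i,j) such that for every geodesic word w representing g, writing u ∈ G(i,j) for the element represented by the maximal {x_i,x_j}-prefix of w, there are integers r, s ≥ 0 with LD_{ij}(g) = u a^r and u = h' a^s in G. -/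
/-!
Two words are equivalent if they are related by replacing subwords in two of the generators by
other geodesic words for the same element of the rank two Artin group; a word is reduced if no
letter can be moved in this way next to its inverse. Garside normal forms make rank two with label
`m` explicit: in a geodesic for an element that admits first letters in both generators there are
at least `m` syllables. For large type, an induction on length then shows that equivalence
preserves reducedness and that the maximal head of a reduced word in two given generators is
unique. So the generators act on the classes of reduced words, the braid relations hold for this
action, and therefore the reduced words are the geodesics, with any two for the same element
equivalent.

Now let `g = h v`, where `h` represents the maximal left divisor in `x_i` and `x_j`. A geodesic
whose `{x_i, x_j}`-prefix `u` falls short of `h` gives `h = u a ^ r`, where `a ^ r v` also admits a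
first letter in some third generator `x_p`. Then powers of letters in `x_p`, the generator of `a`,
`x_p`, … in turn can be stripped from the front of `v`, for any number of powers below the label of
these two generators. Two such chains, for letters in `x_i` and in `x_j`, have the same `x_p`; were
one of the two labels at least `4`, the longer chain would contradict the restricted choice of
first letters after the powers of `x_p`, and labels `3`, `3` are excluded by the
`(3,3,m)`-hypothesis.
-/

namespace ArtinRD

/-- The alternating product `xyxy...` with `m` factors, starting with `x`. -/
def altProd {G : Type*} [Monoid G] : ℕ → G → G → G
  | 0, _, _ => 1
  | n + 1, x, y => x * altProd n y x

/-- The Artin relators determined by a Coxeter-type matrix `M` (`⊤` meaning `∞`). -/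
def artinRels (n : ℕ) (M : Fin n → Fin n → ℕ∞) : Set (FreeGroup (Fin n)) :=
  {r | ∃ i j : Fin n, i ≠ j ∧ ∃ m : ℕ, M i j = (m : ℕ∞) ∧
    r = altProd m (FreeGroup.of i) (FreeGroup.of j) *
        (altProd m (FreeGroup.of j) (FreeGroup.of i))⁻¹}

/-- The Artin group associated to the matrix `M`. -/
abbrev ArtinGroup (n : ℕ) (M : Fin n → Fin n → ℕ∞) : Type := PresentedGroup (artinRels n M)

/-- The standard generator `x_i` of the Artin group. -/
def gen (n : ℕ) (M : Fin n → Fin n → ℕ∞) (i : Fin n) : ArtinGroup n M := PresentedGroup.of i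

/-- The set `A = {x_1^{±1}, ..., x_n^{±1}}` of standard letters. -/
def genSet (n : ℕ) (M : Fin n → Fin n → ℕ∞) : Set (ArtinGroup n M) :=
  {g | ∃ i : Fin n, g = gen n M i ∨ g = (gen n M i)⁻¹}

/-- Word length of `g` with respect to a set `S`: the least `N` such that `g` is a
product of `N` elements of `S`. -/
noncomputable def wordLength {G : Type*} [Group G] (S : Set G) (g : G) : ℕ :=
  sInf {N : ℕ | ∃ w : List G, (∀ a ∈ w, a ∈ S) ∧ w.length = N ∧ w.prod = g}

/-- The word length on an Artin group with respect to the standard letters. -/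
noncomputable def ℓA (n : ℕ) (M : Fin n → Fin n → ℕ∞) : ArtinGroup n M → ℕ :=
  wordLength (genSet n M)

/-- A letter: a generator index together with a sign (`true` = positive). -/
abbrev Letter (n : ℕ) := Fin n × Bool

/-- The group element corresponding to a letter. -/
def toGen (n : ℕ) (M : Fin n → Fin n → ℕ∞) (l : Letter n) : ArtinGroup n M :=
  if l.2 then gen n M l.1 else (gen n M l.1)⁻¹

/-- The group element represented by a word over the letters. -/
def wordElt (n : ℕ) (M : Fin n → Fin n → ℕ∞) (w : List (Letter n)) : ArtinGroup n M :=
  (w.map (toGen n M)).prod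

/-- A word is geodesic if its length equals the word length of the element it represents. -/
def IsGeodesic (n : ℕ) (M : Fin n → Fin n → ℕ∞) (w : List (Letter n)) : Prop :=
  wordLength (genSet n M) (wordElt n M w) = w.length

/-- `h` is a left divisor of `g`: the factorisation `g = h ⬝ (h⁻¹ g)` is geodesic. -/
def IsLeftDiv {G : Type*} [Group G] (ℓ : G → ℕ) (h g : G) : Prop :=
  ℓ h + ℓ (h⁻¹ * g) = ℓ g

/-- `h` is a right divisor of `g`: the factorisation `g = (g h⁻¹) ⬝ h` is geodesic. -/
def IsRightDiv {G : Type*} [Group G] (ℓ : G → ℕ) (h g : G) : Prop :=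
  ℓ (g * h⁻¹) + ℓ h = ℓ g

/-- The two-generator ("dihedral") subgroup `G(i,j)`. -/
def Gij (n : ℕ) (M : Fin n → Fin n → ℕ∞) (i j : Fin n) : Subgroup (ArtinGroup n M) :=
  Subgroup.closure {gen n M i, gen n M j}

/-- The letters `x_i^{±1}, x_j^{±1}` as group elements. -/
def lettersIJ (n : ℕ) (M : Fin n → Fin n → ℕ∞) (i j : Fin n) : Set (ArtinGroup n M) :=
  {gen n M i, (gen n M i)⁻¹, gen n M j, (gen n M j)⁻¹}

/-- The maximal `{x_i,x_j}`-prefix of a word. -/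
def ijPrefix (n : ℕ) (i j : Fin n) (w : List (Letter n)) : List (Letter n) :=
  w.takeWhile (fun l => l.1 == i || l.1 == j)

/-- `h` is a left divisor of `g` lying in `G(i,j)` of maximal word length. -/
def IsMaxLD (n : ℕ) (M : Fin n → Fin n → ℕ∞) (i j : Fin n) (g h : ArtinGroup n M) : Prop :=
  h ∈ Gij n M i j ∧ IsLeftDiv (ℓA n M) h g ∧
    ∀ h' ∈ Gij n M i j, IsLeftDiv (ℓA n M) h' g → ℓA n M h' ≤ ℓA n M h

/-- `h` is a right divisor of `g` lying in `G(i,j)` of maximal word length. -/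
def IsMaxRD (n : ℕ) (M : Fin n → Fin n → ℕ∞) (i j : Fin n) (g h : ArtinGroup n M) : Prop :=
  h ∈ Gij n M i j ∧ IsRightDiv (ℓA n M) h g ∧
    ∀ h' ∈ Gij n M i j, IsRightDiv (ℓA n M) h' g → ℓA n M h' ≤ ℓA n M h

/-! ### Signed letters and word length -/

section Letters

variable {ι : Type*}

/-- The formal inverse of a signed letter, with the sign conventions of `Letter`. -/
def letterInv (a : ι × Bool) : ι × Bool := (a.1, !a.2)

@[simp]
theorem letterInv_fst (a : ι × Bool) : (letterInv a).1 = a.1 := rfl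

@[simp]
theorem letterInv_letterInv (a : ι × Bool) : letterInv (letterInv a) = a := by simp [letterInv]

theorem letterInv_ne (a : ι × Bool) : letterInv a ≠ a := by simp [letterInv, Prod.ext_iff]

theorem ne_letterInv_of_fst_ne {a b : ι × Bool} (h : a.1 ≠ b.1) : a ≠ letterInv b := by
  rintro rfl
  exact h rfl

theorem eq_letterInv_of_fst_eq {a b : ι × Bool} (h : a.1 = b.1) (hab : a ≠ b) :
    b = letterInv a := by
  obtain ⟨k, s⟩ := a
  obtain ⟨l, t⟩ := b
  obtain rfl : k = l := h
  cases s <;> cases t <;> simp_all [letterInv]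

end Letters

section Evaluation

variable {ι H K : Type*} [Group H] [Group K] (u : ι → H)

/-- The value of a signed letter when the names are interpreted by `u`; `toGen` is the case of the
standard generators of an Artin group. -/
def letterEval (a : ι × Bool) : H := if a.2 then u a.1 else (u a.1)⁻¹

/-- The value of a word when the names are interpreted by `u`; `wordElt` is the case of the
standard generators of an Artin group. -/
def wordEval (w : List (ι × Bool)) : H := (w.map (letterEval u)).prod

@[simp]
theorem wordEval_nil : wordEval u [] = 1 := rfl

@[simp]
theorem wordEval_cons (a : ι × Bool) (w : List (ι × Bool)) :
    wordEval u (a :: w) = letterEval u a * wordEval u w := by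
  simp [wordEval]

@[simp]
theorem wordEval_append (v w : List (ι × Bool)) :
    wordEval u (v ++ w) = wordEval u v * wordEval u w := by
  simp [wordEval]

theorem wordEval_replicate (a : ι × Bool) (r : ℕ) :
    wordEval u (List.replicate r a) = letterEval u a ^ r := by
  simp [wordEval]

@[simp]
theorem letterEval_letterInv (a : ι × Bool) : letterEval u (letterInv a) = (letterEval u a)⁻¹ := by
  obtain ⟨k, s⟩ := a
  cases s <;> simp [letterEval, letterInv]

theorem wordEval_invRev (w : List (ι × Bool)) :
    wordEval u (FreeGroup.invRev w) = (wordEval u w)⁻¹ := by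
  induction w with
  | nil => simp
  | cons a w ih =>
    rw [FreeGroup.invRev_cons, wordEval_append, ih, wordEval_cons, mul_inv_rev,
      ← letterEval_letterInv]
    simp [FreeGroup.invRev, letterInv]

theorem map_wordEval (f : H →* K) (w : List (ι × Bool)) :
    f (wordEval u w) = wordEval (f ∘ u) w := by
  induction w with
  | nil => simp
  | cons a w ih =>
    obtain ⟨k, s⟩ := a
    cases s <;> simp [letterEval, ih]

variable {u}

theorem wordEval_congr {u' : ι → H} {w : List (ι × Bool)} (h : ∀ a ∈ w, u a.1 = u' a.1) :
    wordEval u w = wordEval u' w := by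
  refine congrArg List.prod (List.map_congr_left fun a ha => ?_)
  simp [letterEval, h a ha]

theorem wordEval_mem_closure {s : Set ι} {w : List (ι × Bool)} (hw : ∀ a ∈ w, a.1 ∈ s) :
    wordEval u w ∈ Subgroup.closure (u '' s) := by
  refine list_prod_mem fun x hx => ?_
  obtain ⟨a, ha, rfl⟩ := List.mem_map.1 hx
  have hmem : u a.1 ∈ Subgroup.closure (u '' s) :=
    Subgroup.subset_closure (Set.mem_image_of_mem u (hw a ha))
  unfold letterEval
  split_ifs
  · exact hmem
  · exact inv_mem hmem

theorem exists_wordEval_eq_of_mem_closure {s : Set ι} {g : H}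
    (hg : g ∈ Subgroup.closure (u '' s)) :
    ∃ w : List (ι × Bool), (∀ a ∈ w, a.1 ∈ s) ∧ wordEval u w = g := by
  induction hg using Subgroup.closure_induction_left with
  | one => exact ⟨[], by simp, rfl⟩
  | mul_left x hx y _ ih =>
    obtain ⟨k, hk, rfl⟩ := hx
    obtain ⟨w, hw, rfl⟩ := ih
    exact ⟨(k, true) :: w, by simpa [hk] using hw, by simp [letterEval]⟩
  | inv_mul_cancel x hx y _ ih =>
    obtain ⟨k, hk, rfl⟩ := hx
    obtain ⟨w, hw, rfl⟩ := ih
    exact ⟨(k, false) :: w, by simpa [hk] using hw, by simp [letterEval]⟩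

theorem map_altProd (f : H →* K) (k : ℕ) (x y : H) :
    f (altProd k x y) = altProd k (f x) (f y) := by
  induction k generalizing x y with
  | zero => simp [altProd]
  | succ k ih => simp [altProd, ih]

end Evaluation

section LetterLength

variable {ι H : Type*} [Group H] (u : ι → H)

/-- The word length with respect to the letters `u k` and `(u k)⁻¹`; it is `ℓA` for the standard
generators of an Artin group. -/
noncomputable def letterLength (g : H) : ℕ := wordLength (Set.range (letterEval u)) g

theorem letterLength_eq_sInf (g : H) :
    letterLength u g = sInf {N | ∃ w : List (ι × Bool), w.length = N ∧ wordEval u w = g} := by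
  unfold letterLength wordLength
  congr 1 with N
  constructor
  · rintro ⟨l, hl, rfl, rfl⟩
    obtain ⟨w, rfl⟩ : l ∈ Set.range (List.map (letterEval u)) := by
      rw [Set.range_list_map]; exact hl
    exact ⟨w, by simp, rfl⟩
  · rintro ⟨w, rfl, rfl⟩
    refine ⟨w.map (letterEval u), fun x hx => ?_, by simp, rfl⟩
    obtain ⟨a, -, rfl⟩ := List.mem_map.1 hx
    exact ⟨a, rfl⟩

theorem letterLength_wordEval_le (w : List (ι × Bool)) :
    letterLength u (wordEval u w) ≤ w.length := by
  rw [letterLength_eq_sInf]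
  exact Nat.sInf_le ⟨w, rfl, rfl⟩

theorem exists_length_eq_letterLength (w : List (ι × Bool)) :
    ∃ w' : List (ι × Bool),
      w'.length = letterLength u (wordEval u w) ∧ wordEval u w' = wordEval u w := by
  rw [letterLength_eq_sInf]
  exact Nat.sInf_mem (s := {N | ∃ w' : List (ι × Bool), w'.length = N ∧ wordEval u w' = _})
    ⟨w.length, w, rfl, rfl⟩

theorem letterLength_wordEval_append_le (v w : List (ι × Bool)) :
    letterLength u (wordEval u (v ++ w)) ≤ v.length + letterLength u (wordEval u w) := by
  obtain ⟨w', hlen, hw'⟩ := exists_length_eq_letterLength u w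
  rw [← hlen, ← List.length_append, wordEval_append, ← hw', ← wordEval_append]
  exact letterLength_wordEval_le u _

theorem letterLength_inv (g : H) : letterLength u g⁻¹ = letterLength u g := by
  have hle (g : H) : {N | ∃ w, w.length = N ∧ wordEval u w = g} ⊆
      {N | ∃ w, w.length = N ∧ wordEval u w = g⁻¹} := by
    rintro _ ⟨w, rfl, rfl⟩
    exact ⟨FreeGroup.invRev w, FreeGroup.invRev_length, wordEval_invRev u w⟩
  rw [letterLength_eq_sInf, letterLength_eq_sInf]
  exact congrArg sInf ((inv_inv g ▸ hle g⁻¹).antisymm (hle g))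

theorem letterLength_eq_of_descent {u : ι → H} {L : H → ℕ} (hone : L 1 = 0)
    (hle : ∀ a g, L (letterEval u a * g) ≤ L g + 1)
    (hdesc : ∀ g ≠ 1, ∃ a, L (letterEval u a * g) + 1 = L g) (g : H) :
    letterLength u g = L g := by
  have lower (w : List (ι × Bool)) : L (wordEval u w) ≤ w.length := by
    induction w with
    | nil => simp [hone]
    | cons a w ih => simpa using (hle a _).trans (Nat.succ_le_succ ih)
  have attained (N : ℕ) : ∀ g, L g = N → ∃ w, w.length = N ∧ wordEval u w = g := by
    induction N with
    | zero =>
      intro g hg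
      refine ⟨[], rfl, by_contra fun hne => ?_⟩
      obtain ⟨a, ha⟩ := hdesc g (Ne.symm hne)
      omega
    | succ N ih =>
      intro g hg
      obtain ⟨a, ha⟩ := hdesc g (by rintro rfl; omega)
      obtain ⟨w, hlen, hw⟩ := ih _ (by omega : L (letterEval u a * g) = N)
      exact ⟨letterInv a :: w, by simp [hlen], by simp [hw]⟩
  obtain ⟨w, hlen, rfl⟩ := attained (L g) g rfl
  refine le_antisymm (hlen ▸ letterLength_wordEval_le u w) ?_
  obtain ⟨w', hlen', hw'⟩ := exists_length_eq_letterLength u w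
  rw [← hlen', ← hw']
  exact lower w'

end LetterLength

/-! ### Garside normal forms for finite dihedral type -/

/-- Garside normal forms in the two-generator Artin group with label `m`, generated by `x true` and
`x false`: `delta k` is `Δ ^ k`, and `runs f r rs k` is the product of alternating positive words of
lengths `r` and `rs`, times `Δ ^ k`. The first word starts with `x f`, and each of the others
with the last letter of the preceding one, so that no generator can be moved across a boundary. -/
inductive NormalForm
  | delta (k : ℤ)
  | runs (f : Bool) (r : ℕ) (rs : List ℕ) (k : ℤ)

namespace NormalForm

/-- The normal form with a possibly empty list of runs. -/
def ofRuns (f : Bool) : List ℕ → ℤ → NormalForm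
  | [], k => delta k
  | r :: rs, k => runs f r rs k

/-- Left multiplication of a normal form by the generator `x z`. -/
def mulPos (m : ℕ) (z : Bool) : NormalForm → NormalForm
  | delta k => runs z 1 [] k
  | runs f r rs k =>
    if f = z then runs z 1 (r :: rs) k
    else if r + 1 < m then runs z (r + 1) rs k
    else ofRuns f rs (k + 1)

/-- Left multiplication of a normal form by the inverse of the generator `x z`. -/
def mulNeg (m : ℕ) (z : Bool) : NormalForm → NormalForm
  | delta k => runs (!z) (m - 1) [] (k - 1)
  | runs f r rs k =>
    if f = z then if r = 1 then ofRuns z rs k else runs (!z) (r - 1) rs k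
    else runs f (m - 1) (r :: rs) (k - 1)

/-- Left multiplication of a normal form by a signed letter. -/
def mulLetter (m : ℕ) (a : Bool × Bool) (s : NormalForm) : NormalForm :=
  if a.2 then mulPos m a.1 s else mulNeg m a.1 s

/-- All runs of the normal form are nonempty and shorter than `Δ`. -/
def IsValid (m : ℕ) : NormalForm → Prop
  | delta _ => True
  | runs _ r rs _ => ∀ q ∈ r :: rs, 1 ≤ q ∧ q < m

theorem isValid_runs {m : ℕ} {f : Bool} {r : ℕ} {rs : List ℕ} {k : ℤ} :
    IsValid m (runs f r rs k) ↔ (1 ≤ r ∧ r < m) ∧ ∀ q ∈ rs, 1 ≤ q ∧ q < m := by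
  simp [IsValid]

theorem isValid_ofRuns {m : ℕ} {f : Bool} {rs : List ℕ} {k : ℤ} (h : ∀ q ∈ rs, 1 ≤ q ∧ q < m) :
    IsValid m (ofRuns f rs k) := by
  cases rs with
  | nil => trivial
  | cons r rs => exact h

section Action

variable {m : ℕ} {z : Bool} {s : NormalForm}

theorem IsValid.mulPos (hm : 2 ≤ m) (h : IsValid m s) : IsValid m (mulPos m z s) := by
  cases s with
  | delta k => exact isValid_runs.2 ⟨by omega, by simp⟩
  | runs f r rs k =>
    simp only [NormalForm.mulPos]
    split_ifs
    · exact isValid_runs.2 ⟨by omega, h⟩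
    · exact isValid_runs.2 ⟨by omega, (isValid_runs.1 h).2⟩
    · exact isValid_ofRuns (isValid_runs.1 h).2

theorem IsValid.mulNeg (hm : 2 ≤ m) (h : IsValid m s) : IsValid m (mulNeg m z s) := by
  cases s with
  | delta k => exact isValid_runs.2 ⟨by omega, by simp⟩
  | runs f r rs k =>
    have hr := (isValid_runs.1 h).1
    simp only [NormalForm.mulNeg]
    split_ifs
    · exact isValid_ofRuns (isValid_runs.1 h).2
    · exact isValid_runs.2 ⟨by omega, (isValid_runs.1 h).2⟩
    · exact isValid_runs.2 ⟨by omega, h⟩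

theorem IsValid.mulLetter {a : Bool × Bool} (hm : 2 ≤ m) (h : IsValid m s) :
    IsValid m (mulLetter m a s) := by
  unfold NormalForm.mulLetter
  split_ifs
  · exact h.mulPos hm
  · exact h.mulNeg hm

theorem mulNeg_mulPos (h : IsValid m s) : mulNeg m z (mulPos m z s) = s := by
  cases s with
  | delta k => simp [mulPos, mulNeg, ofRuns]
  | runs f r rs k =>
    have hr := (isValid_runs.1 h).1
    simp only [mulPos]
    split_ifs with hf hlt
    · simp [mulNeg, ofRuns, hf]
    · simp [mulNeg, Bool.eq_not_of_ne hf, show r ≠ 0 by omega]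
    · obtain rfl : r = m - 1 := by omega
      cases rs <;> simp [ofRuns, mulNeg, Bool.eq_not_of_ne hf]

theorem mulPos_mulNeg (hm : 2 ≤ m) (h : IsValid m s) : mulPos m z (mulNeg m z s) = s := by
  have hlast : ¬ m - 1 + 1 < m := by omega
  cases s with
  | delta k => simp [mulPos, mulNeg, ofRuns, hlast]
  | runs f r rs k =>
    have hr := (isValid_runs.1 h).1
    simp only [mulNeg]
    split_ifs with hf hone
    · cases rs <;> simp [mulPos, ofRuns, hf, hone]
    · simp [mulPos, hf, show r - 1 + 1 = r by omega, hr.2]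
    · simp [mulPos, hf, ofRuns, hlast]

/-- Left multiplication by a generator, as a permutation of the valid normal forms. -/
def mulPosPerm (m : ℕ) (hm : 2 ≤ m) (z : Bool) : Equiv.Perm {s // IsValid m s} where
  toFun s := ⟨mulPos m z s.1, s.2.mulPos hm⟩
  invFun s := ⟨mulNeg m z s.1, s.2.mulNeg hm⟩
  left_inv s := Subtype.ext (mulNeg_mulPos s.2)
  right_inv s := Subtype.ext (mulPos_mulNeg hm s.2)

theorem letterEval_mulPosPerm (hm : 2 ≤ m) (a : Bool × Bool) (s : {s // IsValid m s}) :
    (letterEval (mulPosPerm m hm) a s).1 = mulLetter m a s.1 := by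
  obtain ⟨z, t⟩ := a
  cases t <;> rfl

end Action

section Coordinates

/-- The `t`-th coordinate of a normal form, for `1 ≤ t ≤ m`: the exponent of `Δ` plus the number of
runs of length at least `t`. Multiplication by a generator changes a single coordinate by one. -/
def coord : NormalForm → ℕ → ℤ
  | delta k, _ => k
  | runs _ r rs k, t => k + (r :: rs).countP (t ≤ ·)

/-- The coordinate that multiplication by a signed letter changes. -/
def letterIndex (m : ℕ) (a : Bool × Bool) : NormalForm → ℕ
  | delta _ => if a.2 then 1 else m
  | runs f r _ _ =>
    if a.2 then if f = a.1 then 1 else r + 1 else if f = a.1 then r else m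

/-- The exponent `±1` of a signed letter. -/
def letterSign (a : Bool × Bool) : ℤ := if a.2 then 1 else -1

variable {m : ℕ} {a : Bool × Bool} {s : NormalForm}

theorem coord_antitone (s : NormalForm) : Antitone (coord s) := by
  intro t t' h
  cases s with
  | delta k => exact le_rfl
  | runs f r rs k =>
    have := List.countP_mono_left (l := r :: rs) (p := (t' ≤ ·)) (q := (t ≤ ·))
      fun q _ hq => by simp only [decide_eq_true_eq] at hq ⊢; omega
    simp only [coord]
    omega

theorem coord_delta (k : ℤ) (t : ℕ) : coord (delta k) t = k := rfl

theorem coord_ofRuns (f : Bool) (rs : List ℕ) (k : ℤ) (t : ℕ) :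
    coord (ofRuns f rs k) t = k + rs.countP (t ≤ ·) := by
  cases rs <;> simp [ofRuns, coord]

theorem coord_runs (f : Bool) (r : ℕ) (rs : List ℕ) (k : ℤ) (t : ℕ) :
    coord (runs f r rs k) t = k + rs.countP (t ≤ ·) + if t ≤ r then 1 else 0 := by
  simp only [coord, List.countP_cons, decide_eq_true_eq]
  split_ifs <;> push_cast <;> ring

theorem letterIndex_mem (hm : 2 ≤ m) (h : IsValid m s) : letterIndex m a s ∈ Finset.Icc 1 m := by
  rw [Finset.mem_Icc]
  cases s with
  | delta k => simp only [letterIndex]; split_ifs <;> omega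
  | runs f r rs k =>
    have hr := (isValid_runs.1 h).1
    simp only [letterIndex]
    split_ifs <;> omega

theorem coord_mulLetter (h : IsValid m s) {t : ℕ} (ht : t ∈ Finset.Icc 1 m) :
    coord (mulLetter m a s) t = coord s t + if t = letterIndex m a s then letterSign a else 0 := by
  rw [Finset.mem_Icc] at ht
  obtain ⟨z, b⟩ := a
  cases s with
  | delta k =>
    cases b <;>
      simp only [mulLetter, mulPos, mulNeg, letterIndex, letterSign, coord_runs, coord_delta,
        List.countP_nil, Bool.false_eq_true, if_true, if_false] <;>
      split_ifs <;> omega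
  | runs f r rs k =>
    have hr := (isValid_runs.1 h).1
    cases b <;>
      simp only [mulLetter, mulPos, mulNeg, letterIndex, letterSign, Bool.false_eq_true, if_true,
        if_false] <;>
      split_ifs <;>
      simp only [coord_ofRuns, coord_runs, List.countP_cons, decide_eq_true_eq, Nat.cast_add,
        Nat.cast_ite, Nat.cast_one, Nat.cast_zero] <;>
      split_ifs <;> omega

/-- The sum of the absolute values of the coordinates, which turns out to be the word length. -/
def length (m : ℕ) (s : NormalForm) : ℕ := ∑ t ∈ Finset.Icc 1 m, (coord s t).natAbs

theorem length_mulLetter_sub (hm : 2 ≤ m) (h : IsValid m s) :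
    (length m (mulLetter m a s) : ℤ) - length m s =
      (coord s (letterIndex m a s) + letterSign a).natAbs -
        (coord s (letterIndex m a s)).natAbs := by
  have hmem := letterIndex_mem (a := a) hm h
  have hrest : ∑ t ∈ (Finset.Icc 1 m).erase (letterIndex m a s), (coord (mulLetter m a s) t).natAbs
      = ∑ t ∈ (Finset.Icc 1 m).erase (letterIndex m a s), (coord s t).natAbs := by
    refine Finset.sum_congr rfl fun t ht => ?_
    rw [Finset.mem_erase] at ht
    rw [coord_mulLetter h ht.2, if_neg ht.1, add_zero]
  unfold length
  rw [← Finset.add_sum_erase _ _ hmem, ← Finset.add_sum_erase _ (fun t => (coord s t).natAbs) hmem,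
    hrest, coord_mulLetter h hmem, if_pos rfl]
  push_cast
  ring

theorem length_mulLetter_of_nonneg (hm : 2 ≤ m) (h : IsValid m s)
    (hc : 0 ≤ letterSign a * coord s (letterIndex m a s)) :
    length m (mulLetter m a s) = length m s + 1 := by
  have := length_mulLetter_sub (a := a) hm h
  unfold letterSign at this hc
  split_ifs at this hc <;> omega

theorem length_mulLetter_of_neg (hm : 2 ≤ m) (h : IsValid m s)
    (hc : letterSign a * coord s (letterIndex m a s) < 0) :
    length m (mulLetter m a s) + 1 = length m s := by
  have := length_mulLetter_sub (a := a) hm h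
  unfold letterSign at this hc
  split_ifs at this hc <;> omega

theorem length_mulLetter_or (hm : 2 ≤ m) (h : IsValid m s) :
    length m (mulLetter m a s) = length m s + 1 ∨ length m (mulLetter m a s) + 1 = length m s :=
  (le_or_gt 0 _).imp (length_mulLetter_of_nonneg hm h) (length_mulLetter_of_neg hm h)

theorem exists_length_mulLetter_lt (hm : 2 ≤ m) (h : IsValid m s) (hs : s ≠ delta 0) :
    ∃ a, length m (mulLetter m a s) + 1 = length m s := by
  cases s with
  | delta k =>
    rcases lt_or_gt_of_ne (show k ≠ 0 by rintro rfl; exact hs rfl) with hk | hk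
    · exact ⟨(true, true), length_mulLetter_of_neg hm h (by simpa [letterSign, coord] using hk)⟩
    · exact ⟨(true, false), length_mulLetter_of_neg hm h (by simpa [letterSign, coord] using hk)⟩
  | runs f r rs k =>
    by_cases hpos : 0 < coord (runs f r rs k) r
    · exact ⟨(f, false), length_mulLetter_of_neg hm h (by simpa [letterSign, letterIndex])⟩
    · refine ⟨(!f, true), length_mulLetter_of_neg hm h ?_⟩
      have hle : rs.countP (r + 1 ≤ ·) ≤ rs.countP (r ≤ ·) :=
        List.countP_mono_left fun q _ hq => by simp only [decide_eq_true_eq] at hq ⊢; omega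
      rw [coord_runs, if_pos le_rfl] at hpos
      simp only [letterSign, letterIndex, coord_runs, Bool.eq_not_self, if_true, if_false]
      rw [if_neg (by omega)]
      omega

end Coordinates
section Syllables

variable {m k P N P' N' : ℕ} {a b : Bool × Bool} {s : NormalForm}

theorem mulLetter_eq_runs_of_pos (ha : a.2 = true) (hi : letterIndex m a s < m) :
    ∃ rs l, mulLetter m a s = runs a.1 (letterIndex m a s) rs l := by
  cases s with
  | delta l => exact ⟨[], l, by simp [mulLetter, mulPos, letterIndex, ha]⟩
  | runs f r rs l =>
    by_cases hf : f = a.1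
    · exact ⟨r :: rs, l, by simp [mulLetter, mulPos, letterIndex, ha, hf]⟩
    · have hr : r + 1 < m := by simpa [letterIndex, ha, hf] using hi
      exact ⟨rs, l, by simp [mulLetter, mulPos, letterIndex, ha, hf, hr]⟩

theorem mulLetter_eq_runs_of_neg (ha : a.2 = false) (hi : 1 < letterIndex m a s) :
    ∃ rs l, mulLetter m a s = runs (!a.1) (letterIndex m a s - 1) rs l := by
  cases s with
  | delta l => exact ⟨[], l - 1, by simp [mulLetter, mulNeg, letterIndex, ha]⟩
  | runs f r rs l =>
    by_cases hf : f = a.1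
    · have hr : r ≠ 1 := by simp [letterIndex, ha, hf] at hi; omega
      exact ⟨rs, l, by simp [mulLetter, mulNeg, letterIndex, ha, hf, hr]⟩
    · exact ⟨r :: rs, l - 1,
        by simp [mulLetter, mulNeg, letterIndex, ha, Bool.eq_not_of_ne hf]⟩

theorem letterIndex_mulLetter_le (hm : 2 ≤ m) (h : IsValid m s) (ha : a.2 = true) :
    letterIndex m a (mulLetter m a s) ≤ letterIndex m a s := by
  have hle := (Finset.mem_Icc.1 (letterIndex_mem (a := a) hm h)).1
  have hmem := Finset.mem_Icc.1 (letterIndex_mem (a := a) hm (h.mulLetter (a := a) hm))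
  rcases lt_or_ge (letterIndex m a s) m with hi | hi
  · obtain ⟨rs, l, heq⟩ := mulLetter_eq_runs_of_pos ha hi
    simpa [heq, letterIndex, ha] using hle
  · exact hmem.2.trans hi

theorem le_letterIndex_mulLetter (hm : 2 ≤ m) (h : IsValid m s) (ha : a.2 = false) :
    letterIndex m a s ≤ letterIndex m a (mulLetter m a s) := by
  have hle := (Finset.mem_Icc.1 (letterIndex_mem (a := a) hm h)).2
  have hmem := Finset.mem_Icc.1 (letterIndex_mem (a := a) hm (h.mulLetter (a := a) hm))
  rcases lt_or_ge 1 (letterIndex m a s) with hi | hi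
  · obtain ⟨rs, l, heq⟩ := mulLetter_eq_runs_of_neg ha hi
    simpa [heq, letterIndex, ha] using hle
  · exact hi.trans hmem.1

theorem length_mulLetter_mulLetter (hm : 2 ≤ m) (h : IsValid m s)
    (hup : length m (mulLetter m a s) = length m s + 1) :
    length m (mulLetter m a (mulLetter m a s)) = length m (mulLetter m a s) + 1 := by
  have hc : 0 ≤ letterSign a * coord s (letterIndex m a s) := by
    by_contra! hneg
    have := length_mulLetter_of_neg hm h hneg
    omega
  refine length_mulLetter_of_nonneg hm (h.mulLetter hm) ?_
  have hnew := coord_mulLetter (a := a) h (letterIndex_mem (a := a) hm h)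
  rw [if_pos rfl] at hnew
  cases ha : a.2 <;> simp only [letterSign, ha, Bool.false_eq_true, if_true, if_false] at hc hnew ⊢
  · have := coord_antitone (mulLetter m a s) (le_letterIndex_mulLetter hm h ha)
    omega
  · have := coord_antitone (mulLetter m a s) (letterIndex_mulLetter_le hm h ha)
    omega

/-- At most the first `P` coordinates are positive and at most the last `N` are negative. -/
structure HasSpread (m P N : ℕ) (s : NormalForm) : Prop where
  isValid : IsValid m s
  nonpos : ∀ t ∈ Finset.Icc 1 m, P < t → coord s t ≤ 0
  nonneg : ∀ t ∈ Finset.Icc 1 m, t + N ≤ m → 0 ≤ coord s t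

/-- The properties shared by the normal forms of all words with `k` syllables that begin with the
letter `a`, as long as `k < m`: the positive syllables have only used the first `P` coordinates and
the negative ones only the last `N`, where `P + N = k`. -/
def SyllableBound (m k : ℕ) (a : Bool × Bool) (s : NormalForm) : Prop :=
  ∃ P N, P + N = k ∧ HasSpread m P N s ∧
    ∃ r rs l, s = runs (if a.2 then a.1 else !a.1) r rs l ∧ if a.2 then r ≤ P else m ≤ r + N

theorem HasSpread.syllableBound_mulLetter (hm : 2 ≤ m) (h : HasSpread m P N s) (hP : P ≤ P')
    (hN : N ≤ N') (hlt : P' + N' < m)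
    (hi : if a.2 then letterIndex m a s ≤ P' else m < letterIndex m a s + N') :
    SyllableBound m (P' + N') a (mulLetter m a s) := by
  have hcoord {t} (ht : t ∈ Finset.Icc 1 m) := coord_mulLetter (a := a) h.isValid ht
  refine ⟨P', N', rfl, ⟨h.isValid.mulLetter hm, fun t ht hPt => ?_, fun t ht htN => ?_⟩, ?_⟩
  · have := h.nonpos t ht (by omega)
    rw [hcoord ht, letterSign]
    split_ifs at hi ⊢ <;> omega
  · have := h.nonneg t ht (by omega)
    rw [hcoord ht, letterSign]
    split_ifs at hi ⊢ <;> omega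
  · split_ifs at hi ⊢ with ha
    · obtain ⟨rs, l, heq⟩ := mulLetter_eq_runs_of_pos ha (hi.trans_lt (by omega))
      exact ⟨_, rs, l, heq, hi⟩
    · obtain ⟨rs, l, heq⟩ := mulLetter_eq_runs_of_neg (Bool.eq_false_of_not_eq_true ha)
        (by omega : 1 < letterIndex m a s)
      exact ⟨_, rs, l, heq, by omega⟩

theorem syllableBound_mulLetter_delta_zero (hm : 2 ≤ m) (a : Bool × Bool) :
    SyllableBound m 1 a (mulLetter m a (delta 0)) := by
  have h : HasSpread m 0 0 (delta 0) := ⟨trivial, fun _ _ _ => le_rfl, fun _ _ _ => le_rfl⟩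
  cases ha : a.2
  · exact h.syllableBound_mulLetter (P' := 0) (N' := 1) hm le_rfl zero_le_one (by omega)
      (by simp [letterIndex, ha])
  · exact h.syllableBound_mulLetter (P' := 1) (N' := 0) hm zero_le_one le_rfl (by omega)
      (by simp [letterIndex, ha])

theorem SyllableBound.mulLetter_self (hm : 2 ≤ m) (hk : k < m) (h : SyllableBound m k a s) :
    SyllableBound m k a (mulLetter m a s) := by
  obtain ⟨P, N, rfl, hs, r, rs, l, rfl, hr⟩ := h
  have hvalid := (isValid_runs.1 hs.isValid).1
  refine hs.syllableBound_mulLetter hm le_rfl le_rfl hk ?_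
  split_ifs at hr ⊢ with ha <;> simp [letterIndex, ha] <;> omega

theorem letterIndex_le_or_le_of_ne (hab : b.1 ≠ a.1)
    (h : ∃ r rs l, s = runs (if a.2 then a.1 else !a.1) r rs l ∧
      if a.2 then r ≤ P else m ≤ r + N) :
    if b.2 then letterIndex m b s ≤ P + 1 else m ≤ letterIndex m b s + N := by
  obtain ⟨r, rs, l, rfl, hr⟩ := h
  split_ifs at hr ⊢ with hb ha ha <;> simp [letterIndex, Bool.eq_not_of_ne hab.symm, *]

theorem SyllableBound.mulLetter_of_ne (hm : 2 ≤ m) (hk : k + 1 < m) (hab : b.1 ≠ a.1)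
    (h : SyllableBound m k a s) : SyllableBound m (k + 1) b (mulLetter m b s) := by
  obtain ⟨P, N, rfl, hs, hhead⟩ := h
  have hi := letterIndex_le_or_le_of_ne hab hhead
  cases hb : b.2 <;> simp only [hb, Bool.false_eq_true, if_true, if_false] at hi
  · rw [add_assoc] at hk ⊢
    exact hs.syllableBound_mulLetter hm le_rfl N.le_succ hk
      (by rw [if_neg (by simp [hb])]; omega)
  · rw [add_right_comm] at hk ⊢
    exact hs.syllableBound_mulLetter hm P.le_succ le_rfl hk (by rwa [if_pos hb])

theorem SyllableBound.length_mulLetter_of_ne (hm : 2 ≤ m) (hk : k < m) (hab : b.1 ≠ a.1)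
    (h : SyllableBound m k a s) : length m (mulLetter m b s) = length m s + 1 := by
  obtain ⟨P, N, rfl, hs, hhead⟩ := h
  have hi := letterIndex_le_or_le_of_ne hab hhead
  have hmem := letterIndex_mem (a := b) hm hs.isValid
  refine length_mulLetter_of_nonneg hm hs.isValid ?_
  rw [letterSign]
  split_ifs at hi ⊢
  · have := hs.nonneg _ hmem (by omega)
    omega
  · have := hs.nonpos _ hmem (by omega)
    omega

end Syllables

end NormalForm

section AlternatingProducts

theorem iterate_not_iterate_not (k : ℕ) (z : Bool) : not^[k] (not^[k] z) = z :=
  (Function.iterate_add_apply not k k z).symm.trans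
    (congrFun (Bool.involutive_not.iterate_even (Even.add_self k)) z)

theorem iterate_not_not (k : ℕ) (z : Bool) : not^[k] (!z) = !not^[k] z :=
  (Function.iterate_succ_apply not k z).symm.trans (Function.iterate_succ_apply' not k z)

theorem altProd_succ_right {H : Type*} [Monoid H] (u : Bool → H) (k : ℕ) (z : Bool) :
    altProd (k + 1) (u z) (u (!z)) = altProd k (u z) (u (!z)) * u (not^[k] z) := by
  induction k generalizing z with
  | zero => simp [altProd]
  | succ k ih =>
    have := ih (!z)
    rw [Bool.not_not] at this
    rw [altProd, this, altProd, mul_assoc, Function.iterate_succ_apply]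

end AlternatingProducts

namespace NormalForm

section BraidRelation

variable {m : ℕ}

/-- Left multiplication by the alternating positive word of length `j` whose last letter, which acts
first, is `x z`. -/
def mulAlt (m : ℕ) : ℕ → Bool → NormalForm → NormalForm
  | 0, _, s => s
  | j + 1, z, s => mulPos m (not^[j] z) (mulAlt m j z s)

theorem mulAlt_add (i j : ℕ) (z : Bool) (s : NormalForm) :
    mulAlt m (i + j) z s = mulAlt m j (not^[i] z) (mulAlt m i z s) := by
  induction j with
  | zero => rfl
  | succ j ih =>
    rw [← add_assoc, mulAlt, ih, mulAlt, ← Function.iterate_add_apply, add_comm j]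

theorem mulAlt_runs_of_lt {f : Bool} {r j : ℕ} {rs : List ℕ} {k : ℤ} (h : r + j < m) :
    mulAlt m j (!f) (runs f r rs k) = runs (not^[j] f) (r + j) rs k := by
  induction j with
  | zero => rfl
  | succ j ih =>
    rw [mulAlt, ih (by omega), mulPos, iterate_not_not, if_neg (Bool.not_ne_self _).symm,
      if_pos (by omega), Function.iterate_succ_apply', add_assoc]

theorem mulAlt_runs_of_eq {f : Bool} {r j : ℕ} {rs : List ℕ} {k : ℤ} (h : r + (j + 1) = m) :
    mulAlt m (j + 1) (!f) (runs f r rs k) = ofRuns (not^[j] f) rs (k + 1) := by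
  rw [mulAlt, mulAlt_runs_of_lt (by omega), mulPos, iterate_not_not,
    if_neg (Bool.not_ne_self _).symm, if_neg (by omega)]

theorem mulAlt_succ_ofRuns (j : ℕ) (z : Bool) (rs : List ℕ) (k : ℤ) :
    mulAlt m (j + 1) z (ofRuns z rs k) = mulAlt m j (!z) (runs z 1 rs k) := by
  rw [add_comm, mulAlt_add]
  cases rs <;> simp [mulAlt, ofRuns, mulPos]

/-- Left multiplication of a normal form by `Δ`. -/
def mulDelta (m : ℕ) : NormalForm → NormalForm
  | delta k => delta (k + 1)
  | runs f r rs k => runs (not^[m] f) r rs (k + 1)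

theorem mulAlt_eq_mulDelta {s : NormalForm} (hm : 2 ≤ m) (h : IsValid m s) (z : Bool) :
    mulAlt m m z s = mulDelta m s := by
  obtain ⟨n, rfl⟩ : ∃ n, m = n + 2 := ⟨m - 2, by omega⟩
  have new_run (rs : List ℕ) (k : ℤ) :
      mulAlt (n + 2) (n + 2) z (ofRuns z rs k) = ofRuns (not^[n + 2] z) rs (k + 1) := by
    rw [mulAlt_succ_ofRuns, mulAlt_runs_of_eq (by omega), Function.iterate_succ_apply,
      Function.iterate_succ_apply, Bool.not_not]
  cases s with
  | delta k => exact new_run [] k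
  | runs f r rs k =>
    by_cases hf : f = z
    · exact hf ▸ new_run (r :: rs) k
    obtain rfl : z = !f := Bool.eq_not_of_ne (Ne.symm hf)
    obtain ⟨i, rfl⟩ : ∃ i, r = i + 1 := ⟨r - 1, by have := (isValid_runs.1 h).1; omega⟩
    obtain ⟨j, rfl⟩ : ∃ j, n = i + j := ⟨n - i, by have := (isValid_runs.1 h).1; omega⟩
    rw [show mulAlt (i + j + 2) (i + j + 2) = mulAlt (i + j + 2) (j + 1 + (i + 1)) by
        congr 1; omega, mulAlt_add, mulAlt_runs_of_eq (by omega), Function.iterate_succ_apply,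
      Bool.not_not, mulAlt_succ_ofRuns, mulAlt_runs_of_lt (by omega),
      ← Function.iterate_add_apply, add_comm 1 i]
    simp [mulDelta]

theorem coe_altProd_mulPosPerm (hm : 2 ≤ m) (j : ℕ) (z : Bool) (s : {s // IsValid m s}) :
    (altProd j (mulPosPerm m hm z) (mulPosPerm m hm (!z)) s).1 = mulAlt m j (not^[j] (!z)) s.1 := by
  induction j generalizing z with
  | zero => rfl
  | succ j ih =>
    have := ih (!z)
    rw [Bool.not_not] at this
    rw [altProd, mulAlt, Function.iterate_succ_apply, Bool.not_not, iterate_not_iterate_not, ← this]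
    rfl

theorem altProd_mulPosPerm (hm : 2 ≤ m) :
    altProd m (mulPosPerm m hm true) (mulPosPerm m hm false) =
      altProd m (mulPosPerm m hm false) (mulPosPerm m hm true) := by
  ext s : 2
  exact (coe_altProd_mulPosPerm hm m true s).trans <| (mulAlt_eq_mulDelta hm s.2 _).trans <|
    (mulAlt_eq_mulDelta hm s.2 _).symm.trans (coe_altProd_mulPosPerm hm m false s).symm

end BraidRelation

section Evaluation

variable {H : Type*} [Group H] {u : Bool → H} {m : ℕ}

/-- The product of alternating words of the given lengths in which the first one begins with `u f`
and each of the others with the last letter of its predecessor. -/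
def evalRuns (u : Bool → H) : Bool → List ℕ → H
  | _, [] => 1
  | f, r :: rs => altProd r (u f) (u (!f)) * evalRuns u (not^[r + 1] f) rs

/-- The value of a normal form in a group with elements `u true` and `u false`. -/
def eval (u : Bool → H) (m : ℕ) : NormalForm → H
  | delta k => altProd m (u true) (u false) ^ k
  | runs f r rs k => evalRuns u f (r :: rs) * altProd m (u true) (u false) ^ k

theorem eval_ofRuns (f : Bool) (rs : List ℕ) (k : ℤ) :
    eval u m (ofRuns f rs k) = evalRuns u f rs * altProd m (u true) (u false) ^ k := by
  cases rs <;> simp [ofRuns, eval, evalRuns]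

theorem altProd_not_eq (hu : altProd m (u true) (u false) = altProd m (u false) (u true))
    (z : Bool) : altProd m (u z) (u (!z)) = altProd m (u true) (u false) := by
  cases z
  exacts [hu.symm, rfl]

theorem altProd_mul_letter (hu : altProd m (u true) (u false) = altProd m (u false) (u true))
    (z : Bool) :
    altProd m (u true) (u false) * u z = u (not^[m] z) * altProd m (u true) (u false) := by
  have h := altProd_succ_right u m (not^[m] z)
  rw [iterate_not_iterate_not, altProd_not_eq hu] at h
  rw [← h, altProd, ← altProd_not_eq hu (!not^[m] z), Bool.not_not]

theorem altProd_mul_altProd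
    (hu : altProd m (u true) (u false) = altProd m (u false) (u true))
    (r : ℕ) (f : Bool) :
    altProd m (u true) (u false) * altProd r (u f) (u (!f)) =
      altProd r (u (not^[m] f)) (u (!not^[m] f)) * altProd m (u true) (u false) := by
  induction r generalizing f with
  | zero => simp [altProd]
  | succ r ih =>
    have := ih (!f)
    rw [Bool.not_not, iterate_not_not, Bool.not_not] at this
    rw [altProd, ← mul_assoc, altProd_mul_letter hu, mul_assoc, this, ← mul_assoc, altProd]

theorem altProd_mul_evalRuns
    (hu : altProd m (u true) (u false) = altProd m (u false) (u true))
    (f : Bool) (rs : List ℕ) :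
    altProd m (u true) (u false) * evalRuns u f rs =
      evalRuns u (not^[m] f) rs * altProd m (u true) (u false) := by
  induction rs generalizing f with
  | nil => simp [evalRuns]
  | cons r rs ih =>
    rw [evalRuns, ← mul_assoc, altProd_mul_altProd hu, mul_assoc, ih, ← mul_assoc, evalRuns,
      ← Function.iterate_add_apply, ← Function.iterate_add_apply, add_comm]

theorem eval_mulPos (hu : altProd m (u true) (u false) = altProd m (u false) (u true))
    (hm : 2 ≤ m) {s : NormalForm} (h : IsValid m s) (z : Bool) :
    eval u m (mulPos m z s) = u z * eval u m s := by
  cases s with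
  | delta k => simp [mulPos, eval, evalRuns, altProd]
  | runs f r rs k =>
    have hr := (isValid_runs.1 h).1
    by_cases hf : f = z
    · simp [mulPos, hf, eval, evalRuns, altProd, mul_assoc]
    obtain rfl : z = !f := Bool.eq_not_of_ne (Ne.symm hf)
    have hcons : u (!f) * altProd r (u f) (u (!f)) = altProd (r + 1) (u (!f)) (u (!!f)) := by
      rw [Bool.not_not, altProd]
    rw [mulPos, if_neg hf]
    split_ifs with hlt
    · simp only [eval, evalRuns, ← mul_assoc, hcons]
      rw [Function.iterate_succ_apply, Bool.not_not]
    · obtain rfl : r + 1 = m := by omega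
      rw [eval_ofRuns, eval, evalRuns, ← mul_assoc, ← mul_assoc, hcons, altProd_not_eq hu,
        altProd_mul_evalRuns hu, iterate_not_iterate_not, mul_assoc, ← zpow_one_add, add_comm 1 k]

end Evaluation

end NormalForm

/-! ### Artin groups of rank two -/

section Dihedral

/-- The defining relator of the Artin group of rank two with label `m`, if `m` is finite. -/
def dihedralRels (m : ℕ∞) : Set (FreeGroup Bool) :=
  {r | ∃ k : ℕ, m = k ∧ r = altProd k (.of true) (.of false) * (altProd k (.of false) (.of true))⁻¹}

/-- The Artin group of rank two with label `m`, with generators indexed by `Bool`. -/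
abbrev DihedralArtin (m : ℕ∞) : Type := PresentedGroup (dihedralRels m)

/-- The standard generators of the Artin group of rank two. -/
def dihedralGen (m : ℕ∞) (z : Bool) : DihedralArtin m := PresentedGroup.of z

theorem altProd_dihedralGen {m : ℕ∞} {k : ℕ} (hk : m = k) :
    altProd k (dihedralGen m true) (dihedralGen m false) =
      altProd k (dihedralGen m false) (dihedralGen m true) := by
  have h := PresentedGroup.one_of_mem (rels := dihedralRels m) ⟨k, hk, rfl⟩
  rwa [map_mul, map_inv, map_altProd, map_altProd, mul_inv_eq_one] at h

variable {m : ℕ∞} {H : Type*} [Group H] {u : Bool → H}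

/-- The homomorphism from the Artin group of rank two given by two elements that satisfy the braid
relation. -/
def dihedralLift
    (hu : ∀ k : ℕ, m = k → altProd k (u true) (u false) = altProd k (u false) (u true)) :
    DihedralArtin m →* H :=
  PresentedGroup.toGroup (f := u) <| by
    rintro r ⟨k, hk, rfl⟩
    simp [map_altProd, hu k hk]

theorem dihedralLift_wordEval
    (hu : ∀ k : ℕ, m = k → altProd k (u true) (u false) = altProd k (u false) (u true))
    (w : List (Bool × Bool)) :
    dihedralLift hu (wordEval (dihedralGen m) w) = wordEval u w := by
  rw [map_wordEval]
  exact wordEval_congr fun a _ => PresentedGroup.toGroup.of _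

theorem exists_wordEval_dihedralGen_eq (g : DihedralArtin m) :
    ∃ w, wordEval (dihedralGen m) w = g := by
  obtain ⟨w, -, hw⟩ := exists_wordEval_eq_of_mem_closure (u := dihedralGen m) (s := Set.univ)
    (g := g) (by rw [Set.image_univ]; exact PresentedGroup.closure_range_of _ ▸ Subgroup.mem_top g)
  exact ⟨w, hw⟩

end Dihedral

section FiniteDihedral

variable {m : ℕ} (hm : 2 ≤ m)

/-- The Garside normal form of an element, as the image of the trivial normal form. -/
def normalForm (g : DihedralArtin m) : {s // NormalForm.IsValid m s} :=
  dihedralLift (u := NormalForm.mulPosPerm m hm)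
    (fun k hk => by obtain rfl : m = k := by exact_mod_cast hk
                    exact NormalForm.altProd_mulPosPerm hm) g ⟨.delta 0, trivial⟩

theorem normalForm_one : (normalForm hm 1).1 = .delta 0 := by simp [normalForm]

theorem normalForm_letter_mul (a : Bool × Bool) (g : DihedralArtin m) :
    (normalForm hm (letterEval (dihedralGen m) a * g)).1 = NormalForm.mulLetter m a
      (normalForm hm g).1 := by
  rw [← NormalForm.letterEval_mulPosPerm hm, normalForm, map_mul]
  have h := dihedralLift_wordEval (m := m) (u := NormalForm.mulPosPerm m hm)
    (fun k hk => by obtain rfl : m = k := by exact_mod_cast hk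
                    exact NormalForm.altProd_mulPosPerm hm) [a]
  simp only [wordEval_cons, wordEval_nil, mul_one] at h
  rw [h]
  rfl

theorem eval_normalForm (g : DihedralArtin m) :
    (normalForm hm g).1.eval (dihedralGen m) m = g := by
  obtain ⟨w, rfl⟩ := exists_wordEval_dihedralGen_eq g
  induction w with
  | nil => simp [normalForm_one, NormalForm.eval]
  | cons a w ih =>
    obtain ⟨z, t⟩ := a
    have hmul (s) (hs : NormalForm.IsValid m s) := NormalForm.eval_mulPos
      (altProd_dihedralGen (m := m) rfl) hm hs z
    rw [wordEval_cons, normalForm_letter_mul, NormalForm.mulLetter, letterEval]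
    cases t
    · have := hmul _ ((normalForm hm (wordEval (dihedralGen m) w)).2.mulNeg (z := z) hm)
      rw [NormalForm.mulPos_mulNeg hm (normalForm hm _).2, ih] at this
      simpa [eq_inv_mul_iff_mul_eq] using this.symm
    · simp [hmul _ (normalForm hm _).2, ih]

theorem letterLength_eq_length_normalForm (g : DihedralArtin m) :
    letterLength (dihedralGen m) g = (normalForm hm g).1.length m := by
  refine letterLength_eq_of_descent (L := fun g => (normalForm hm g).1.length m)
    ?_ (fun a g => ?_) (fun g hg => ?_) g
  · simp [normalForm_one, NormalForm.length, NormalForm.coord]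
  · have := NormalForm.length_mulLetter_or (a := a) hm (normalForm hm g).2
    rw [normalForm_letter_mul]
    omega
  · simp only [normalForm_letter_mul]
    refine NormalForm.exists_length_mulLetter_lt hm (normalForm hm g).2 fun h => hg ?_
    rw [← eval_normalForm hm g, h]
    simp [NormalForm.eval]

end FiniteDihedral

section FreeDihedral

variable {H : Type*} [Group H]

/-- The freely reduced word of an element of the Artin group of rank two with infinite label. -/
def reducedWord (g : DihedralArtin ⊤) : List (Bool × Bool) :=
  (dihedralLift (u := FreeGroup.of) (fun _ hk => absurd hk.symm (ENat.natCast_ne_top _)) g).toWord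

theorem lift_mk_eq_wordEval (u : Bool → H) (w : List (Bool × Bool)) :
    FreeGroup.lift u (FreeGroup.mk w) = wordEval u w := by
  simp only [FreeGroup.lift_mk, wordEval, Bool.cond_eq_ite]
  rfl

theorem wordEval_reducedWord (g : DihedralArtin ⊤) :
    wordEval (dihedralGen ⊤) (reducedWord g) = g := by
  obtain ⟨w, rfl⟩ := exists_wordEval_dihedralGen_eq g
  rw [← lift_mk_eq_wordEval, reducedWord, FreeGroup.mk_toWord, dihedralLift_wordEval, map_wordEval]
  exact wordEval_congr fun a _ => FreeGroup.lift_apply_of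

theorem reducedWord_letter_mul (a : Bool × Bool) (g : DihedralArtin ⊤) :
    reducedWord (letterEval (dihedralGen ⊤) a * g) =
      if (reducedWord g).head? = some (letterInv a) then (reducedWord g).tail
      else a :: reducedWord g := by
  have hlift (v : List (Bool × Bool)) : dihedralLift (u := FreeGroup.of)
      (fun _ hk => absurd hk.symm (ENat.natCast_ne_top _)) (wordEval (dihedralGen ⊤) v) =
        FreeGroup.mk v := by
    rw [dihedralLift_wordEval, ← lift_mk_eq_wordEval, FreeGroup.lift_of_apply]
  have hcons : letterEval (dihedralGen ⊤) a * g =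
      wordEval (dihedralGen ⊤) (a :: reducedWord g) := by
    rw [wordEval_cons, wordEval_reducedWord]
  have hreduce : FreeGroup.reduce (reducedWord g) = reducedWord g := FreeGroup.reduce_toWord _
  rw [hcons, reducedWord, hlift, FreeGroup.toWord_mk, FreeGroup.reduce.cons, hreduce]
  cases reducedWord g with
  | nil => rfl
  | cons b w =>
    obtain ⟨i, t⟩ := a
    obtain ⟨j, t'⟩ := b
    cases t <;> cases t' <;> simp [letterInv, eq_comm]

theorem letterLength_eq_length_reducedWord (g : DihedralArtin ⊤) :
    letterLength (dihedralGen ⊤) g = (reducedWord g).length := by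
  refine letterLength_eq_of_descent (L := fun g => (reducedWord g).length)
    ?_ (fun a g => ?_) (fun g hg => ?_) g
  · simp [reducedWord]
  · rw [reducedWord_letter_mul]
    split_ifs <;> simp; omega
  · obtain ⟨a, w, hw⟩ := List.exists_cons_of_ne_nil (l := reducedWord g)
      fun h => hg (by rw [← wordEval_reducedWord g, h, wordEval_nil])
    exact ⟨letterInv a, by rw [reducedWord_letter_mul]; simp [hw]⟩

end FreeDihedral

/-- `HasSyllables k a w` says that the word `w` starts with the letter `a` and consists of `k`
syllables, i.e. powers of letters such that adjacent ones involve different generators. -/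
inductive HasSyllables {ι : Type*} : ℕ → ι × Bool → List (ι × Bool) → Prop
  | single (a : ι × Bool) : HasSyllables 1 a [a]
  | extend {k : ℕ} {a : ι × Bool} {w : List (ι × Bool)} (h : HasSyllables k a w) :
      HasSyllables k a (a :: w)
  | change {k : ℕ} {a b : ι × Bool} {w : List (ι × Bool)} (hab : b.1 ≠ a.1)
      (h : HasSyllables k a w) : HasSyllables (k + 1) b (b :: w)

section DihedralLength

variable {m : ℕ∞} {a b : Bool × Bool} {g : DihedralArtin m}

theorem letterLength_letter_mul_or (hm : 2 ≤ m) (a : Bool × Bool) (g : DihedralArtin m) :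
    letterLength (dihedralGen m) (letterEval (dihedralGen m) a * g) =
        letterLength (dihedralGen m) g + 1 ∨
      letterLength (dihedralGen m) (letterEval (dihedralGen m) a * g) + 1 =
        letterLength (dihedralGen m) g := by
  cases m with
  | top =>
    simp only [letterLength_eq_length_reducedWord, reducedWord_letter_mul]
    split_ifs with h
    · cases hw : reducedWord g <;> simp_all
    · simp
  | coe m =>
    have hm : 2 ≤ m := by exact_mod_cast hm
    simp only [letterLength_eq_length_normalForm hm, normalForm_letter_mul]
    exact NormalForm.length_mulLetter_or hm (normalForm hm g).2

theorem letterLength_letter_mul_letter_mul (hm : 2 ≤ m)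
    (h : letterLength (dihedralGen m) (letterEval (dihedralGen m) a * g) =
      letterLength (dihedralGen m) g + 1) :
    letterLength (dihedralGen m)
        (letterEval (dihedralGen m) a * (letterEval (dihedralGen m) a * g)) =
      letterLength (dihedralGen m) (letterEval (dihedralGen m) a * g) + 1 := by
  cases m with
  | top =>
    simp only [letterLength_eq_length_reducedWord, reducedWord_letter_mul] at h ⊢
    split_ifs at h ⊢ <;> simp_all [(letterInv_ne _).symm]
  | coe m =>
    have hm : 2 ≤ m := by exact_mod_cast hm
    simp only [letterLength_eq_length_normalForm hm, normalForm_letter_mul] at h ⊢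
    exact NormalForm.length_mulLetter_mulLetter hm (normalForm hm g).2 h

theorem HasSyllables.syllableBound {m k : ℕ} (hm : 2 ≤ m) {w : List (Bool × Bool)}
    (h : HasSyllables k a w) (hk : k < m) :
    NormalForm.SyllableBound m k a (normalForm hm (wordEval (dihedralGen m) w)).1 := by
  induction h with
  | single a =>
    rw [wordEval_cons, normalForm_letter_mul, wordEval_nil, normalForm_one]
    exact NormalForm.syllableBound_mulLetter_delta_zero hm a
  | extend _ ih =>
    rw [wordEval_cons, normalForm_letter_mul]
    exact (ih hk).mulLetter_self hm hk
  | change hab _ ih =>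
    rw [wordEval_cons, normalForm_letter_mul]
    exact (ih (by omega)).mulLetter_of_ne hm hk hab

theorem HasSyllables.head?_reducedWord {k : ℕ} {w : List (Bool × Bool)} (h : HasSyllables k a w) :
    (reducedWord (wordEval (dihedralGen ⊤) w)).head? = some a := by
  induction h with
  | single a =>
    rw [wordEval_cons, reducedWord_letter_mul]
    simp [reducedWord]
  | extend _ ih => simp [reducedWord_letter_mul, ih, (letterInv_ne _).symm]
  | change hab _ ih =>
    simp [reducedWord_letter_mul, ih, (ne_letterInv_of_fst_ne hab.symm)]

theorem HasSyllables.letterLength_letter_mul {k : ℕ} {w : List (Bool × Bool)}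
    (hm : 2 ≤ m) (h : HasSyllables k a w) (hk : k < m) (hab : b.1 ≠ a.1) :
    letterLength (dihedralGen m) (letterEval (dihedralGen m) b * wordEval (dihedralGen m) w) =
      letterLength (dihedralGen m) (wordEval (dihedralGen m) w) + 1 := by
  cases m with
  | top => simp [letterLength_eq_length_reducedWord, reducedWord_letter_mul, h.head?_reducedWord,
      ne_letterInv_of_fst_ne hab.symm]
  | coe m =>
    have hm : 2 ≤ m := by exact_mod_cast hm
    have hk : k < m := by exact_mod_cast hk
    simp only [letterLength_eq_length_normalForm hm, normalForm_letter_mul]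
    exact (h.syllableBound hm hk).length_mulLetter_of_ne hm hk hab

theorem fst_eq_of_letterLength_letter_mul_lt {g : DihedralArtin ⊤}
    (ha : letterLength (dihedralGen ⊤) (letterEval (dihedralGen ⊤) a * g) <
      letterLength (dihedralGen ⊤) g)
    (hb : letterLength (dihedralGen ⊤) (letterEval (dihedralGen ⊤) b * g) <
      letterLength (dihedralGen ⊤) g) : a.1 = b.1 := by
  have key {c} (hc : letterLength (dihedralGen ⊤) (letterEval (dihedralGen ⊤) c * g) <
      letterLength (dihedralGen ⊤) g) : (reducedWord g).head? = some (letterInv c) := by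
    by_contra h
    simp [letterLength_eq_length_reducedWord, reducedWord_letter_mul, h] at hc
  simpa using congrArg (Option.map Prod.fst) ((key ha).symm.trans (key hb))

end DihedralLength

/-! ### Words in two of the generators -/

theorem HasSyllables.map {ι κ : Type*} {f : ι → κ} {k : ℕ} {a : ι × Bool} {w : List (ι × Bool)}
    (h : HasSyllables k a w) (hf : Set.InjOn f {i | ∃ b ∈ w, b.1 = i}) :
    HasSyllables k (f a.1, a.2) (w.map (Prod.map f id)) := by
  induction h with
  | single a => exact .single _
  | extend _ ih => exact (ih (hf.mono (by grind))).extend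
  | @change k a b w hab h ih =>
    have ha : a ∈ w := by cases h <;> simp
    exact (ih (hf.mono (by grind))).change fun heq =>
      hab (hf ⟨b, List.mem_cons_self, rfl⟩ ⟨a, List.mem_cons_of_mem _ ha, rfl⟩ heq)

section PairWords

variable {ι : Type*} {i j : ι} {a b : ι × Bool} {v w : List (ι × Bool)}

/-- The words in the letters `x_i^{±1}`, `x_j^{±1}`. -/
def InPair (i j : ι) (w : List (ι × Bool)) : Prop := ∀ a ∈ w, a.1 = i ∨ a.1 = j

@[simp]
theorem inPair_nil : InPair i j [] := by simp [InPair]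

@[simp]
theorem inPair_cons : InPair i j (a :: w) ↔ (a.1 = i ∨ a.1 = j) ∧ InPair i j w :=
  List.forall_mem_cons

@[simp]
theorem inPair_append : InPair i j (v ++ w) ↔ InPair i j v ∧ InPair i j w :=
  List.forall_mem_append

theorem inPair_replicate (ha : a.1 = i ∨ a.1 = j) (r : ℕ) : InPair i j (List.replicate r a) :=
  fun _ hb => List.eq_of_mem_replicate hb ▸ ha

theorem InPair.symm (h : InPair i j w) : InPair j i w := fun a ha => (h a ha).symm

theorem eq_and_eq_or_of_fst_ne (ha : a.1 = i ∨ a.1 = j) (hb : b.1 = i ∨ b.1 = j)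
    (hab : a.1 ≠ b.1) : i = a.1 ∧ j = b.1 ∨ i = b.1 ∧ j = a.1 := by
  grind

/-- The positive word `x_i x_j x_i ⋯` with `k` letters. -/
def altWord : ℕ → ι → ι → List (ι × Bool)
  | 0, _, _ => []
  | k + 1, i, j => (i, true) :: altWord k j i

theorem wordEval_altWord {H : Type*} [Group H] (u : ι → H) (k : ℕ) (i j : ι) :
    wordEval u (altWord k i j) = altProd k (u i) (u j) := by
  induction k generalizing i j with
  | zero => rfl
  | succ k ih => simp [altWord, altProd, ih, letterEval]

theorem inPair_altWord (k : ℕ) (i j : ι) : InPair i j (altWord k i j) := by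
  induction k generalizing i j with
  | zero => simp [altWord]
  | succ k ih => simpa [altWord] using (ih j i).symm

end PairWords

section PairEvaluation

variable {ι : Type*} [LinearOrder ι] {M : ι → ι → ℕ∞} {i j : ι} {a b : ι × Bool}
  {v w : List (ι × Bool)}

/-- Artin groups of large type: the Coxeter matrix is symmetric with off-diagonal entries at
least `3`. -/
structure IsLargeType (M : ι → ι → ℕ∞) : Prop where
  symm : ∀ i j, M i j = M j i
  three_le : ∀ i j, i ≠ j → 3 ≤ M i j

theorem IsLargeType.apply_min_max (hM : IsLargeType M) (i j : ι) :
    M (min i j) (max i j) = M i j := by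
  rcases le_total i j with h | h
  · rw [min_eq_left h, max_eq_right h]
  · rw [min_eq_right h, max_eq_left h, hM.symm]

theorem IsLargeType.two_le (hM : IsLargeType M) (hij : i ≠ j) : 2 ≤ M (min i j) (max i j) := by
  rw [hM.apply_min_max]
  exact le_trans (by norm_num) (hM.three_le i j hij)

/-- The element of the rank two Artin group of the pair `{i, j}` represented by a word in `x_i` and
`x_j`. Ordering the pair makes this symmetric in `i` and `j`. -/
def pairEval (M : ι → ι → ℕ∞) (i j : ι) (w : List (ι × Bool)) :
    DihedralArtin (M (min i j) (max i j)) :=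
  wordEval (dihedralGen _) (w.map (Prod.map (fun k => decide (k = min i j)) id))

/-- The word length in the rank two Artin group of the pair `{i, j}`. -/
noncomputable def pairLength (M : ι → ι → ℕ∞) (i j : ι) (w : List (ι × Bool)) : ℕ :=
  letterLength (dihedralGen _) (pairEval M i j w)

theorem pairEval_eq_comm :
    pairEval M i j v = pairEval M i j w ↔ pairEval M j i v = pairEval M j i w := by
  unfold pairEval
  rw [min_comm, max_comm]

theorem pairLength_comm : pairLength M i j w = pairLength M j i w := by
  unfold pairLength pairEval
  rw [min_comm, max_comm]

theorem pairEval_cons (a : ι × Bool) (w : List (ι × Bool)) :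
    pairEval M i j (a :: w) =
      letterEval (dihedralGen _) (decide (a.1 = min i j), a.2) * pairEval M i j w := rfl

theorem pairEval_append (v w : List (ι × Bool)) :
    pairEval M i j (v ++ w) = pairEval M i j v * pairEval M i j w := by
  simp [pairEval]

@[simp]
theorem pairEval_cons_inj : pairEval M i j (a :: v) = pairEval M i j (a :: w) ↔
    pairEval M i j v = pairEval M i j w := by
  rw [pairEval_cons, pairEval_cons, mul_right_inj]

theorem pairEval_letterInv_cons_eq_iff :
    pairEval M i j (letterInv a :: v) = pairEval M i j w ↔
      pairEval M i j v = pairEval M i j (a :: w) := by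
  have h : letterEval (dihedralGen (M (min i j) (max i j))) (decide (a.1 = min i j), !a.2) =
      (letterEval (dihedralGen _) (decide (a.1 = min i j), a.2))⁻¹ := letterEval_letterInv _ (_, _)
  rw [pairEval_cons, pairEval_cons, letterInv_fst, letterInv, h, inv_mul_eq_iff_eq_mul]

theorem pairLength_congr (h : pairEval M i j v = pairEval M i j w) :
    pairLength M i j v = pairLength M i j w := by
  rw [pairLength, h, pairLength]

theorem pairLength_append_le (v w : List (ι × Bool)) :
    pairLength M i j (v ++ w) ≤ v.length + pairLength M i j w := by
  simpa [pairLength, pairEval] using letterLength_wordEval_append_le (dihedralGen _) (v.map _) _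

theorem pairLength_le (w : List (ι × Bool)) : pairLength M i j w ≤ w.length := by
  simpa [pairLength, pairEval] using letterLength_wordEval_le (dihedralGen _) (w.map _)

theorem decide_eq_min_ne (hij : i ≠ j) : decide (i = min i j) ≠ decide (j = min i j) := by
  rcases lt_or_gt_of_ne hij with h | h
  · simp [min_eq_left h.le, hij.symm]
  · simp [min_eq_right h.le, hij]

theorem decide_eq_min_ne_of_mem (ha : a.1 = i ∨ a.1 = j) (hb : b.1 = i ∨ b.1 = j)
    (hab : a.1 ≠ b.1) : decide (a.1 = min i j) ≠ decide (b.1 = min i j) := by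
  rcases ha with ha | ha <;> rcases hb with hb | hb <;> rw [ha, hb] at hab ⊢
  exacts [absurd rfl hab, decide_eq_min_ne hab, (decide_eq_min_ne hab.symm).symm, absurd rfl hab]

theorem pairLength_cons_or (hM : IsLargeType M) (hij : i ≠ j) (a : ι × Bool)
    (w : List (ι × Bool)) :
    pairLength M i j (a :: w) = pairLength M i j w + 1 ∨
      pairLength M i j (a :: w) + 1 = pairLength M i j w :=
  letterLength_letter_mul_or (hM.two_le hij) _ _

theorem pairLength_cons_cons (hM : IsLargeType M) (hij : i ≠ j)
    (h : pairLength M i j (a :: w) = pairLength M i j w + 1) :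
    pairLength M i j (a :: a :: w) = pairLength M i j (a :: w) + 1 :=
  letterLength_letter_mul_letter_mul (hM.two_le hij) h

theorem HasSyllables.pairLength_cons (hM : IsLargeType M) (hij : i ≠ j) {k : ℕ}
    (h : HasSyllables k a w) (hk : k < M i j) (hw : InPair i j w) (hb : b.1 = i ∨ b.1 = j)
    (hab : b.1 ≠ a.1) : pairLength M i j (b :: w) = pairLength M i j w + 1 := by
  have ha : a ∈ w := by cases h <;> simp
  have hinj : Set.InjOn (fun k => decide (k = min i j)) {k | ∃ b ∈ w, b.1 = k} := by
    rintro _ ⟨c, hc, rfl⟩ _ ⟨d, hd, rfl⟩ heq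
    by_contra hne
    exact decide_eq_min_ne_of_mem (hw c hc) (hw d hd) hne heq
  exact (h.map hinj).letterLength_letter_mul (hM.two_le hij) (by rwa [hM.apply_min_max])
    (decide_eq_min_ne_of_mem hb (hw a ha) hab)

theorem fst_eq_of_pairLength_cons_lt (hM : IsLargeType M) (htop : M i j = ⊤)
    (ha : a.1 = i ∨ a.1 = j) (hb : b.1 = i ∨ b.1 = j)
    (hwa : pairLength M i j (a :: w) < pairLength M i j w)
    (hwb : pairLength M i j (b :: w) < pairLength M i j w) : a.1 = b.1 := by
  rw [← hM.apply_min_max] at htop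
  unfold pairLength at hwa hwb
  simp only [pairEval_cons] at hwa hwb
  generalize pairEval M i j w = g at hwa hwb
  generalize M (min i j) (max i j) = m at htop g
  subst htop
  by_contra hab
  exact decide_eq_min_ne_of_mem ha hb hab (fst_eq_of_letterLength_letter_mul_lt hwa hwb)

theorem pairEval_altWord (hM : IsLargeType M) (hij : i ≠ j) {k : ℕ} (hk : M i j = k) :
    pairEval M i j (altWord k i j) = pairEval M i j (altWord k j i) := by
  have hmap (l : ℕ) (p q : ι) : pairEval M i j (altWord l p q) = altProd l
      (dihedralGen _ (decide (p = min i j))) (dihedralGen _ (decide (q = min i j))) := by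
    induction l generalizing p q with
    | zero => rfl
    | succ l ih => simp [altWord, altProd, pairEval_cons, ih, letterEval]
  have hbraid := altProd_dihedralGen ((hM.apply_min_max i j).trans hk)
  have hne := decide_eq_min_ne hij
  rw [hmap, hmap]
  generalize decide (i = min i j) = x at *
  generalize decide (j = min i j) = y at *
  cases x <;> cases y <;> simp_all

theorem wordEval_eq_of_pairEval_eq {H : Type*} [Group H] {u : ι → H} (hM : IsLargeType M)
    (hu : ∀ k : ℕ, M i j = k → altProd k (u i) (u j) = altProd k (u j) (u i)) (hij : i ≠ j)
    {v w : List (ι × Bool)} (hv : InPair i j v) (hw : InPair i j w)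
    (h : pairEval M i j v = pairEval M i j w) : wordEval u v = wordEval u w := by
  have hne := decide_eq_min_ne hij
  let f : DihedralArtin (M (min i j) (max i j)) →* H :=
    dihedralLift (u := fun z => if z = decide (i = min i j) then u i else u j) fun k hk => by
      rw [hM.apply_min_max] at hk
      have := hu k hk
      generalize decide (i = min i j) = x at *
      cases x <;> simp_all
  have hf {w : List (ι × Bool)} (hw : InPair i j w) : f (pairEval M i j w) = wordEval u w := by
    rw [pairEval, dihedralLift_wordEval, wordEval, List.map_map]
    refine congrArg List.prod (List.map_congr_left fun a ha => ?_)
    rcases hw a ha with h | h <;>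
      simp only [letterEval, Function.comp, Prod.map, h, id, if_true, if_neg hne.symm]
  rw [← hf hv, ← hf hw, h]

end PairEvaluation

/-! ### Rewriting by moves in rank two subgroups -/

section WordEquiv

variable {ι : Type*} [LinearOrder ι] {M : ι → ι → ℕ∞} {i j : ι} {a b : ι × Bool}
  {u v w α β : List (ι × Bool)}

/-- The geodesic words of the rank two Artin group of the pair `{i, j}`. -/
structure PairGeodesic (M : ι → ι → ℕ∞) (i j : ι) (w : List (ι × Bool)) : Prop where
  ne : i ≠ j
  inPair : InPair i j w
  length_eq : pairLength M i j w = w.length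

theorem PairGeodesic.suffix (h : PairGeodesic M i j (v ++ w)) : PairGeodesic M i j w := by
  refine ⟨h.ne, (inPair_append.1 h.inPair).2, le_antisymm (pairLength_le w) ?_⟩
  have := h.length_eq ▸ pairLength_append_le (M := M) (i := i) (j := j) v w
  simpa using this

theorem PairGeodesic.tail (h : PairGeodesic M i j (a :: w)) : PairGeodesic M i j w :=
  h.suffix (v := [a])

theorem PairGeodesic.symm (h : PairGeodesic M i j w) : PairGeodesic M j i w :=
  ⟨h.ne.symm, h.inPair.symm, pairLength_comm.trans h.length_eq⟩

theorem PairGeodesic.of_pairEval_eq (hv : PairGeodesic M i j v) (hw : InPair i j w)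
    (h : pairEval M i j v = pairEval M i j w) (hlen : w.length = v.length) :
    PairGeodesic M i j w :=
  ⟨hv.ne, hw, by rw [← pairLength_congr h, hv.length_eq, hlen]⟩

theorem exists_pairGeodesic (M : ι → ι → ℕ∞) (hij : i ≠ j) (w : List (ι × Bool)) :
    ∃ v, PairGeodesic M i j v ∧ pairEval M i j v = pairEval M i j w := by
  obtain ⟨l, hlen, hl⟩ := exists_length_eq_letterLength (dihedralGen (M (min i j) (max i j)))
    (w.map (Prod.map (fun k => decide (k = min i j)) id))
  let decode (z : Bool) : ι := if z = decide (i = min i j) then i else j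
  have hdecode : (fun k => decide (k = min i j)) ∘ decode = id := by
    funext z
    have := decide_eq_min_ne hij
    simp only [decode, Function.comp]
    split_ifs with hz
    · exact hz.symm
    · exact (Bool.eq_not_of_ne hz).trans (Bool.eq_not_of_ne this.symm).symm ▸ rfl
  have heval : pairEval M i j (l.map (Prod.map decode id)) = pairEval M i j w := by
    rw [pairEval, List.map_map, Prod.map_comp_map, hdecode, Function.id_comp, Prod.map_id,
      List.map_id, hl, pairEval]
  refine ⟨_, ⟨hij, fun a ha => ?_, ?_⟩, heval⟩
  · obtain ⟨b, -, rfl⟩ := List.mem_map.1 ha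
    exact ite_eq_or_eq ..
  · rw [pairLength, heval, List.length_map, hlen, pairEval]

/-- Two geodesic words that represent the same element of the rank two Artin group of the pair
`{i, j}`. -/
structure DihedralMove (M : ι → ι → ℕ∞) (i j : ι) (v w : List (ι × Bool)) : Prop where
  left : PairGeodesic M i j v
  right : PairGeodesic M i j w
  pairEval_eq : pairEval M i j v = pairEval M i j w

namespace DihedralMove

theorem symm (h : DihedralMove M i j v w) : DihedralMove M i j w v :=
  ⟨h.right, h.left, h.pairEval_eq.symm⟩

theorem swap (h : DihedralMove M i j v w) : DihedralMove M j i v w :=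
  ⟨h.left.symm, h.right.symm, pairEval_eq_comm.1 h.pairEval_eq⟩

theorem length_eq (h : DihedralMove M i j v w) : v.length = w.length := by
  rw [← h.left.length_eq, pairLength_congr h.pairEval_eq, h.right.length_eq]

theorem fst_ne (hM : IsLargeType M) (h : DihedralMove M i j (a :: v) (b :: w)) (hab : a ≠ b) :
    a.1 ≠ b.1 := by
  intro hfst
  obtain rfl := eq_letterInv_of_fst_eq hfst hab
  have hcons : pairLength M i j (a :: v) = pairLength M i j v + 1 := by
    rw [h.left.length_eq, h.left.tail.length_eq, List.length_cons]
  have hcancel : pairEval M i j w = pairEval M i j (a :: a :: v) :=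
    pairEval_letterInv_cons_eq_iff.1 (by rw [← h.pairEval_eq])
  have hlen := h.length_eq
  have := pairLength_cons_cons hM h.left.ne hcons
  rw [← pairLength_congr hcancel, h.right.tail.length_eq, h.left.length_eq] at this
  simp only [List.length_cons] at this hlen
  omega

end DihedralMove

/-- The equivalence relation on words generated by replacing a subword in two generators by another
geodesic word for the same element of the corresponding rank two Artin group. -/
inductive WordEquiv (M : ι → ι → ℕ∞) : List (ι × Bool) → List (ι × Bool) → Prop
  | nil : WordEquiv M [] []
  | cons (a : ι × Bool) {v w : List (ι × Bool)} (h : WordEquiv M v w) :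
      WordEquiv M (a :: v) (a :: w)
  | move {i j : ι} {α β : List (ι × Bool)} (h : DihedralMove M i j α β) (v : List (ι × Bool)) :
      WordEquiv M (α ++ v) (β ++ v)
  | trans {u v w : List (ι × Bool)} (huv : WordEquiv M u v) (hvw : WordEquiv M v w) :
      WordEquiv M u w

namespace WordEquiv

theorem refl (w : List (ι × Bool)) : WordEquiv M w w := by
  induction w with
  | nil => exact .nil
  | cons a w ih => exact ih.cons a

theorem symm (h : WordEquiv M v w) : WordEquiv M w v := by
  induction h with
  | nil => exact .nil
  | cons a _ ih => exact ih.cons a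
  | move h v => exact .move h.symm v
  | trans _ _ ih₁ ih₂ => exact ih₂.trans ih₁

theorem length_eq (h : WordEquiv M v w) : v.length = w.length := by
  induction h with
  | nil => rfl
  | cons a _ ih => simp [ih]
  | move h v => simp [h.length_eq]
  | trans _ _ ih₁ ih₂ => exact ih₁.trans ih₂

theorem append_left (u : List (ι × Bool)) (h : WordEquiv M v w) :
    WordEquiv M (u ++ v) (u ++ w) := by
  induction u with
  | nil => exact h
  | cons a u ih => exact ih.cons a

end WordEquiv

/-- The letter `a` can be moved to the front of the word `w` by rewriting. -/
def IsFirstLetter (M : ι → ι → ℕ∞) (a : ι × Bool) (w : List (ι × Bool)) : Prop :=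
  ∃ v, WordEquiv M w (a :: v)

theorem isFirstLetter_cons (a : ι × Bool) (w : List (ι × Bool)) : IsFirstLetter M a (a :: w) :=
  ⟨w, .refl _⟩

theorem IsFirstLetter.congr (h : IsFirstLetter M a v) (hvw : WordEquiv M v w) :
    IsFirstLetter M a w := by
  obtain ⟨u, hu⟩ := h
  exact ⟨u, hvw.symm.trans hu⟩

/-- No suffix of the word admits a first letter inverse to the letter preceding that suffix. These
turn out to be the geodesic words. -/
def IsReduced (M : ι → ι → ℕ∞) : List (ι × Bool) → Prop
  | [] => True
  | a :: w => IsReduced M w ∧ ¬ IsFirstLetter M (letterInv a) w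

theorem IsReduced.suffix (h : IsReduced M (v ++ w)) : IsReduced M w := by
  induction v with
  | nil => exact h
  | cons a v ih => exact ih h.1

theorem IsReduced.pairGeodesic_of_append (hM : IsLargeType M) (hij : i ≠ j) (hv : InPair i j v)
    (h : IsReduced M (v ++ w)) : PairGeodesic M i j v := by
  induction v with
  | nil => exact ⟨hij, inPair_nil, Nat.le_zero.1 (pairLength_le [])⟩
  | cons a v ih =>
    obtain ⟨ha, hv'⟩ := inPair_cons.1 hv
    have hgeod := ih hv' h.1
    rcases pairLength_cons_or hM hij a v with hup | hdown
    · exact ⟨hij, hv, by rw [hup, hgeod.length_eq, List.length_cons]⟩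
    · obtain ⟨u, hu, heval⟩ := exists_pairGeodesic M hij (a :: v)
      have hlen : (letterInv a :: u).length = v.length := by
        rw [← hgeod.length_eq, ← hdown, List.length_cons, ← hu.length_eq, pairLength_congr heval]
      have heval' := (pairEval_letterInv_cons_eq_iff.2 heval).symm
      exact absurd ⟨u ++ w, .move ⟨hgeod, hgeod.of_pairEval_eq
        (w := letterInv a :: u) (inPair_cons.2 ⟨ha, hu.inPair⟩) heval' hlen, heval'⟩ w⟩ h.2

/-- No letter `x_i^{±1}` or `x_j^{±1}` can be moved to the front of the word. -/
def NoFirstLetterIn (M : ι → ι → ℕ∞) (i j : ι) (w : List (ι × Bool)) : Prop :=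
  ∀ a : ι × Bool, a.1 = i ∨ a.1 = j → ¬ IsFirstLetter M a w

/-- The word `w` rewrites to `h ++ v`, where `h` is a maximal head in the letters `x_i^{±1}` and
`x_j^{±1}`. -/
structure PairSplit (M : ι → ι → ℕ∞) (i j : ι) (w h v : List (ι × Bool)) : Prop where
  equiv : WordEquiv M w (h ++ v)
  inPair : InPair i j h
  noFirstLetterIn : NoFirstLetterIn M i j v

namespace PairSplit

variable {h : List (ι × Bool)}

theorem swap (s : PairSplit M i j w h v) : PairSplit M j i w h v :=
  ⟨s.equiv, s.inPair.symm, fun a ha => s.noFirstLetterIn a ha.symm⟩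

theorem congr (s : PairSplit M i j w h v) (e : WordEquiv M u w) : PairSplit M i j u h v :=
  ⟨e.trans s.equiv, s.inPair, s.noFirstLetterIn⟩

theorem append_left (s : PairSplit M i j w h v) (hu : InPair i j u) :
    PairSplit M i j (u ++ w) (u ++ h) v :=
  ⟨by simpa using s.equiv.append_left u, inPair_append.2 ⟨hu, s.inPair⟩, s.noFirstLetterIn⟩

end PairSplit

theorem exists_pairSplit (M : ι → ι → ℕ∞) (i j : ι) (w : List (ι × Bool)) :
    ∃ h v, PairSplit M i j w h v := by
  by_cases hw : NoFirstLetterIn M i j w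
  · exact ⟨[], w, .refl w, inPair_nil, hw⟩
  · simp only [NoFirstLetterIn, not_forall, not_not] at hw
    obtain ⟨a, ha, u, hu⟩ := hw
    have : u.length < w.length := by simp [hu.length_eq]
    obtain ⟨h, v, s⟩ := exists_pairSplit M i j u
    exact ⟨a :: h, v, (s.append_left (inPair_cons.2 ⟨ha, inPair_nil⟩)).congr hu⟩
termination_by w.length

/-- The word `w` rewrites to `c ^ t` followed by `w'`, with `t` maximal. -/
structure StripPower (M : ι → ι → ℕ∞) (c : ι × Bool) (t : ℕ) (w w' : List (ι × Bool)) : Prop where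
  equiv : WordEquiv M w (List.replicate t c ++ w')
  not_isFirstLetter : ¬ IsFirstLetter M c w'

theorem exists_stripPower (M : ι → ι → ℕ∞) (c : ι × Bool) (w : List (ι × Bool)) :
    ∃ t w', StripPower M c t w w' := by
  by_cases hw : IsFirstLetter M c w
  · obtain ⟨u, hu⟩ := hw
    have : u.length < w.length := by simp [hu.length_eq]
    obtain ⟨t, w', s⟩ := exists_stripPower M c u
    exact ⟨t + 1, w', hu.trans (s.equiv.cons c), s.not_isFirstLetter⟩
  · exact ⟨0, w, .refl w, hw⟩
termination_by w.length

theorem IsFirstLetter.exists_stripPower {c : ι × Bool} (h : IsFirstLetter M c w) :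
    ∃ t w', StripPower M c (t + 1) w w' := by
  obtain ⟨t, w', s⟩ := ArtinRD.exists_stripPower M c w
  cases t with
  | zero => exact absurd (h.congr s.equiv) s.not_isFirstLetter
  | succ t => exact ⟨t, w', s⟩

theorem StripPower.isFirstLetter {c : ι × Bool} {t : ℕ} (s : StripPower M c (t + 1) w v) :
    IsFirstLetter M c w :=
  ⟨_, s.equiv⟩

end WordEquiv

section Exchange

variable {ι : Type*} [LinearOrder ι] {M : ι → ι → ℕ∞} {N : ℕ} {i j : ι} {a b : ι × Bool}
  {h u v v' w w' α β : List (ι × Bool)}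

/-- The relation between equivalent reduced words obtained from their first letters: either these
agree, and so do the remaining words up to equivalence, or both words begin, up to equivalence, with
geodesic words for the same element of the rank two group of the two first letters. -/
inductive HeadExchange (M : ι → ι → ℕ∞) : List (ι × Bool) → List (ι × Bool) → Prop
  | nil : HeadExchange M [] []
  | cons (a : ι × Bool) {v u : List (ι × Bool)} (h : WordEquiv M v u) :
      HeadExchange M (a :: v) (a :: u)
  | move {a b : ι × Bool} {α β z v u : List (ι × Bool)}
      (h : DihedralMove M a.1 b.1 (a :: α) (b :: β))
      (hv : PairSplit M a.1 b.1 v α z) (hu : PairSplit M a.1 b.1 u β z) :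
      HeadExchange M (a :: v) (b :: u)

/-- The reduced words of length at most `N`. -/
structure IsReducedLE (M : ι → ι → ℕ∞) (N : ℕ) (w : List (ι × Bool)) : Prop where
  isReduced : IsReduced M w
  length_le : w.length ≤ N

/-- Equivalent reduced words of length at most `N` are related by `HeadExchange`; this is the
statement proved by induction on `N`. -/
def ExchangeUpTo (M : ι → ι → ℕ∞) (N : ℕ) : Prop :=
  ∀ v w, IsReducedLE M N v → WordEquiv M v w → IsReduced M w ∧ HeadExchange M v w

namespace IsReducedLE

theorem suffix (hw : IsReducedLE M N (v ++ w)) : IsReducedLE M N w :=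
  ⟨hw.isReduced.suffix, le_trans (by simp) hw.length_le⟩

theorem tail (hw : IsReducedLE M (N + 1) (a :: w)) : IsReducedLE M N w :=
  ⟨hw.isReduced.1, Nat.le_of_succ_le_succ hw.length_le⟩

theorem mono {N' : ℕ} (hw : IsReducedLE M N w) (hN : N ≤ N') : IsReducedLE M N' w :=
  ⟨hw.isReduced, hw.length_le.trans hN⟩

theorem congr (hw : IsReducedLE M N w) (H : ExchangeUpTo M N) (e : WordEquiv M w v) :
    IsReducedLE M N v :=
  ⟨(H w v hw e).1, e.length_eq ▸ hw.length_le⟩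

theorem cons_congr (hw : IsReducedLE M (N + 1) (a :: w)) (H : ExchangeUpTo M N)
    (e : WordEquiv M w v) : IsReducedLE M (N + 1) (a :: v) :=
  ⟨⟨(hw.tail.congr H e).isReduced, fun ha => hw.isReduced.2 (ha.congr e.symm)⟩,
    (e.cons a).length_eq ▸ hw.length_le⟩

end IsReducedLE

theorem PairSplit.unique (H : ExchangeUpTo M N) {w h v h' v' : List (ι × Bool)}
    (hw : IsReducedLE M N w) (s : PairSplit M i j w h v) (s' : PairSplit M i j w h' v') :
    pairEval M i j h = pairEval M i j h' ∧ WordEquiv M v v' := by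
  have e := s.equiv.symm.trans s'.equiv
  match h, h' with
  | [], [] => exact ⟨rfl, e⟩
  | [], b :: h' => exact absurd ⟨_, e⟩ (s.noFirstLetterIn b (inPair_cons.1 s'.inPair).1)
  | a :: h, [] => exact absurd ⟨_, e.symm⟩ (s'.noFirstLetterIn a (inPair_cons.1 s.inPair).1)
  | a :: h, b :: h' =>
    obtain ⟨ha, hh⟩ := inPair_cons.1 s.inPair
    obtain ⟨hb, hh'⟩ := inPair_cons.1 s'.inPair
    have hl := hw.congr H s.equiv
    have hr := hw.congr H s'.equiv
    have : h.length + v.length < w.length := by simp [s.equiv.length_eq]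
    have : h'.length + v'.length < w.length := by simp [s'.equiv.length_eq]
    have sl : PairSplit M i j (h ++ v) h v := ⟨.refl _, hh, s.noFirstLetterIn⟩
    have sr : PairSplit M i j (h' ++ v') h' v' := ⟨.refl _, hh', s'.noFirstLetterIn⟩
    have ihl {α z} :=
      PairSplit.unique (w := h ++ v) (h' := α) (v' := z) H (hl.suffix (v := [a])) sl
    have ihr {β z} :=
      PairSplit.unique (w := h' ++ v') (h' := β) (v' := z) H (hr.suffix (v := [b])) sr
    cases (H _ _ hl e).2 with
    | cons _ e =>
      obtain ⟨heval, hequiv⟩ := ihl (sr.congr e)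
      exact ⟨pairEval_cons_inj.2 heval, hequiv⟩
    | @move _ _ α β z _ _ m ml mr =>
      obtain ⟨m, ml, mr⟩ : DihedralMove M i j (a :: α) (b :: β) ∧
          PairSplit M i j (h ++ v) α z ∧ PairSplit M i j (h' ++ v') β z := by
        rcases eq_and_eq_or_of_fst_ne ha hb m.left.ne with ⟨rfl, rfl⟩ | ⟨rfl, rfl⟩
        exacts [⟨m, ml, mr⟩, ⟨m.swap, ml.swap, mr.swap⟩]
      obtain ⟨hα, hαz⟩ := ihl ml
      obtain ⟨hβ, hβz⟩ := ihr mr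
      exact ⟨(pairEval_cons_inj.2 hα).trans (m.pairEval_eq.trans (pairEval_cons_inj.2 hβ.symm)),
        hαz.trans hβz.symm⟩
termination_by w.length

theorem PairGeodesic.isReduced_append (H : ExchangeUpTo M N)
    (hv : IsReduced M v) (hd : NoFirstLetterIn M i j v) (hh : PairGeodesic M i j h)
    (hlen : (h ++ v).length ≤ N + 1) : IsReduced M (h ++ v) := by
  induction h with
  | nil => exact hv
  | cons a h ih =>
    have hle : IsReducedLE M N (h ++ v) :=
      ⟨ih hh.tail ((Nat.le_succ _).trans hlen), Nat.le_of_succ_le_succ hlen⟩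
    refine ⟨hle.isReduced, ?_⟩
    rintro ⟨y, hy⟩
    obtain ⟨k, y', sy⟩ := exists_pairSplit M i j y
    obtain ⟨ha, hh'⟩ := inPair_cons.1 hh.inPair
    have s' : PairSplit M i j (h ++ v) (letterInv a :: k) y' :=
      (sy.append_left (u := [letterInv a]) (by simpa using ha)).congr hy
    obtain ⟨heval, hequiv⟩ := PairSplit.unique H hle ⟨.refl _, hh', hd⟩ s'
    have hgt : h.length + 1 ≤ k.length := by
      rw [← List.length_cons (a := a), ← hh.length_eq,
        ← pairLength_congr (pairEval_letterInv_cons_eq_iff.1 heval.symm)]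
      exact pairLength_le k
    have := s'.equiv.length_eq
    simp only [List.length_append, List.length_cons, hequiv.length_eq] at this
    omega

end Exchange

/-! ### Alternating first letters -/

section Syllables

variable {ι : Type*} {a b : ι × Bool} {v w : List (ι × Bool)}

theorem hasSyllables_replicate (a : ι × Bool) (t : ℕ) :
    HasSyllables 1 a (List.replicate (t + 1) a) := by
  induction t with
  | zero => exact .single a
  | succ t ih => exact ih.extend

theorem HasSyllables.append {k l : ℕ} (hw : HasSyllables k a w) (hv : HasSyllables l b v)
    (hb : ∀ c ∈ w.getLast?, c.1 ≠ b.1) : HasSyllables (l + k) a (w ++ v) := by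
  induction hw with
  | single a => exact hv.change (hb a rfl)
  | @extend _ a w hw ih =>
    obtain ⟨c, w, rfl⟩ := List.exists_cons_of_ne_nil (l := w) (by rintro rfl; cases hw)
    exact (ih fun c hc => hb c (by rwa [List.getLast?_cons_cons])).extend
  | @change _ a d w hd hw ih =>
    obtain ⟨c, w, rfl⟩ := List.exists_cons_of_ne_nil (l := w) (by rintro rfl; cases hw)
    exact (ih fun c hc => hb c (by rwa [List.getLast?_cons_cons])).change hd

end Syllables

section Alternation

variable {ι : Type*} [LinearOrder ι] {M : ι → ι → ℕ∞} {N k l t : ℕ} {i j : ι} {a b c : ι × Bool}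
  {g g' u v w x P Q α β z : List (ι × Bool)}

/-- Starting from `w` one can strip maximal powers of letters with generators `x_i`, `x_j`, `x_i`, …
in turn, `k` times. -/
def AlternatesFrom (M : ι → ι → ℕ∞) : ℕ → ι → ι → List (ι × Bool) → Prop
  | 0, _, _, _ => True
  | k + 1, i, j, w => ∃ d t w', d.1 = i ∧ StripPower M d (t + 1) w w' ∧ AlternatesFrom M k j i w'

theorem IsReduced.not_isFirstLetter_letterInv (h : IsReduced M (w ++ v))
    (ha : w.getLast? = some a) : ¬ IsFirstLetter M (letterInv a) v := by
  obtain ⟨w, rfl⟩ := List.getLast?_eq_some_iff.1 ha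
  rw [List.append_assoc] at h
  exact h.suffix.2

theorem PairSplit.pairLength_letterInv_cons_lt (H : ExchangeUpTo M N) (hu : IsReducedLE M N u)
    (m : DihedralMove M a.1 b.1 (a :: α) (b :: β)) (s : PairSplit M a.1 b.1 u β z)
    (s' : PairSplit M a.1 b.1 u P x) :
    pairLength M a.1 b.1 (letterInv a :: b :: P) < pairLength M a.1 b.1 (b :: P) := by
  have heval : pairEval M a.1 b.1 (b :: P) = pairEval M a.1 b.1 (a :: α) :=
    (pairEval_cons_inj.2 (s'.unique H hu s).1).trans m.pairEval_eq.symm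
  rw [pairLength_congr (pairEval_letterInv_cons_eq_iff.2 heval), pairLength_congr heval,
    m.left.length_eq, m.left.tail.length_eq]
  exact Nat.lt_succ_self _

theorem PairSplit.exists_isFirstLetter (hM : IsLargeType M) (H : ExchangeUpTo M N)
    (hu : IsReducedLE M N u) (m : DihedralMove M a.1 b.1 (a :: α) (b :: β))
    (s : PairSplit M a.1 b.1 u β z) (e : WordEquiv M u (Q ++ x)) (hQ : InPair a.1 b.1 Q)
    (hs : HasSyllables k b (b :: Q)) (hk : k < M a.1 b.1) :
    ∃ d : ι × Bool, (d.1 = a.1 ∨ d.1 = b.1) ∧ IsFirstLetter M d x := by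
  by_contra! hx
  have hlt := s.pairLength_letterInv_cons_lt H hu m ⟨e, hQ, hx⟩
  have hup := hs.pairLength_cons hM m.left.ne hk (inPair_cons.2 ⟨.inr rfl, hQ⟩)
    (b := letterInv a) (.inl rfl) m.left.ne
  omega

theorem PairSplit.alternatesFrom_of_hasSyllables (hM : IsLargeType M) (H : ExchangeUpTo M N)
    (hu : IsReducedLE M (N + 1) (b :: u)) (m : DihedralMove M a.1 b.1 (a :: α) (b :: β))
    (s : PairSplit M a.1 b.1 u β z) (e : WordEquiv M u (Q ++ x)) (hQ : InPair a.1 b.1 Q)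
    (hs : HasSyllables l b (b :: Q)) (hl : ((l + k : ℕ) : ℕ∞) ≤ M a.1 b.1)
    (hc : (b :: Q).getLast? = some c) (hcx : ¬ IsFirstLetter M c x)
    (hi : i = a.1 ∧ c.1 = b.1 ∨ i = b.1 ∧ c.1 = a.1) : AlternatesFrom M k i c.1 x := by
  induction k generalizing Q x l c i with
  | zero => trivial
  | succ k ih =>
    have hlt : (l : ℕ∞) < M a.1 b.1 := lt_of_lt_of_le (by exact_mod_cast by omega) hl
    obtain ⟨d, hd, hdx⟩ := s.exists_isFirstLetter hM H hu.tail m e hQ hs hlt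
    have hred : IsReduced M ((b :: Q) ++ x) := (hu.cons_congr H e).isReduced
    have hcd : c.1 ≠ d.1 := fun hfst => by
      rcases eq_or_ne c d with rfl | hne
      · exact hcx hdx
      · exact hred.not_isFirstLetter_letterInv hc (eq_letterInv_of_fst_eq hfst hne ▸ hdx)
    obtain ⟨t, x', hx'⟩ := hdx.exists_stripPower
    have hdi : d.1 = i := by grind
    refine ⟨d, t, x', hdi, hx', hdi ▸ ih (l := 1 + l) (Q := Q ++ List.replicate (t + 1) d) ?_
      (inPair_append.2 ⟨hQ, inPair_replicate hd _⟩) ?_ ?_ ?_ hx'.not_isFirstLetter ?_⟩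
    · rw [List.append_assoc]
      exact e.trans (hx'.equiv.append_left Q)
    · exact hs.append (hasSyllables_replicate d t) fun c' hc' => by
        rw [hc, Option.mem_some_iff] at hc'
        exact hc' ▸ hcd
    · rwa [show 1 + l + k = l + (k + 1) by omega]
    · rw [← List.cons_append, List.replicate_succ', ← List.append_assoc, List.getLast?_concat]
    · grind

theorem StripPower.alternatesFrom_of_pairSplit (hM : IsLargeType M) (H : ExchangeUpTo M N)
    (hu : IsReducedLE M (N + 1) (b :: u)) (m : DihedralMove M a.1 b.1 (a :: α) (b :: β))
    (s : PairSplit M a.1 b.1 u β z) (hx : StripPower M b t u x) (hk : k < M a.1 b.1) :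
    AlternatesFrom M k a.1 b.1 x := by
  refine s.alternatesFrom_of_hasSyllables hM H hu m hx.equiv (inPair_replicate (.inr rfl) t)
    (hasSyllables_replicate b t) ?_ ?_ hx.not_isFirstLetter (.inl ⟨rfl, rfl⟩)
  · rw [add_comm]
    exact_mod_cast Order.add_one_le_of_lt hk
  · rw [← List.replicate_succ, List.replicate_succ', List.getLast?_concat]

theorem StripPower.alternatesFrom (hM : IsLargeType M) (H : ExchangeUpTo M N)
    (hg : IsReducedLE M N g) (hs : StripPower M b (t + 1) g g') (ha : IsFirstLetter M a g)
    (hab : a.1 ≠ b.1) (hk : k < M a.1 b.1) : AlternatesFrom M k a.1 b.1 g' := by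
  obtain ⟨v, hv⟩ := ha
  cases (H (a :: v) (b :: (List.replicate t b ++ g')) (hg.congr H hv)
    (hv.symm.trans hs.equiv)).2 with
  | cons => exact absurd rfl hab
  | move m _ s =>
    exact alternatesFrom_of_pairSplit hM H ((hg.congr H hs.equiv).mono N.le_succ) m s
      ⟨.refl _, hs.not_isFirstLetter⟩ hk

theorem StripPower.not_isFirstLetter_of_ne (hM : IsLargeType M) (H : ExchangeUpTo M N)
    {a b c : ι × Bool} {g g' : List (ι × Bool)} {t : ℕ} (hg : IsReducedLE M N g)
    (hs : StripPower M b (t + 1) g g') (hc : IsFirstLetter M c g) (hab : a.1 ≠ b.1)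
    (hac : a.1 ≠ c.1) (hbc : b.1 ≠ c.1) : ¬ IsFirstLetter M a g' := by
  intro ha
  have htwo : ((2 : ℕ) : ℕ∞) < M c.1 b.1 :=
    lt_of_lt_of_le (by norm_num) (hM.three_le _ _ hbc.symm)
  obtain ⟨d, _, g₂, hd, hs₂, e, _, g₃, he, hs₃, -⟩ := hs.alternatesFrom hM H hg hc hbc.symm htwo
  have : g'.length < g.length := by simp [hs.equiv.length_eq]
  exact StripPower.not_isFirstLetter_of_ne hM H (hg.congr H hs.equiv).suffix hs₂ ha
    (hd ▸ he ▸ hbc) (he ▸ hab.symm) (hd ▸ hac.symm) hs₃.isFirstLetter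
termination_by g.length

end Alternation

/-! ### Equivalent reduced words -/

section Induction

variable {ι : Type*} [LinearOrder ι] {M : ι → ι → ℕ∞} {N : ℕ} {i j : ι} {a b c : ι × Bool}
  {h u v w w' w'' x y z α β β' γ : List (ι × Bool)}

theorem HeadExchange.of_dihedralMove (hM : IsLargeType M)
    (m : DihedralMove M i j (a :: α) (b :: β)) (hv : PairSplit M i j v α z)
    (hu : PairSplit M i j u β z) : HeadExchange M (a :: v) (b :: u) := by
  rcases eq_or_ne a b with rfl | hab
  · exact .cons a (hv.equiv.trans ((WordEquiv.move
      ⟨m.left.tail, m.right.tail, pairEval_cons_inj.1 m.pairEval_eq⟩ z).trans hu.equiv.symm))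
  · rcases eq_and_eq_or_of_fst_ne (inPair_cons.1 m.left.inPair).1
      (inPair_cons.1 m.right.inPair).1 (m.fst_ne hM hab) with ⟨rfl, rfl⟩ | ⟨rfl, rfl⟩
    exacts [.move m hv hu, .move m.swap hv.swap hu.swap]

-- Stripping the powers of `b` from `u` leaves a word that starts with a syllable in each of the
-- generators of `a` and `c`, the one of `a` being followed by one of `b`.
theorem DihedralMove.fst_eq_of_pairSplit (hM : IsLargeType M) (H : ExchangeUpTo M N)
    (hu : IsReducedLE M (N + 1) (b :: u)) (m : DihedralMove M a.1 b.1 (a :: α) (b :: β))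
    (s : PairSplit M a.1 b.1 u β z) (m' : DihedralMove M c.1 b.1 (c :: γ) (b :: β'))
    (s' : PairSplit M c.1 b.1 u β' y) : a.1 = c.1 := by
  by_contra hac
  obtain ⟨t, x, hx⟩ := exists_stripPower M b u
  have two_lt {k l : ι} (hkl : k ≠ l) : ((2 : ℕ) : ℕ∞) < M k l :=
    lt_of_lt_of_le (by norm_num) (hM.three_le _ _ hkl)
  obtain ⟨d, _, x₁, hd, hx₁, e, _, x₂, he, hx₂, -⟩ :=
    hx.alternatesFrom_of_pairSplit hM H hu m s (two_lt m.left.ne)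
  obtain ⟨d', _, _, hd', hx', -⟩ :=
    hx.alternatesFrom_of_pairSplit hM H hu m' s' (two_lt m'.left.ne)
  exact hx₁.not_isFirstLetter_of_ne hM H (hu.tail.congr H hx.equiv).suffix hx'.isFirstLetter
    (he ▸ hd ▸ m.left.ne.symm) (he ▸ hd' ▸ m'.left.ne.symm) (hd ▸ hd' ▸ hac) hx₂.isFirstLetter

theorem HeadExchange.trans (hM : IsLargeType M) (H : ExchangeUpTo M N)
    (hw' : IsReducedLE M (N + 1) w') (h : HeadExchange M w w') (h' : HeadExchange M w' w'') :
    HeadExchange M w w'' := by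
  cases h with
  | nil => exact h'
  | cons a e =>
    cases h' with
    | cons _ e' => exact .cons a (e.trans e')
    | move m hv hu => exact .move m (hv.congr e) hu
  | @move a b α β z v u m hv hu =>
    cases h' with
    | cons _ e => exact .move m hv (hu.congr e.symm)
    | @move _ c β' γ z' _ x m' hv' hu' =>
      have hac := m.fst_eq_of_pairSplit hM H hw' hu m'.symm.swap hv'.swap
      rw [← hac] at m' hv' hu'
      obtain ⟨heval, hequiv⟩ := hu.unique H hw'.tail hv'.swap
      refine .of_dihedralMove hM ⟨m.left, m'.right.symm, m.pairEval_eq.trans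
        ((pairEval_cons_inj.2 heval).trans m'.swap.pairEval_eq)⟩ hv
        ⟨hu'.equiv.trans (hequiv.symm.append_left γ), hu'.inPair.symm, hv.noFirstLetterIn⟩

theorem DihedralMove.isReduced_and_headExchange (hM : IsLargeType M) (H : ExchangeUpTo M N)
    (m : DihedralMove M i j (a :: α) (b :: β)) (hv : IsReducedLE M (N + 1) (a :: (α ++ v))) :
    IsReduced M (b :: (β ++ v)) ∧ HeadExchange M (a :: (α ++ v)) (b :: (β ++ v)) := by
  obtain ⟨h, z, s⟩ := exists_pairSplit M i j v
  have hα := s.append_left (inPair_cons.1 m.left.inPair).2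
  have hβ := s.append_left (inPair_cons.1 m.right.inPair).2
  have hz : IsReducedLE M (N + 1) ((a :: (α ++ h)) ++ z) := hv.cons_congr H hα.equiv
  have heval : pairEval M i j (a :: (α ++ h)) = pairEval M i j (b :: (β ++ h)) := by
    rw [← List.cons_append, ← List.cons_append, pairEval_append, pairEval_append, m.pairEval_eq]
  have hgeod := hz.isReduced.pairGeodesic_of_append hM m.left.ne
    (inPair_append.2 ⟨m.left.inPair, s.inPair⟩)
  have hlen : (b :: (β ++ h)).length = (a :: (α ++ h)).length := by simpa using m.length_eq.symm
  have hgeod' := hgeod.of_pairEval_eq (inPair_append.2 ⟨m.right.inPair, s.inPair⟩) heval hlen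
  have hβz : IsReducedLE M (N + 1) (b :: (β ++ h ++ z)) := by
    have hle : ((b :: (β ++ h)) ++ z).length ≤ N + 1 := by
      rw [List.length_append, hlen, ← List.length_append]
      exact hz.length_le
    exact ⟨hgeod'.isReduced_append H hz.suffix.isReduced s.noFirstLetterIn hle, hle⟩
  exact ⟨(hβz.cons_congr H hβ.equiv.symm).isReduced,
    .of_dihedralMove hM ⟨hgeod, hgeod', heval⟩ hα hβ⟩

theorem HeadExchange.refl (w : List (ι × Bool)) : HeadExchange M w w := by
  cases w with
  | nil => exact .nil
  | cons a w => exact .cons a (.refl w)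

theorem ExchangeUpTo.succ (hM : IsLargeType M) (H : ExchangeUpTo M N) :
    ExchangeUpTo M (N + 1) := by
  intro v w hv e
  induction e with
  | nil => exact ⟨hv.isReduced, .nil⟩
  | cons a e => exact ⟨(hv.cons_congr H e).isReduced, .cons a e⟩
  | @move i j α β h v =>
    match α, β, h with
    | [], [], _ => exact ⟨hv.isReduced, .refl v⟩
    | [], _ :: _, h => cases h.length_eq
    | _ :: _, [], h => cases h.length_eq
    | _ :: _, _ :: _, h => exact h.isReduced_and_headExchange hM H hv
  | trans e₁ _ ih₁ ih₂ =>
    have hu : IsReducedLE M (N + 1) _ := ⟨(ih₁ hv).1, e₁.length_eq ▸ hv.length_le⟩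
    exact ⟨(ih₂ hu).1, (ih₁ hv).2.trans hM H hu (ih₂ hu).2⟩

theorem exchangeUpTo (hM : IsLargeType M) (N : ℕ) : ExchangeUpTo M N := by
  induction N with
  | zero =>
    intro v w hv e
    obtain rfl := List.length_eq_zero_iff.1 (Nat.le_zero.1 hv.length_le)
    obtain rfl := List.length_eq_zero_iff.1 e.length_eq.symm
    exact ⟨trivial, .nil⟩
  | succ N ih => exact ih.succ hM

theorem IsReduced.congr (hM : IsLargeType M) (h : IsReduced M v) (e : WordEquiv M v w) :
    IsReduced M w :=
  (exchangeUpTo hM _ v w ⟨h, le_rfl⟩ e).1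

theorem WordEquiv.of_cons (hM : IsLargeType M) (h : IsReduced M (a :: v))
    (e : WordEquiv M (a :: v) (a :: w)) : WordEquiv M v w := by
  cases (exchangeUpTo hM _ _ _ ⟨h, le_rfl⟩ e).2 with
  | cons _ e => exact e
  | move m => exact absurd rfl m.left.ne

end Induction

/-! ### The action on classes of reduced words -/

section Action

variable {ι : Type*} [LinearOrder ι] {M : ι → ι → ℕ∞} {i j : ι} {a : ι × Bool}
  {h v w α β : List (ι × Bool)}

/-- The setoid on reduced words given by `WordEquiv`. -/
def reducedSetoid (M : ι → ι → ℕ∞) : Setoid {w // IsReduced M w} where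
  r v w := WordEquiv M v.1 w.1
  iseqv := ⟨fun w => .refl w.1, .symm, .trans⟩

/-- The classes of reduced words, which will turn out to be the elements of the Artin group. -/
def ReducedClass (M : ι → ι → ℕ∞) : Type _ := Quotient (reducedSetoid M)

/-- The class of a reduced word. -/
def IsReduced.toClass (hw : IsReduced M w) : ReducedClass M := Quotient.mk _ ⟨w, hw⟩

theorem IsReduced.toClass_eq_iff {hv : IsReduced M v} {hw : IsReduced M w} :
    hv.toClass = hw.toClass ↔ WordEquiv M v w :=
  Quotient.eq (r := reducedSetoid M)

/-- Multiplication by the letter `a` takes the class `x` to the class `y`: some representative of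
`y` is `a` followed by one of `x`, or some representative of `x` is `a⁻¹` followed by one of `y`. -/
def LetterStep (a : ι × Bool) (x y : ReducedClass M) : Prop :=
  (∃ (w : List (ι × Bool)) (h : IsReduced M (a :: w)), h.1.toClass = x ∧ h.toClass = y) ∨
    ∃ (w : List (ι × Bool)) (h : IsReduced M (letterInv a :: w)), h.toClass = x ∧ h.1.toClass = y

theorem LetterStep.symm {x y : ReducedClass M} (h : LetterStep a x y) :
    LetterStep (letterInv a) y x := by
  obtain ⟨i, s⟩ := a
  cases s
  all_goals
    exact h.symm.imp (fun ⟨w, hw, hx, hy⟩ => ⟨w, hw, hy, hx⟩)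
      fun ⟨w, hw, hx, hy⟩ => ⟨w, hw, hy, hx⟩

theorem exists_letterStep (hM : IsLargeType M) (a : ι × Bool) (x : ReducedClass M) :
    ∃ y, LetterStep a x y := by
  obtain ⟨w, hw⟩ := x
  by_cases ha : IsFirstLetter M (letterInv a) w
  · obtain ⟨v, e⟩ := ha
    exact ⟨_, .inr ⟨v, hw.congr hM e, IsReduced.toClass_eq_iff.2 e.symm, rfl⟩⟩
  · exact ⟨_, .inl ⟨w, ⟨hw, ha⟩, rfl, rfl⟩⟩

theorem LetterStep.unique (hM : IsLargeType M) {x y y' : ReducedClass M} (h : LetterStep a x y)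
    (h' : LetterStep a x y') : y = y' := by
  obtain ⟨w, hw, rfl, rfl⟩ | ⟨w, hw, rfl, rfl⟩ := h <;>
    obtain ⟨v, hv, hx, rfl⟩ | ⟨v, hv, hx, rfl⟩ := h' <;>
    rw [IsReduced.toClass_eq_iff] at hx ⊢
  · exact hx.symm.cons a
  · exact absurd ⟨v, hx.symm⟩ hw.2
  · exact absurd ⟨w, hx⟩ hv.2
  · exact .of_cons hM hw hx.symm

/-- The permutation of the classes of reduced words given by multiplication by `x_i`. -/
noncomputable def genPerm (hM : IsLargeType M) (i : ι) : Equiv.Perm (ReducedClass M) where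
  toFun x := (exists_letterStep hM (i, true) x).choose
  invFun x := (exists_letterStep hM (i, false) x).choose
  left_inv x := (exists_letterStep hM (i, false) _).choose_spec.unique hM
    (exists_letterStep hM (i, true) x).choose_spec.symm
  right_inv x := (exists_letterStep hM (i, true) _).choose_spec.unique hM
    (exists_letterStep hM (i, false) x).choose_spec.symm

theorem LetterStep.letterEval_genPerm (hM : IsLargeType M) {x y : ReducedClass M}
    (h : LetterStep a x y) : letterEval (genPerm hM) a x = y := by
  obtain ⟨i, s⟩ := a
  cases s
  exacts [(exists_letterStep hM (i, false) x).choose_spec.unique hM h,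
    (exists_letterStep hM (i, true) x).choose_spec.unique hM h]

theorem IsReduced.wordEval_genPerm (hM : IsLargeType M) (hw : IsReduced M w) :
    wordEval (genPerm hM) w (IsReduced.toClass (w := []) trivial) = hw.toClass := by
  induction w with
  | nil => rfl
  | cons a w ih =>
    rw [wordEval_cons, Equiv.Perm.mul_apply, ih hw.1]
    exact LetterStep.letterEval_genPerm hM (.inl ⟨w, hw, rfl, rfl⟩)

theorem PairGeodesic.isReduced (hM : IsLargeType M) (hh : PairGeodesic M i j h)
    (hv : IsReduced M v) (hd : NoFirstLetterIn M i j v) : IsReduced M (h ++ v) :=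
  hh.isReduced_append (exchangeUpTo hM _) hv hd (Nat.le_succ _)

theorem PairGeodesic.letterEval_genPerm (hM : IsLargeType M) (hh : PairGeodesic M i j h)
    (hβ : PairGeodesic M i j β) (ha : a.1 = i ∨ a.1 = j) (hv : IsReduced M v)
    (hd : NoFirstLetterIn M i j v) (heval : pairEval M i j (a :: h) = pairEval M i j β) :
    letterEval (genPerm hM) a (hh.isReduced hM hv hd).toClass =
      (hβ.isReduced hM hv hd).toClass := by
  refine LetterStep.letterEval_genPerm hM ?_
  rcases pairLength_cons_or hM hh.ne a h with hup | hdown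
  · have hah : PairGeodesic M i j (a :: h) :=
      ⟨hh.ne, inPair_cons.2 ⟨ha, hh.inPair⟩, by rw [hup, hh.length_eq, List.length_cons]⟩
    exact .inl ⟨h ++ v, hah.isReduced hM hv hd, rfl,
      IsReduced.toClass_eq_iff.2 (.move ⟨hah, hβ, heval⟩ v)⟩
  · have heval' := pairEval_letterInv_cons_eq_iff.2 heval.symm
    have haβ : PairGeodesic M i j (letterInv a :: β) := by
      refine hh.of_pairEval_eq (inPair_cons.2 ⟨ha, hβ.inPair⟩) heval'.symm ?_
      rw [← hh.length_eq, ← hdown, pairLength_congr heval, hβ.length_eq, List.length_cons]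
    exact .inr ⟨β ++ v, haβ.isReduced hM hv hd,
      IsReduced.toClass_eq_iff.2 (.move ⟨haβ, hh, heval'⟩ v), rfl⟩

theorem PairGeodesic.wordEval_genPerm (hM : IsLargeType M) (hh : PairGeodesic M i j h)
    (hβ : PairGeodesic M i j β) (hα : InPair i j α) (hv : IsReduced M v)
    (hd : NoFirstLetterIn M i j v) (heval : pairEval M i j (α ++ h) = pairEval M i j β) :
    wordEval (genPerm hM) α (hh.isReduced hM hv hd).toClass =
      (hβ.isReduced hM hv hd).toClass := by
  induction α generalizing β with
  | nil => exact IsReduced.toClass_eq_iff.2 (.move ⟨hh, hβ, heval⟩ v)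
  | cons a α ih =>
    obtain ⟨ha, hα⟩ := inPair_cons.1 hα
    obtain ⟨γ, hγ, hγe⟩ := exists_pairGeodesic M hh.ne (α ++ h)
    rw [wordEval_cons, Equiv.Perm.mul_apply, ih hγ hα hγe.symm]
    exact hγ.letterEval_genPerm hM hβ ha hv hd ((pairEval_cons_inj.2 hγe).trans heval)

theorem wordEval_genPerm_eq (hM : IsLargeType M) (hij : i ≠ j) (hα : InPair i j α)
    (hβ : InPair i j β) (heval : pairEval M i j α = pairEval M i j β) :
    wordEval (genPerm hM) α = wordEval (genPerm hM) β := by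
  ext ⟨w, hw⟩
  obtain ⟨h, v, s⟩ := exists_pairSplit M i j w
  have hhv := hw.congr hM s.equiv
  have hh := hhv.pairGeodesic_of_append hM hij s.inPair
  obtain ⟨γ, hγ, hγe⟩ := exists_pairGeodesic M hij (α ++ h)
  have hclass : Quotient.mk _ ⟨w, hw⟩ = hhv.toClass := Quotient.sound (s := reducedSetoid M) s.equiv
  have hact {δ} (hδ : InPair i j δ) (heval : pairEval M i j δ = pairEval M i j α) :
      wordEval (genPerm hM) δ hhv.toClass =
        (hγ.isReduced hM hhv.suffix s.noFirstLetterIn).toClass :=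
    hh.wordEval_genPerm hM hγ hδ hhv.suffix s.noFirstLetterIn
      (by rw [hγe, pairEval_append, pairEval_append, heval])
  exact (congrArg _ hclass).trans ((hact hα rfl).trans ((hact hβ heval.symm).symm.trans
    (congrArg _ hclass.symm)))

theorem altProd_genPerm (hM : IsLargeType M) (hij : i ≠ j) {k : ℕ} (hk : M i j = k) :
    altProd k (genPerm hM i) (genPerm hM j) = altProd k (genPerm hM j) (genPerm hM i) := by
  rw [← wordEval_altWord, ← wordEval_altWord]
  exact wordEval_genPerm_eq hM hij (inPair_altWord k i j) (inPair_altWord k j i).symm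
    (pairEval_altWord hM hij hk)

end Action

/-! ### Geodesic words in Artin groups of large type -/

section Geodesic

variable {n : ℕ} {M : Fin n → Fin n → ℕ∞} {v w : List (Letter n)}

theorem toGen_eq_letterEval : toGen n M = letterEval (gen n M) := rfl

theorem wordElt_eq_wordEval : wordElt n M = wordEval (gen n M) := rfl

theorem altProd_gen {i j : Fin n} (hij : i ≠ j) {k : ℕ} (hk : M i j = k) :
    altProd k (gen n M i) (gen n M j) = altProd k (gen n M j) (gen n M i) := by
  have h := PresentedGroup.one_of_mem (rels := artinRels n M) ⟨i, j, hij, k, hk, rfl⟩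
  rwa [map_mul, map_inv, map_altProd, map_altProd, mul_inv_eq_one] at h

/-- The action of an Artin group of large type on the classes of reduced words. -/
noncomputable def reducedClassHom (hM : IsLargeType M) :
    ArtinGroup n M →* Equiv.Perm (ReducedClass M) :=
  PresentedGroup.toGroup (f := genPerm hM) <| by
    rintro _ ⟨i, j, hij, k, hk, rfl⟩
    rw [map_mul, map_inv, map_altProd, map_altProd, FreeGroup.lift_apply_of,
      FreeGroup.lift_apply_of, altProd_genPerm hM hij hk, mul_inv_cancel]

theorem IsReduced.wordEquiv (hM : IsLargeType M) (hv : IsReduced M v) (hw : IsReduced M w)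
    (h : wordElt n M v = wordElt n M w) : WordEquiv M v w := by
  have hmap (w : List (Letter n)) :
      reducedClassHom hM (wordElt n M w) = wordEval (genPerm hM) w := by
    rw [wordElt_eq_wordEval, map_wordEval]
    exact congrArg (wordEval · w) (funext fun _ => PresentedGroup.toGroup.of _)
  rw [← IsReduced.toClass_eq_iff (hv := hv) (hw := hw), ← hv.wordEval_genPerm hM,
    ← hw.wordEval_genPerm hM, ← hmap, ← hmap, h]

theorem WordEquiv.wordElt_eq (hM : IsLargeType M) (e : WordEquiv M v w) :
    wordElt n M v = wordElt n M w := by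
  induction e with
  | nil => rfl
  | cons a _ ih => exact congrArg (toGen n M a * ·) ih
  | move m v =>
    rw [wordElt_eq_wordEval, wordEval_append, wordEval_append, wordEval_eq_of_pairEval_eq hM
      (fun _ => altProd_gen m.left.ne) m.left.ne m.left.inPair m.right.inPair m.pairEval_eq]
  | trans _ _ ih₁ ih₂ => exact ih₁.trans ih₂

theorem genSet_eq_range : genSet n M = Set.range (toGen n M) := by
  ext g
  rw [Set.mem_range, Prod.exists]
  simp only [Bool.exists_bool]
  exact exists_congr fun i => or_comm.trans (or_congr eq_comm eq_comm)

theorem isGeodesic_iff :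
    IsGeodesic n M w ↔ letterLength (gen n M) (wordEval (gen n M) w) = w.length := by
  rw [IsGeodesic, genSet_eq_range]
  rfl

theorem IsGeodesic.tail {a : Letter n} (h : IsGeodesic n M (a :: w)) : IsGeodesic n M w := by
  rw [isGeodesic_iff] at h ⊢
  refine le_antisymm (letterLength_wordEval_le _ w) ?_
  have := h.symm.trans_le (letterLength_wordEval_append_le (gen n M) [a] w)
  simpa [add_comm] using this

theorem IsGeodesic.isReduced (hM : IsLargeType M) (h : IsGeodesic n M w) : IsReduced M w := by
  induction w with
  | nil => trivial
  | cons a w ih =>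
    refine ⟨ih h.tail, fun ⟨v, e⟩ => ?_⟩
    have heval : wordEval (gen n M) (a :: w) = wordEval (gen n M) v := by
      rw [wordEval_cons, ← wordElt_eq_wordEval, e.wordElt_eq hM, wordElt_eq_wordEval,
        wordEval_cons, letterEval_letterInv, mul_inv_cancel_left]
    have hle := letterLength_wordEval_le (gen n M) v
    have hlen := e.length_eq
    rw [← heval, isGeodesic_iff.1 h, List.length_cons] at hle
    rw [List.length_cons] at hlen
    omega

theorem isGeodesic_iff_isReduced (hM : IsLargeType M) : IsGeodesic n M w ↔ IsReduced M w := by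
  refine ⟨IsGeodesic.isReduced hM, fun h => isGeodesic_iff.2 ?_⟩
  obtain ⟨v, hlen, heval⟩ := exists_length_eq_letterLength (gen n M) w
  have hv : IsGeodesic n M v := isGeodesic_iff.2 (hlen ▸ congrArg _ heval)
  exact hlen.symm.trans ((hv.isReduced hM).wordEquiv hM h heval).length_eq

end Geodesic

/-! ### Tails -/

section FirstLetters

variable {ι : Type*} [LinearOrder ι] {M : ι → ι → ℕ∞} {t t' : ℕ} {i j : ι} {a b c : ι × Bool}
  {h v v' w w' : List (ι × Bool)}

theorem not_isFirstLetter_nil (a : ι × Bool) : ¬ IsFirstLetter M a [] :=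
  fun ⟨_, e⟩ => nomatch e.length_eq

theorem IsFirstLetter.eq_of_fst_eq (hM : IsLargeType M) (hw : IsReduced M w)
    (ha : IsFirstLetter M a w) (hb : IsFirstLetter M b w) (h : a.1 = b.1) : a = b := by
  obtain ⟨v, ea⟩ := ha
  obtain ⟨u, eb⟩ := hb
  cases (exchangeUpTo hM _ _ _ ⟨hw.congr hM ea, le_rfl⟩ (ea.symm.trans eb)).2 with
  | cons => rfl
  | move m => exact absurd h m.left.ne

theorem isReduced_replicate (hM : IsLargeType M) (a : ι × Bool) (r : ℕ) :
    IsReduced M (List.replicate r a) := by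
  induction r with
  | zero => trivial
  | succ r ih =>
    refine ⟨ih, fun ha => ?_⟩
    cases r with
    | zero => exact not_isFirstLetter_nil _ ha
    | succ r => exact letterInv_ne a (ha.eq_of_fst_eq hM ih (isFirstLetter_cons a _) rfl)

theorem PairGeodesic.isReduced_self (hM : IsLargeType M) (hw : PairGeodesic M i j w) :
    IsReduced M w := by
  simpa using hw.isReduced hM (v := []) trivial fun a _ => not_isFirstLetter_nil a

theorem StripPower.congr (s : StripPower M a t v w) (e : WordEquiv M v' v) :
    StripPower M a t v' w :=
  ⟨e.trans s.equiv, s.not_isFirstLetter⟩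

theorem StripPower.wordEquiv (hM : IsLargeType M) (hw : IsReduced M w) (s : StripPower M a t w v)
    (s' : StripPower M a t' w v') : WordEquiv M v v' := by
  induction t generalizing t' w with
  | zero =>
    cases t' with
    | zero => exact s.equiv.symm.trans s'.equiv
    | succ t' => exact absurd (s'.isFirstLetter.congr s.equiv) s.not_isFirstLetter
  | succ t ih =>
    cases t' with
    | zero => exact absurd (s.isFirstLetter.congr s'.equiv) s'.not_isFirstLetter
    | succ t' =>
      have hred := hw.congr hM s.equiv
      exact ih hred.1 ⟨.refl _, s.not_isFirstLetter⟩
        ⟨.of_cons hM hred (s.equiv.symm.trans s'.equiv), s'.not_isFirstLetter⟩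

theorem StripPower.fst_ne (hM : IsLargeType M) (hw : IsReduced M w)
    (s : StripPower M a (t + 1) w v) (hb : IsFirstLetter M b v) : a.1 ≠ b.1 := by
  intro hfst
  rcases eq_or_ne a b with rfl | hne
  · exact s.not_isFirstLetter hb
  · exact (hw.congr hM s.equiv).not_isFirstLetter_letterInv
      (List.getLast?_replicate.trans (if_neg t.succ_ne_zero))
      (eq_letterInv_of_fst_eq hfst hne ▸ hb)

theorem StripPower.noFirstLetterIn (hM : IsLargeType M) (hw : IsReduced M w)
    (s : StripPower M a (t + 1) w v) (ha : a.1 = i ∨ a.1 = j) (hc : IsFirstLetter M c w)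
    (hci : c.1 ≠ i) (hcj : c.1 ≠ j) : NoFirstLetterIn M i j v := by
  have hpair {d : ι × Bool} (hd : d.1 = i ∨ d.1 = j) : d.1 ≠ c.1 := by
    rcases hd with hd | hd
    exacts [hd ▸ hci.symm, hd ▸ hcj.symm]
  exact fun d hd hdv => s.not_isFirstLetter_of_ne hM (exchangeUpTo hM _) ⟨hw, le_rfl⟩ hc
    (s.fst_ne hM hw hdv).symm (hpair hd) (hpair ha) hdv

theorem PairSplit.pairLength_letterInv_cons_lt_of_isFirstLetter (hM : IsLargeType M) (hij : i ≠ j)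
    (hw : IsReduced M w) (s : PairSplit M i j w h v) (ha : a.1 = i ∨ a.1 = j)
    (haw : IsFirstLetter M a w) : pairLength M i j (letterInv a :: h) < pairLength M i j h := by
  obtain ⟨u, hu⟩ := haw
  obtain ⟨k, y, sk⟩ := exists_pairSplit M i j u
  have s' : PairSplit M i j w (a :: k) y :=
    (sk.append_left (u := [a]) (by simpa using ha)).congr hu
  have heval := (s.unique (exchangeUpTo hM _) ⟨hw, le_rfl⟩ s').1
  have hk := (hw.congr hM s'.equiv).pairGeodesic_of_append hM hij s'.inPair
  have heval' : pairEval M i j (letterInv a :: h) = pairEval M i j k :=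
    pairEval_letterInv_cons_eq_iff.2 heval
  rw [pairLength_congr heval', pairLength_congr heval, hk.length_eq]
  exact Nat.lt_succ_of_le (pairLength_le k)

theorem IsFirstLetter.ne_top (hM : IsLargeType M) (hw : IsReduced M w) (ha : IsFirstLetter M a w)
    (hb : IsFirstLetter M b w) (hab : a.1 ≠ b.1) : M a.1 b.1 ≠ ⊤ := by
  intro htop
  obtain ⟨h, v, s⟩ := exists_pairSplit M a.1 b.1 w
  exact hab (fst_eq_of_pairLength_cons_lt hM htop (a := letterInv a) (b := letterInv b)
    (.inl rfl) (.inr rfl)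
    (s.pairLength_letterInv_cons_lt_of_isFirstLetter hM hab hw (.inl rfl) ha)
    (s.pairLength_letterInv_cons_lt_of_isFirstLetter hM hab hw (.inr rfl) hb))

end FirstLetters

section Alternation

variable {ι : Type*} [LinearOrder ι] {M : ι → ι → ℕ∞} {k r t : ℕ} {i j p q : ι} {a b c : ι × Bool}
  {v v' w : List (ι × Bool)}

/-- The `(3,3,m)`-hypothesis on the Coxeter matrix of an Artin group. -/
def Hypothesis33m (M : ι → ι → ℕ∞) : Prop :=
  ¬ ∃ i j k, i ≠ j ∧ i ≠ k ∧ j ≠ k ∧ M i j = 3 ∧ M i k = 3 ∧ M j k < ⊤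

namespace AlternatesFrom

theorem congr (h : AlternatesFrom M k i j v) (e : WordEquiv M v' v) :
    AlternatesFrom M k i j v' := by
  cases k with
  | zero => trivial
  | succ k =>
    obtain ⟨d, t, w, hd, hs, hw⟩ := h
    exact ⟨d, t, w, hd, hs.congr e, hw⟩

theorem exists_isFirstLetter (h : AlternatesFrom M (k + 1) i j w) :
    ∃ d, d.1 = i ∧ IsFirstLetter M d w := by
  obtain ⟨d, t, _, hd, hs, -⟩ := h
  exact ⟨d, hd, hs.isFirstLetter⟩

theorem of_stripPower (hM : IsLargeType M) (hw : IsReduced M w)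
    (h : AlternatesFrom M (k + 1) a.1 j w) (s : StripPower M a (t + 1) w v) :
    AlternatesFrom M k j a.1 v := by
  obtain ⟨d, t', v', hd, s', h'⟩ := h
  obtain rfl := s'.isFirstLetter.eq_of_fst_eq hM hw s.isFirstLetter hd
  exact h'.congr (s.wordEquiv hM hw s')

theorem fst_eq (hM : IsLargeType M) (hw : IsReduced M w) (h : AlternatesFrom M 2 i j w)
    (hij : i ≠ j) (hc : IsFirstLetter M c w) (hcj : c.1 ≠ j) : c.1 = i := by
  obtain ⟨d, t, v, rfl, hs, hv⟩ := h
  obtain ⟨e, rfl, he⟩ := hv.exists_isFirstLetter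
  by_contra hcd
  exact hs.not_isFirstLetter_of_ne hM (exchangeUpTo hM _) ⟨hw, le_rfl⟩ hc hij.symm
    (Ne.symm hcj) (Ne.symm hcd) he

theorem ne_top (hM : IsLargeType M) (hw : IsReduced M w) (hi : AlternatesFrom M 2 p i w)
    (hj : AlternatesFrom M 2 p j w) (hij : i ≠ j) : M i j ≠ ⊤ := by
  obtain ⟨d, t, v, rfl, hs, hv⟩ := hi
  obtain ⟨e, rfl, he⟩ := hv.exists_isFirstLetter
  obtain ⟨f, rfl, hf⟩ := (hj.of_stripPower hM hw hs).exists_isFirstLetter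
  exact he.ne_top hM (hw.congr hM hs.equiv).suffix hf hij

theorem eq_of_three (hM : IsLargeType M) (hw : IsReduced M w) (hi : AlternatesFrom M 3 p i w)
    (hj : AlternatesFrom M 2 p j w) (hpi : p ≠ i) (hpj : p ≠ j) : i = j := by
  obtain ⟨d, t, v, rfl, hs, hv⟩ := hi
  obtain ⟨f, rfl, hf⟩ := (hj.of_stripPower hM hw hs).exists_isFirstLetter
  exact (hv.fst_eq hM (hw.congr hM hs.equiv).suffix hpi.symm hf hpj.symm).symm

theorem eq_of_hypothesis33m (hM : IsLargeType M) (h33 : Hypothesis33m M) (hw : IsReduced M w)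
    (hi : ∀ k : ℕ, k < M p i → AlternatesFrom M k p i w)
    (hj : ∀ k : ℕ, k < M q j → AlternatesFrom M k q j w)
    (hpi : p ≠ i) (hpj : p ≠ j) (hqi : q ≠ i) (hqj : q ≠ j) : i = j := by
  have two_lt {x y : ι} (hxy : x ≠ y) : ((2 : ℕ) : ℕ∞) < M x y :=
    lt_of_lt_of_le (by norm_num) (hM.three_le x y hxy)
  have three_lt {x y : ι} (hxy : x ≠ y) (hne : M x y ≠ 3) : ((3 : ℕ) : ℕ∞) < M x y :=
    lt_of_le_of_ne (hM.three_le x y hxy) hne.symm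
  obtain ⟨d, rfl, hd⟩ := (hj 2 (two_lt hqj)).exists_isFirstLetter
  obtain rfl := (hi 2 (two_lt hpi)).fst_eq hM hw hpi hd hqi
  by_contra hij
  refine h33 ⟨d.1, i, j, hpi, hpj, hij, by_contra fun hne => hij ?_, by_contra fun hne => hij ?_,
    ((hi 2 (two_lt hpi)).ne_top hM hw (hj 2 (two_lt hpj)) hij).lt_top⟩
  · exact (hi 3 (three_lt hpi hne)).eq_of_three hM hw (hj 2 (two_lt hpj)) hpi hpj
  · exact ((hj 3 (three_lt hpj hne)).eq_of_three hM hw (hi 2 (two_lt hpi)) hpj hpi).symm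

end AlternatesFrom

theorem IsFirstLetter.alternatesFrom_of_replicate_append (hM : IsLargeType M)
    (hw : IsReduced M (List.replicate (t + 1) a ++ v)) (ha : ¬ IsFirstLetter M a v)
    (hc : IsFirstLetter M c (List.replicate (t + 1) a ++ v)) (hca : c.1 ≠ a.1)
    (hk : k < M c.1 a.1) : AlternatesFrom M k c.1 a.1 v :=
  StripPower.alternatesFrom hM (exchangeUpTo hM _) ⟨hw, le_rfl⟩ ⟨.refl _, ha⟩ hc hca hk

theorem WordEquiv.eq_of_replicate (hM : IsLargeType M)
    (e : WordEquiv M (List.replicate (r + 1) a) (List.replicate t b)) : a = b := by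
  obtain rfl : r + 1 = t := by simpa using e.length_eq
  have ha : IsFirstLetter M a (List.replicate (r + 1) a) := isFirstLetter_cons a _
  have hb : IsFirstLetter M b (List.replicate (r + 1) a) := ⟨_, e⟩
  by_contra hne
  rcases eq_or_ne a.1 b.1 with hfst | hfst
  · exact hne (ha.eq_of_fst_eq hM (isReduced_replicate hM a _) hb hfst)
  · have hone : ((1 : ℕ) : ℕ∞) < M a.1 b.1 := lt_of_lt_of_le (by norm_num) (hM.three_le _ _ hfst)
    obtain ⟨d, -, hd⟩ := (IsFirstLetter.alternatesFrom_of_replicate_append hM (v := [])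
      (by simpa using isReduced_replicate hM b (r + 1)) (not_isFirstLetter_nil b)
      (by simpa using ha.congr e) hfst hone).exists_isFirstLetter
    exact not_isFirstLetter_nil d hd

end Alternation

section InverseWords

open FreeGroup (invRev)

theorem InPair.invRev {ι : Type*} {i j : ι} {w : List (ι × Bool)} (hw : InPair i j w) :
    InPair i j (invRev w) := by
  intro a ha
  obtain ⟨b, hb, rfl⟩ := List.mem_map.1 (List.mem_reverse.1 ha)
  exact hw b hb

variable {ι : Type*} [LinearOrder ι] {M : ι → ι → ℕ∞} {i j : ι} {a b : ι × Bool}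
  {v w : List (ι × Bool)}

theorem pairEval_invRev (w : List (ι × Bool)) :
    pairEval M i j (invRev w) = (pairEval M i j w)⁻¹ := by
  rw [pairEval, pairEval, ← wordEval_invRev]
  simp only [invRev, List.map_reverse, List.map_map]
  rfl

theorem PairGeodesic.invRev (hw : PairGeodesic M i j w) : PairGeodesic M i j (invRev w) :=
  ⟨hw.ne, hw.inPair.invRev, by
    rw [pairLength, pairEval_invRev, letterLength_inv, FreeGroup.invRev_length]
    exact hw.length_eq⟩

theorem DihedralMove.invRev (h : DihedralMove M i j v w) :
    DihedralMove M i j (invRev v) (invRev w) :=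
  ⟨h.left.invRev, h.right.invRev, by rw [pairEval_invRev, pairEval_invRev, h.pairEval_eq]⟩

theorem DihedralMove.fst_ne_of_concat (hM : IsLargeType M)
    (h : DihedralMove M i j (v ++ [a]) (w ++ [b])) (hab : a ≠ b) : a.1 ≠ b.1 := by
  have h' := h.invRev
  rw [FreeGroup.invRev_append, FreeGroup.invRev_append] at h'
  exact DihedralMove.fst_ne hM (a := letterInv a) (b := letterInv b) h'
    fun e => hab (by rw [← letterInv_letterInv a, e, letterInv_letterInv])

end InverseWords

section Tail

variable {ι : Type*} [LinearOrder ι] {M : ι → ι → ℕ∞} {i j : ι} {a b : ι × Bool} {r t : ℕ}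
  {h v u u' w : List (ι × Bool)}

/-- For a word that rewrites to `h ++ v`, with `h` its maximal head in the letters `x_i^{±1}` and
`x_j^{±1}`: the geodesic `h` is `u * a ^ (r + 1)`, and a letter outside the pair can be moved in
front of `a ^ (r + 1) * v`, so that a geodesic word for `h * v` may start with `u` only. -/
structure IsTail (M : ι → ι → ℕ∞) (i j : ι) (h v u : List (ι × Bool)) (a : ι × Bool) (r : ℕ) :
    Prop where
  move : DihedralMove M i j h (u ++ List.replicate (r + 1) a)
  exists_isFirstLetter :
    ∃ c : ι × Bool, c.1 ≠ i ∧ c.1 ≠ j ∧ IsFirstLetter M c (List.replicate (r + 1) a ++ v)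

theorem PairSplit.pairEval_eq_or_isTail (hM : IsLargeType M) (hij : i ≠ j)
    (hw : IsReduced M (u ++ w)) (s : PairSplit M i j (u ++ w) h v) (hu : InPair i j u)
    (hhead : ∀ c ∈ w.head?, c.1 ≠ i ∧ c.1 ≠ j) :
    pairEval M i j h = pairEval M i j u ∨ ∃ a r, IsTail M i j h v u a r := by
  have split_unique {h' v'} (s' : PairSplit M i j (u ++ w) h' v') :=
    s.unique (exchangeUpTo hM _) ⟨hw, le_rfl⟩ s'
  by_cases hfirst : NoFirstLetterIn M i j w
  · exact .inl (split_unique ⟨.refl _, hu, hfirst⟩).1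
  · simp only [NoFirstLetterIn, not_forall, not_not] at hfirst
    obtain ⟨a, ha, haw⟩ := hfirst
    obtain ⟨c, w', rfl⟩ := List.exists_cons_of_ne_nil (l := w) fun hnil =>
      not_isFirstLetter_nil a (hnil ▸ haw)
    obtain ⟨hci, hcj⟩ := hhead c rfl
    obtain ⟨r, v', hs⟩ := haw.exists_stripPower
    have s' : PairSplit M i j (u ++ c :: w') (u ++ List.replicate (r + 1) a) v' :=
      ⟨by simpa using hs.equiv.append_left u, inPair_append.2 ⟨hu, inPair_replicate ha _⟩,
        hs.noFirstLetterIn hM hw.suffix ha (isFirstLetter_cons c w') hci hcj⟩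
    obtain ⟨heval, hequiv⟩ := split_unique s'
    exact .inr ⟨a, r, ⟨(hw.congr hM s.equiv).pairGeodesic_of_append hM hij s.inPair,
      (hw.congr hM s'.equiv).pairGeodesic_of_append hM hij s'.inPair, heval⟩, c, hci, hcj,
      (isFirstLetter_cons c w').congr (hs.equiv.trans (hequiv.symm.append_left _))⟩

namespace IsTail

theorem fst_eq_or (hT : IsTail M i j h v u a r) : a.1 = i ∨ a.1 = j :=
  hT.move.right.inPair a (by simp)

theorem lt_length (hT : IsTail M i j h v u a r) : r < h.length := by
  have := hT.move.length_eq
  simp only [List.length_append, List.length_replicate] at this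
  omega

theorem alternatesFrom (hM : IsLargeType M) (hv : IsReduced M v) (hd : NoFirstLetterIn M i j v)
    (hT : IsTail M i j h v u a r) :
    ∃ p, p ≠ i ∧ p ≠ j ∧ ∀ k : ℕ, k < M p a.1 → AlternatesFrom M k p a.1 v := by
  obtain ⟨c, hci, hcj, hc⟩ := hT.exists_isFirstLetter
  have hca : c.1 ≠ a.1 := by
    rcases hT.fst_eq_or with ha | ha
    exacts [ha ▸ hci, ha ▸ hcj]
  exact ⟨c.1, hci, hcj, fun k hk => hc.alternatesFrom_of_replicate_append hM
    (hT.move.right.suffix.isReduced hM hv hd) (hd a hT.fst_eq_or) hca hk⟩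

theorem eq (hM : IsLargeType M) (h33 : Hypothesis33m M) (hv : IsReduced M v)
    (hd : NoFirstLetterIn M i j v) (hT : IsTail M i j h v u a r) (hT' : IsTail M i j h v u' b t) :
    a = b := by
  have hfst : a.1 = b.1 := by
    obtain ⟨p, hpi, hpj, hp⟩ := hT.alternatesFrom hM hv hd
    obtain ⟨q, hqi, hqj, hq⟩ := hT'.alternatesFrom hM hv hd
    by_contra hab
    rcases eq_and_eq_or_of_fst_ne hT.fst_eq_or hT'.fst_eq_or hab with ⟨rfl, rfl⟩ | ⟨rfl, rfl⟩
    · exact hab (AlternatesFrom.eq_of_hypothesis33m hM h33 hv hp hq hpi hpj hqi hqj)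
    · exact hab (AlternatesFrom.eq_of_hypothesis33m hM h33 hv hp hq hpj hpi hqj hqi)
  by_contra hab
  have hmove : DihedralMove M i j ((u ++ List.replicate r a) ++ [a])
      ((u' ++ List.replicate t b) ++ [b]) := by
    simpa [← List.replicate_succ'] using
      (⟨hT.move.right, hT'.move.right, hT.move.pairEval_eq.symm.trans hT'.move.pairEval_eq⟩ :
        DihedralMove M i j _ _)
  exact hmove.fst_ne_of_concat hM hab hfst

end IsTail

end Tail

/-! ### Maximal left divisors -/

section LeftDivisors

variable {n r t : ℕ} {M : Fin n → Fin n → ℕ∞} {i j : Fin n} {a b : Letter n} {g d : ArtinGroup n M}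
  {h u v w : List (Letter n)}

theorem exists_isGeodesic (g : ArtinGroup n M) : ∃ w, IsGeodesic n M w ∧ wordElt n M w = g := by
  obtain ⟨w, -, rfl⟩ := exists_wordEval_eq_of_mem_closure (u := gen n M) (s := Set.univ) (g := g)
    (by rw [Set.image_univ]; exact PresentedGroup.closure_range_of _ ▸ Subgroup.mem_top g)
  obtain ⟨v, hlen, hv⟩ := exists_length_eq_letterLength (gen n M) w
  exact ⟨v, isGeodesic_iff.2 (hlen ▸ congrArg _ hv), hv⟩

theorem mem_Gij_iff : g ∈ Gij n M i j ↔ ∃ w, InPair i j w ∧ wordElt n M w = g := by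
  rw [Gij, ← Set.image_pair]
  exact ⟨exists_wordEval_eq_of_mem_closure, fun ⟨w, hw, e⟩ =>
    e ▸ wordEval_mem_closure hw⟩

theorem mem_lettersIJ_iff :
    g ∈ lettersIJ n M i j ↔ ∃ a : Letter n, (a.1 = i ∨ a.1 = j) ∧ toGen n M a = g := by
  constructor
  · rintro (rfl | rfl | rfl | rfl)
    exacts [⟨(i, true), .inl rfl, rfl⟩, ⟨(i, false), .inl rfl, rfl⟩, ⟨(j, true), .inr rfl, rfl⟩,
      ⟨(j, false), .inr rfl, rfl⟩]
  · rintro ⟨⟨k, s⟩, rfl | rfl, rfl⟩ <;> cases s <;> simp [lettersIJ, toGen]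

theorem lettersIJ_subset_Gij : lettersIJ n M i j ⊆ Gij n M i j := by
  intro g hg
  obtain ⟨a, ha, rfl⟩ := mem_lettersIJ_iff.1 hg
  exact mem_Gij_iff.2 ⟨[a], by simpa using ha, by simp [wordElt]⟩

theorem wordElt_append (v w : List (Letter n)) :
    wordElt n M (v ++ w) = wordElt n M v * wordElt n M w :=
  wordEval_append _ v w

theorem wordElt_eq_of_pairEval_eq (hM : IsLargeType M) (hij : i ≠ j) (hv : InPair i j v)
    (hw : InPair i j w) (h : pairEval M i j v = pairEval M i j w) :
    wordElt n M v = wordElt n M w :=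
  wordEval_eq_of_pairEval_eq hM (fun _ => altProd_gen hij) hij hv hw h

theorem toGen_eq_of_pow_eq (hM : IsLargeType M) (h : toGen n M a ^ (r + 1) = toGen n M b ^ t) :
    a = b := by
  refine WordEquiv.eq_of_replicate hM ((isReduced_replicate hM a (r + 1)).wordEquiv hM
    (isReduced_replicate hM b t) ?_)
  rwa [wordElt_eq_wordEval, wordEval_replicate, wordEval_replicate]

theorem isLeftDiv_wordElt_append_iff (hv : IsGeodesic n M v) (hw : IsGeodesic n M w) :
    IsLeftDiv (ℓA n M) (wordElt n M v) (wordElt n M (v ++ w)) ↔ IsGeodesic n M (v ++ w) := by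
  have hv : ℓA n M (wordElt n M v) = v.length := hv
  have hw : ℓA n M (wordElt n M w) = w.length := hw
  rw [IsLeftDiv, wordElt_append, inv_mul_cancel_left, hv, hw, ← wordElt_append,
    ← List.length_append, eq_comm]
  rfl

theorem inPair_ijPrefix (i j : Fin n) (w : List (Letter n)) : InPair i j (ijPrefix n i j w) :=
  fun _ ha => by simpa using List.mem_takeWhile_imp ha

theorem exists_eq_ijPrefix_append (i j : Fin n) (w : List (Letter n)) :
    ∃ v, w = ijPrefix n i j w ++ v ∧ ∀ c ∈ v.head?, c.1 ≠ i ∧ c.1 ≠ j := by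
  refine ⟨_, List.takeWhile_append_dropWhile.symm, fun c hc => ?_⟩
  have := List.head?_dropWhile_not (fun l : Letter n => l.1 == i || l.1 == j) w
  rw [Option.mem_def.1 hc] at this
  simpa using this

theorem IsMaxLD.exists_pairSplit (hM : IsLargeType M) (hij : i ≠ j) (hd : IsMaxLD n M i j g d) :
    ∃ h v, InPair i j h ∧ NoFirstLetterIn M i j v ∧ IsReduced M (h ++ v) ∧ wordElt n M h = d ∧
      wordElt n M (h ++ v) = g := by
  obtain ⟨hmem, hdiv, hmax⟩ := hd
  obtain ⟨w, hw, rfl⟩ := mem_Gij_iff.1 hmem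
  obtain ⟨h, hh, heval⟩ := exists_pairGeodesic M hij w
  rw [wordElt_eq_of_pairEval_eq hM hij hw hh.inPair heval.symm] at hdiv hmax ⊢
  obtain ⟨v, hv, hvg⟩ := exists_isGeodesic ((wordElt n M h)⁻¹ * g)
  obtain rfl : wordElt n M (h ++ v) = g := by rw [wordElt_append, hvg, mul_inv_cancel_left]
  have geodesic_iff {w} := isGeodesic_iff_isReduced (n := n) (w := w) hM
  have hhgeod := geodesic_iff.2 (hh.isReduced_self hM)
  have hred := geodesic_iff.1 ((isLeftDiv_wordElt_append_iff hhgeod hv).1 hdiv)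
  refine ⟨h, v, hh.inPair, fun a ha ⟨u, e⟩ => ?_, hred, rfl, rfl⟩
  have e' : WordEquiv M (h ++ v) ((h ++ [a]) ++ u) := by simpa using e.append_left h
  have hpair : InPair i j (h ++ [a]) := inPair_append.2 ⟨hh.inPair, by simpa using ha⟩
  have hred' := hred.congr hM e'
  have hageod := geodesic_iff.2 ((hred'.pairGeodesic_of_append hM hij hpair).isReduced_self hM)
  have hle := hmax _ (mem_Gij_iff.2 ⟨_, hpair, rfl⟩) <| e'.wordElt_eq hM ▸
    (isLeftDiv_wordElt_append_iff hageod (geodesic_iff.2 hred'.suffix)).2 (geodesic_iff.2 hred')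
  have hlen : ℓA n M (wordElt n M h) = h.length := hhgeod
  have hlen' : ℓA n M (wordElt n M (h ++ [a])) = (h ++ [a]).length := hageod
  rw [hlen, hlen', List.length_append, List.length_singleton] at hle
  omega

theorem wordElt_ijPrefix_eq_or_isTail (hM : IsLargeType M) (hij : i ≠ j) (hh : InPair i j h)
    (hv : NoFirstLetterIn M i j v) (hR : IsReduced M (h ++ v)) (hw : IsGeodesic n M w)
    (hwg : wordElt n M w = wordElt n M (h ++ v)) :
    wordElt n M (ijPrefix n i j w) = wordElt n M h ∨
      ∃ a r, IsTail M i j h v (ijPrefix n i j w) a r := by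
  have hw := (isGeodesic_iff_isReduced hM).1 hw
  have s : PairSplit M i j w h v := ⟨hw.wordEquiv hM hR hwg, hh, hv⟩
  have hu := inPair_ijPrefix i j w
  obtain ⟨w', hw', hhead⟩ := exists_eq_ijPrefix_append i j w
  rw [hw'] at hw s
  exact (s.pairEval_eq_or_isTail hM hij hw hu hhead).imp_left fun h =>
    (wordElt_eq_of_pairEval_eq hM hij s.inPair hu h).symm

theorem IsTail.wordElt_eq (hM : IsLargeType M) (hT : IsTail M i j h v u a r) :
    wordElt n M h = wordElt n M u * toGen n M a ^ (r + 1) := by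
  rw [wordElt_eq_of_pairEval_eq hM hT.move.left.ne hT.move.left.inPair hT.move.right.inPair
    hT.move.pairEval_eq, wordElt_append, wordElt_eq_wordEval, wordEval_replicate,
    toGen_eq_letterEval]

theorem IsTail.wordElt_eq_mul_pow (hM : IsLargeType M) (hT : IsTail M i j h v u a r) :
    wordElt n M u =
      wordElt n M h * (toGen n M a ^ h.length)⁻¹ * toGen n M a ^ (h.length - (r + 1)) := by
  rw [pow_sub _ hT.lt_length, ← mul_assoc, inv_mul_cancel_right, hT.wordElt_eq hM,
    mul_inv_cancel_right]

end LeftDivisors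

/-- **Proposition.** In an Artin group of large type satisfying the (3,3,m)-hypothesis,
for `g ∈ G` and `i ≠ j`, either every geodesic word representing `g` has a prefix
representing `LD_{ij}(g)`, or there is a unique letter `a ∈ {x_i^{±1},x_j^{±1}}` and an
element `h' ∈ G(i,j)` such that for every geodesic representative, with `u` the element
of the maximal `{x_i,x_j}`-prefix, one has `LD_{ij}(g) = u a^r` and `u = h' a^s`. -/
theorem onetail
    (n : ℕ) (hn : 2 ≤ n) (M : Fin n → Fin n → ℕ∞)
    (hsymm : ∀ i j, M i j = M j i)
    (hdiag : ∀ i, M i i = 1)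
    (hlarge : ∀ i j, i ≠ j → 3 ≤ M i j)
    (h33m : ¬ ∃ i j k : Fin n, i ≠ j ∧ i ≠ k ∧ j ≠ k ∧
        M i j = 3 ∧ M i k = 3 ∧ M j k < ⊤)
    (g : ArtinGroup n M) (i j : Fin n) (hij : i ≠ j)
    (LD : ArtinGroup n M) (hLD : IsMaxLD n M i j g LD) :
    (∀ w : List (Letter n), IsGeodesic n M w → wordElt n M w = g →
        ∃ u, u <+: w ∧ wordElt n M u = LD) ∨
    (∃ a ∈ lettersIJ n M i j,
      (∃ h' ∈ Gij n M i j, ∀ w : List (Letter n), IsGeodesic n M w → wordElt n M w = g →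
          ∃ r s : ℕ, LD = wordElt n M (ijPrefix n i j w) * a ^ r ∧
            wordElt n M (ijPrefix n i j w) = h' * a ^ s) ∧
      (∀ a' ∈ lettersIJ n M i j,
        (∃ h' ∈ Gij n M i j, ∀ w : List (Letter n), IsGeodesic n M w → wordElt n M w = g →
            ∃ r s : ℕ, LD = wordElt n M (ijPrefix n i j w) * a' ^ r ∧
              wordElt n M (ijPrefix n i j w) = h' * a' ^ s) → a' = a)) := by
  have hM : IsLargeType M := ⟨hsymm, hlarge⟩
  obtain ⟨h, v, hh, hv, hR, rfl, rfl⟩ := hLD.exists_pairSplit hM hij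
  have prefix_eq_or_isTail {w} := wordElt_ijPrefix_eq_or_isTail (w := w) hM hij hh hv hR
  by_cases hprefix : ∀ w, IsGeodesic n M w → wordElt n M w = wordElt n M (h ++ v) →
      wordElt n M (ijPrefix n i j w) = wordElt n M h
  · exact .inl fun w hw hwg => ⟨_, List.takeWhile_prefix _, hprefix w hw hwg⟩
  push Not at hprefix
  obtain ⟨w₀, hw₀, hg₀, hne⟩ := hprefix
  obtain ⟨a, r₀, hT₀⟩ := (prefix_eq_or_isTail hw₀ hg₀).resolve_left hne
  have ha : toGen n M a ∈ lettersIJ n M i j := mem_lettersIJ_iff.2 ⟨a, hT₀.fst_eq_or, rfl⟩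
  refine .inr ⟨toGen n M a, ha, ⟨wordElt n M h * (toGen n M a ^ h.length)⁻¹,
    mul_mem hLD.1 (inv_mem (pow_mem (lettersIJ_subset_Gij ha) _)), fun w hw hwg => ?_⟩, ?_⟩
  · obtain heq | ⟨b, r, hT⟩ := prefix_eq_or_isTail hw hwg
    · exact ⟨0, h.length, by simp [heq], by simp [heq]⟩
    · obtain rfl := hT₀.eq hM h33m hR.suffix hv hT
      exact ⟨r + 1, h.length - (r + 1), hT.wordElt_eq hM, hT.wordElt_eq_mul_pow hM⟩
  · rintro _ hb ⟨_, -, hb'⟩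
    obtain ⟨b, -, rfl⟩ := mem_lettersIJ_iff.1 hb
    obtain ⟨r, -, hr, -⟩ := hb' w₀ hw₀ hg₀
    rw [hT₀.wordElt_eq hM, mul_right_inj] at hr
    rw [toGen_eq_of_pow_eq hM hr]

end ArtinRD
end

section
/- Let m ≥ 2 and let g, h ∈ DA(m) and i ∈ {1,2} be such that gh lies in the cyclic subgroup ⟨x_i⟩. Then there exist w ∈ DA(m) and integers s, t such that g = x_i^s w with ℓ(g) = |s| + ℓ(w), and h = w^{-1} x_i^t with ℓ(h) = ℓ(w) + |t|. -/
namespace ArtinRD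

/-- The Coxeter matrix of the dihedral Artin group `DA(m)`. -/
def DMat (m : ℕ) : Fin 2 → Fin 2 → ℕ∞ := fun i j => if i = j then 1 else (m : ℕ∞)

/-- The dihedral Artin group `DA(m) = ⟨x₁, x₂ ∣ ₘ(x₁,x₂) = ₘ(x₂,x₁)⟩`. -/
abbrev DA (m : ℕ) : Type := ArtinGroup 2 (DMat m)

/-- The word length on `DA(m)` with respect to `{x₁^{±1}, x₂^{±1}}`. -/
noncomputable def ℓD (m : ℕ) : DA m → ℕ := ℓA 2 (DMat m)

/-- The Garside element `Δ = ₘ(x₁,x₂)` of `DA(m)`. -/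
def Delta (m : ℕ) : DA m := altProd m (gen 2 (DMat m) 0) (gen 2 (DMat m) 1)

/-- A positive element of `DA(m)`: a product of the generators. -/
def posElt (m : ℕ) (g : DA m) : Prop :=
  g ∈ Submonoid.closure ({gen 2 (DMat m) 0, gen 2 (DMat m) 1} : Set (DA m))

/-- A negative element of `DA(m)`: a product of the inverses of the generators. -/
def negElt (m : ℕ) (g : DA m) : Prop :=
  g ∈ Submonoid.closure ({(gen 2 (DMat m) 0)⁻¹, (gen 2 (DMat m) 1)⁻¹} : Set (DA m))

/-- `k` is the largest exponent such that `Δ^k` is a left divisor of `g`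
(i.e. `d(g) = k` for a positive element `g`). -/
def IsMaxDeltaPow (m : ℕ) (k : ℕ) (g : DA m) : Prop :=
  IsLeftDiv (ℓD m) (Delta m ^ k) g ∧ ∀ k' : ℕ, IsLeftDiv (ℓD m) (Delta m ^ k') g → k' ≤ k

/-- `k` is the largest exponent such that `Δ^{-k}` is a left divisor of `g`
(i.e. `d(g) = k` for a negative element `g`). -/
def IsMaxNegDeltaPow (m : ℕ) (k : ℕ) (g : DA m) : Prop :=
  IsLeftDiv (ℓD m) ((Delta m)⁻¹ ^ k) g ∧
    ∀ k' : ℕ, IsLeftDiv (ℓD m) ((Delta m)⁻¹ ^ k') g → k' ≤ k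

/-!
Let `σ` be the automorphism of `DA(m)` exchanging the two generators and put `u = x₁ σ` in
`DA(m) ⋊ ⟨σ⟩`. Then `x₁ = u σ`, `x₂ = σ u`, and the defining relation of `DA(m)` says exactly that
`u ^ m` commutes with `σ`. Elements of `DA(m)` therefore have normal forms
`u ^ n σ u ^ a₁ σ u ^ a₂ σ ⋯` with `0 < aⱼ < m`, up to a factor `σ` on the right, and the word
length is the least number of letters `u ^ ±1` needed, `σ` being free of charge.

For `0 ≤ T ≤ m` let `φ_T` be the sum over the exponents of a normal form of the function that
vanishes at `0` and has slope `1` at the residues `< T` modulo `m` and slope `-1` at the others.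
Each `φ_T` is `1`-Lipschitz, hence a lower bound for the length, and shifting multiples of `m`
between the exponents until the sum of their absolute values is minimal shows that the length is
the maximum of the `φ_T`. Each `φ_T` is convex along `s ↦ x_i ^ s g`, hence so is the length. As
the length changes by exactly `1` at each step, it is of the form `C + |s - c|` along this line,
which contains both `g` and `h⁻¹`. The element `w = x_i ^ c g` at its minimum is the common
remainder.
-/

/-! ### Word length -/

section WordLength

variable {G : Type*} [Group G] {S : Set G}

theorem wordLength_prod_le {w : List G} (hw : ∀ a ∈ w, a ∈ S) : wordLength S w.prod ≤ w.length :=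
  Nat.sInf_le ⟨w, hw, rfl, rfl⟩

theorem wordLength_one (S : Set G) : wordLength S 1 = 0 :=
  Nat.le_zero.1 (wordLength_prod_le (w := []) (by simp))

theorem wordLength_le_one {a : G} (ha : a ∈ S) : wordLength S a ≤ 1 := by
  simpa using wordLength_prod_le (w := [a]) (by simpa using ha)

theorem exists_list_length_eq_wordLength (hS : Submonoid.closure S = ⊤) (g : G) :
    ∃ w : List G, (∀ a ∈ w, a ∈ S) ∧ w.length = wordLength S g ∧ w.prod = g := by
  have hg : g ∈ Submonoid.closure S := hS ▸ Submonoid.mem_top g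
  obtain ⟨w, hw, hprod⟩ := Submonoid.exists_list_of_mem_closure hg
  exact Nat.sInf_mem (s := {N | ∃ w : List G, (∀ a ∈ w, a ∈ S) ∧ w.length = N ∧ w.prod = g})
    ⟨w.length, w, hw, rfl, hprod⟩

theorem wordLength_mul_le (hS : Submonoid.closure S = ⊤) (g h : G) :
    wordLength S (g * h) ≤ wordLength S g + wordLength S h := by
  obtain ⟨v, hv, hv_length, rfl⟩ := exists_list_length_eq_wordLength hS g
  obtain ⟨w, hw, hw_length, rfl⟩ := exists_list_length_eq_wordLength hS h
  rw [← hv_length, ← hw_length, ← List.prod_append, ← List.length_append]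
  exact wordLength_prod_le (List.forall_mem_append.2 ⟨hv, hw⟩)

theorem wordLength_map_le {H : Type*} [Group H] {R : Set H} (hS : Submonoid.closure S = ⊤)
    (f : G →* H) (hf : ∀ a ∈ S, f a ∈ R) (g : G) : wordLength R (f g) ≤ wordLength S g := by
  obtain ⟨w, hw, hw_length, rfl⟩ := exists_list_length_eq_wordLength hS g
  rw [← hw_length, map_list_prod, ← List.length_map f]
  exact wordLength_prod_le (List.forall_mem_map.2 fun a ha => hf a (hw a ha))

theorem wordLength_inv_le (hS : Submonoid.closure S = ⊤) (hinv : ∀ a ∈ S, a⁻¹ ∈ S) (g : G) :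
    wordLength S g⁻¹ ≤ wordLength S g := by
  obtain ⟨w, hw, hw_length, rfl⟩ := exists_list_length_eq_wordLength hS g
  rw [← hw_length, List.prod_inv_reverse, ← List.length_map (fun a => a⁻¹), ← List.length_reverse]
  exact wordLength_prod_le (by simpa using fun a ha => hinv a⁻¹ (hw _ ha))

theorem wordLength_inv (hS : Submonoid.closure S = ⊤) (hinv : ∀ a ∈ S, a⁻¹ ∈ S) (g : G) :
    wordLength S g⁻¹ = wordLength S g :=
  (wordLength_inv_le hS hinv g).antisymm (by simpa using wordLength_inv_le hS hinv g⁻¹)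

theorem le_wordLength (hS : Submonoid.closure S = ⊤) {F : G → ℤ} (hone : F 1 ≤ 0)
    (hmul : ∀ a ∈ S, ∀ g, F (a * g) ≤ F g + 1) (g : G) : F g ≤ wordLength S g := by
  obtain ⟨w, hw, hw_length, rfl⟩ := exists_list_length_eq_wordLength hS g
  rw [← hw_length]
  clear hw_length
  induction w with
  | nil => simpa using hone
  | cons a w ih =>
    obtain ⟨ha, hw⟩ := List.forall_mem_cons.1 hw
    have hstep := hmul a ha w.prod
    have hw_le := ih hw
    rw [List.prod_cons, List.length_cons]
    push_cast
    linarith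

theorem map_eq_ofAdd_wordLength (hS : Submonoid.closure S = ⊤) {A : Type*} [AddMonoidWithOne A]
    {f : G →* Multiplicative A} (hf : ∀ a ∈ S, f a = Multiplicative.ofAdd 1) (g : G) :
    f g = Multiplicative.ofAdd (wordLength S g : A) := by
  obtain ⟨w, hw, hw_length, rfl⟩ := exists_list_length_eq_wordLength hS g
  rw [← hw_length, map_list_prod, List.map_eq_replicate_iff.2 fun a ha => hf a (hw a ha),
    List.prod_replicate, ← ofAdd_nsmul, nsmul_one]

end WordLength

section Artin

variable {n : ℕ} {M : Fin n → Fin n → ℕ∞}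

theorem gen_mem_genSet (i : Fin n) : gen n M i ∈ genSet n M := ⟨i, .inl rfl⟩

theorem inv_mem_genSet {a : ArtinGroup n M} (ha : a ∈ genSet n M) : a⁻¹ ∈ genSet n M := by
  obtain ⟨i, rfl | rfl⟩ := ha
  exacts [⟨i, .inr rfl⟩, ⟨i, .inl (inv_inv _)⟩]

theorem submonoid_closure_genSet : Submonoid.closure (genSet n M) = ⊤ := by
  have hinv : (genSet n M)⁻¹ = genSet n M :=
    Set.ext fun a => ⟨fun ha => inv_inv a ▸ inv_mem_genSet ha, inv_mem_genSet⟩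
  have hrange : Set.range PresentedGroup.of ⊆ genSet n M := by
    rintro _ ⟨i, rfl⟩
    exact gen_mem_genSet i
  have htop : Subgroup.closure (genSet n M) = ⊤ :=
    top_unique (PresentedGroup.closure_range_of (artinRels n M) ▸ Subgroup.closure_mono hrange)
  rw [← Set.union_self (genSet n M), ← congrArg (genSet n M ∪ ·) hinv,
    ← Subgroup.closure_toSubmonoid, htop, Subgroup.top_toSubmonoid]

end Artin

/-! ### Functions on the integers -/

theorem eq_add_of_two_mul_le {f : ℕ → ℕ} (hstep : ∀ n, f (n + 1) = f n + 1 ∨ f n = f (n + 1) + 1)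
    (hconvex : ∀ n, 2 * f (n + 1) ≤ f (n + 1 + 1) + f n) (hzero : f 0 ≤ f 1) (n : ℕ) :
    f n = f 0 + n := by
  have hsucc (n : ℕ) : f (n + 1) = f n + 1 := by
    induction n with
    | zero => exact (hstep 0).resolve_right (Nat.lt_succ_of_le hzero).ne
    | succ n ih => exact (hstep (n + 1)).resolve_right (by have := hconvex n; omega)
  induction n with
  | zero => rfl
  | succ n ih => rw [hsucc, ih, add_assoc]

theorem exists_eq_add_natAbs_sub {f : ℤ → ℕ}
    (hstep : ∀ s, f (s + 1) = f s + 1 ∨ f s = f (s + 1) + 1)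
    (hconvex : ∀ s, 2 * f s ≤ f (s + 1) + f (s - 1)) :
    ∃ c, ∀ s, f s = f c + (s - c).natAbs := by
  obtain ⟨c, hc⟩ : ∃ c, ∀ s, f c ≤ f s := ⟨Function.argmin f, fun s => Function.argmin_le f s⟩
  have hright (n : ℕ) : f (c + n) = f c + n := by
    simpa using eq_add_of_two_mul_le (f := fun n => f (c + n))
      (by grind) (by grind) (by simpa using hc (c + 1)) n
  have hleft (n : ℕ) : f (c - n) = f c + n := by
    simpa using eq_add_of_two_mul_le (f := fun n => f (c - n))
      (by grind) (by grind) (by simpa using hc (c - 1)) n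
  refine ⟨c, fun s => ?_⟩
  obtain ⟨n, hn | hn⟩ := (s - c).eq_nat_or_neg
  · rw [hn, Int.natAbs_natCast, ← hright, ← hn, add_sub_cancel]
  · rw [hn, Int.natAbs_neg, Int.natAbs_natCast, ← hleft, sub_eq_add_neg, ← hn, add_sub_cancel]

/-- The piecewise linear function on `ℤ` vanishing at `0`, with slope `1` at the integers whose
residue modulo `m` is less than `T` and slope `-1` at the others. -/
def zigzag (m T n : ℤ) : ℤ := (2 * T - m) * (n / m) + min (n % m) (2 * T - n % m)

section Zigzag

variable {m T : ℤ}

theorem zigzag_add_mul (hm : m ≠ 0) (n q : ℤ) :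
    zigzag m T (n + m * q) = zigzag m T n + (2 * T - m) * q := by
  simp only [zigzag, Int.add_mul_ediv_left n q hm, Int.add_mul_emod_self_left]
  ring

theorem zigzag_of_mem_Ico {n : ℤ} (hn : n ∈ Set.Ico 0 m) :
    zigzag m T n = min n (2 * T - n) := by
  simp [zigzag, Int.ediv_eq_zero_of_lt hn.1 hn.2, Int.emod_eq_of_lt hn.1 hn.2]

theorem zigzag_mul (hm : 0 < m) (hT : 0 ≤ T) (q : ℤ) : zigzag m T (m * q) = (2 * T - m) * q := by
  have hzero : zigzag m T 0 = 0 := by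
    rw [zigzag_of_mem_Ico ⟨le_rfl, hm⟩]
    omega
  simpa [hzero] using zigzag_add_mul (T := T) hm.ne' 0 q

theorem zigzag_mul_add (hm : 0 < m) (hT : 0 ≤ T) (q n : ℤ) :
    zigzag m T (m * q + n) = zigzag m T (m * q) + zigzag m T n := by
  rw [add_comm, zigzag_add_mul hm.ne', zigzag_mul hm hT, add_comm]

theorem zigzag_add_one (hm : 0 < m) (hT : T ∈ Set.Icc 0 m) (n : ℤ) :
    zigzag m T (n + 1) = zigzag m T n + if n % m < T then 1 else -1 := by
  obtain ⟨hT₀, hTm⟩ := hT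
  have hr₀ := Int.emod_nonneg n hm.ne'
  have hrm := Int.emod_lt_of_pos n hm
  have hn : zigzag m T n = (2 * T - m) * (n / m) + min (n % m) (2 * T - n % m) := rfl
  obtain hr | hr : n % m + 1 < m ∨ n % m + 1 = m := by omega
  · have hn' : n + 1 = n % m + 1 + m * (n / m) := by linarith [Int.emod_add_mul_ediv n m]
    rw [hn, hn', zigzag_add_mul hm.ne', zigzag_of_mem_Ico ⟨by omega, hr⟩]
    split_ifs <;> omega
  · have hn' : n + 1 = m * (n / m + 1) := by linarith [Int.emod_add_mul_ediv n m]
    rw [hn, hn', zigzag_mul hm hT₀, mul_add, mul_one]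
    split_ifs <;> omega

theorem zigzag_self (m n : ℤ) (hm : 0 < m) : zigzag m m n = n := by
  have hr := Int.emod_lt_of_pos n hm
  rw [zigzag, min_eq_left (by omega)]
  linarith [Int.emod_add_mul_ediv n m]

theorem zigzag_zero (m n : ℤ) (hm : 0 < m) : zigzag m 0 n = -n := by
  have hr := Int.emod_nonneg n hm.ne'
  rw [zigzag, min_eq_right (by omega)]
  linarith [Int.emod_add_mul_ediv n m]

theorem zigzag_eq_abs (hT : 0 ≤ T) {n : ℤ} (hn : n ∈ Set.Ico (T - m) m) (hnT : n ≤ T) :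
    zigzag m T n = |n| := by
  obtain ⟨hn₁, hn₂⟩ := hn
  obtain hn₀ | hn₀ := le_or_gt 0 n
  · rw [zigzag_of_mem_Ico ⟨hn₀, hn₂⟩, abs_of_nonneg hn₀]
    omega
  · have hshift := zigzag_add_mul (T := T) (by omega : m ≠ 0) n 1
    rw [mul_one, mul_one, zigzag_of_mem_Ico ⟨by omega, by omega⟩] at hshift
    rw [abs_of_neg hn₀]
    omega

theorem exists_forall_zigzag_eq_abs {ι : Type*} [Finite ι] (hm : 0 < m) {b : ι → ℤ}
    (hb : ∀ i j, 0 < b i → b j < 0 → b i - b j ≤ m) :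
    ∃ T ∈ Set.Icc 0 m, ∀ i, zigzag m T (b i) = |b i| := by
  by_cases hpos : ∀ i, 0 ≤ b i
  · exact ⟨m, ⟨hm.le, le_rfl⟩, fun i => by rw [zigzag_self m _ hm, abs_of_nonneg (hpos i)]⟩
  by_cases hneg : ∀ i, b i ≤ 0
  · exact ⟨0, ⟨le_rfl, hm.le⟩, fun i => by rw [zigzag_zero m _ hm, abs_of_nonpos (hneg i)]⟩
  push Not at hpos hneg
  obtain ⟨j, hj⟩ := hpos
  obtain ⟨k, hk⟩ := hneg
  have : Nonempty ι := ⟨j⟩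
  obtain ⟨i, hi⟩ := Finite.exists_max b
  have hij := hb i j (hk.trans_le (hi k)) hj
  have hT : b i ∈ Set.Icc 0 m := ⟨(hk.trans_le (hi k)).le, by omega⟩
  refine ⟨b i, hT, fun l => zigzag_eq_abs hT.1 ⟨?_, ?_⟩ (hi l)⟩
  · obtain hl | hl := le_or_gt 0 (b l)
    · have := hT.2
      omega
    · have := hb i l (hk.trans_le (hi k)) hl
      omega
  · have := hi l
    omega

end Zigzag

section Exchange

variable {ι : Type*} [Fintype ι] {m : ℤ}

theorem exists_sum_abs_add_mul_le (m : ℤ) (a : ι → ℤ) :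
    ∃ q : ι → ℤ, ∑ i, q i = 0 ∧
      ∀ q' : ι → ℤ, ∑ i, q' i = 0 → ∑ i, |a i + m * q i| ≤ ∑ i, |a i + m * q' i| := by
  obtain ⟨q, hq, hmin⟩ := exists_minimalFor_of_wellFoundedLT (fun q : ι → ℤ => ∑ i, q i = 0)
    (fun q => ∑ i, (a i + m * q i).natAbs) ⟨0, by simp⟩
  refine ⟨q, hq, fun q' hq' => ?_⟩
  have hle : ∑ i, (a i + m * q i).natAbs ≤ ∑ i, (a i + m * q' i).natAbs :=
    (le_total _ _).elim id (hmin hq')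
  simpa only [← Int.natCast_natAbs] using mod_cast hle

theorem sub_le_of_sum_abs_add_mul_le (hm : 0 < m) {b : ι → ℤ}
    (hb : ∀ q : ι → ℤ, ∑ i, q i = 0 → ∑ i, |b i| ≤ ∑ i, |b i + m * q i|) {i j : ι}
    (hi : 0 < b i) (hj : b j < 0) : b i - b j ≤ m := by
  classical
  have hij : i ≠ j := by
    rintro rfl
    omega
  have hle := hb (Pi.single j 1 - Pi.single i 1) (by simp)
  rw [← sub_nonneg, ← Finset.sum_sub_distrib, ← Finset.sum_subset (Finset.subset_univ {i, j}),
    Finset.sum_pair hij] at hle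
  · simp only [Pi.sub_apply, Pi.single_eq_same, Pi.single_eq_of_ne hij,
      Pi.single_eq_of_ne hij.symm, abs_of_pos hi, abs_of_neg hj] at hle
    rcases abs_cases (b i + m * (0 - 1)) with hbi | hbi <;>
      rcases abs_cases (b j + m * (1 - 0)) with hbj | hbj <;> omega
  · intro k _ hk
    simp only [Finset.mem_insert, Finset.mem_singleton, not_or] at hk
    simp [hk.1, hk.2]

theorem exists_sum_abs_eq_sum_zigzag (hm : 0 < m) (a : ι → ℤ) :
    ∃ T ∈ Set.Icc 0 m, ∃ q : ι → ℤ, ∑ i, q i = 0 ∧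
      ∑ i, |a i + m * q i| = ∑ i, zigzag m T (a i) := by
  obtain ⟨q, hq, hmin⟩ := exists_sum_abs_add_mul_le m a
  have hmin' : ∀ q' : ι → ℤ, ∑ i, q' i = 0 →
      ∑ i, |a i + m * q i| ≤ ∑ i, |a i + m * q i + m * q' i| := fun q' hq' => by
    simpa only [Pi.add_apply, mul_add, add_assoc] using
      hmin (q + q') (by simp [Finset.sum_add_distrib, hq, hq'])
  obtain ⟨T, hT, habs⟩ := exists_forall_zigzag_eq_abs hm
    fun i j => sub_le_of_sum_abs_add_mul_le hm hmin' (i := i) (j := j)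
  refine ⟨T, hT, q, hq, ?_⟩
  simp only [← habs, zigzag_add_mul hm.ne', Finset.sum_add_distrib, ← Finset.mul_sum, hq,
    mul_zero, add_zero]

end Exchange

/-! ### Normal forms -/

/-- Normal forms `u ^ n σ u ^ a₁ σ ⋯ u ^ aᵣ` with `0 < aⱼ < m`, encoded as `(n, [a₁, …, aᵣ])`. -/
abbrev State (m : ℕ) : Type := ℤ × List (Set.Ioo (0 : ℤ) m)

namespace State

variable {m : ℕ}

/-- The exponents `n, a₁, …, aᵣ` of a normal form. -/
def exponents (s : State m) : List ℤ := s.1 :: s.2.map Subtype.val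

/-- Left multiplication by `u`. -/
def rotate (m : ℕ) : Equiv.Perm (State m) := (Equiv.addRight 1).prodCongr (Equiv.refl _)

/-- The lower bound `φ_T` for the word length. -/
def potential (T : ℤ) (s : State m) : ℤ := (s.exponents.map (zigzag m T)).sum

theorem rotate_mk (n : ℤ) (l : List (Set.Ioo (0 : ℤ) m)) : rotate m (n, l) = (n + 1, l) := rfl

theorem rotate_inv_fst (s : State m) : ((rotate m)⁻¹ s).1 = s.1 - 1 := rfl

theorem rotate_pow_mk (k : ℕ) (n : ℤ) (l : List (Set.Ioo (0 : ℤ) m)) :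
    (rotate m ^ k) (n, l) = (n + k, l) := by
  induction k with
  | zero => simp
  | succ k ih => rw [pow_succ', Equiv.Perm.mul_apply, ih, rotate_mk, Nat.cast_succ, add_assoc]

theorem exponents_mk (n : ℤ) (l : List (Set.Ioo (0 : ℤ) m)) :
    exponents (n, l) = n :: l.map Subtype.val := rfl

theorem potential_mk (T n : ℤ) (l : List (Set.Ioo (0 : ℤ) m)) :
    potential T (n, l) = zigzag m T n + (l.map fun a => zigzag m T a.1).sum := by
  simp [potential, exponents_mk]

variable [NeZero m]

theorem modulus_pos (m : ℕ) [NeZero m] : (0 : ℤ) < m := Int.natCast_pos.2 (NeZero.pos m)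

/-- Left multiplication by `σ`. It splits off the residue of the first exponent modulo `m`, the
remaining power of `u ^ m` commuting with `σ`; a zero residue is merged with the next exponent. -/
def reflectFun (s : State m) : State m :=
  if h : s.1 % m = 0 then
    match s.2 with
    | [] => s
    | a :: l => (s.1 + a, l)
  else
    (s.1 - s.1 % m,
      ⟨s.1 % m, (Int.emod_nonneg _ (modulus_pos m).ne').lt_of_ne' h,
        Int.emod_lt_of_pos _ (modulus_pos m)⟩ :: s.2)

theorem reflectFun_mul_nil (q : ℤ) : reflectFun (m := m) (m * q, []) = (m * q, []) := by
  simp [reflectFun]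

theorem reflectFun_mul_cons (q : ℤ) (a : Set.Ioo (0 : ℤ) m) (l : List (Set.Ioo (0 : ℤ) m)) :
    reflectFun (m * q, a :: l) = (m * q + a, l) := by
  simp [reflectFun]

theorem reflectFun_mul_add (q : ℤ) (a : Set.Ioo (0 : ℤ) m) (l : List (Set.Ioo (0 : ℤ) m)) :
    reflectFun (m * q + a, l) = (m * q, a :: l) := by
  have ha : (m * q + a : ℤ) % m = a := by
    rw [Int.mul_add_emod_self_left, Int.emod_eq_of_lt a.2.1.le a.2.2]
  simp [reflectFun, ha, a.2.1.ne']

theorem casesOn_emod {P : State m → Prop} (nil : ∀ q : ℤ, P (m * q, []))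
    (cons : ∀ (q : ℤ) (a : Set.Ioo (0 : ℤ) m) (l : List (Set.Ioo (0 : ℤ) m)), P (m * q, a :: l))
    (add : ∀ (q : ℤ) (a : Set.Ioo (0 : ℤ) m) (l : List (Set.Ioo (0 : ℤ) m)), P (m * q + a, l))
    (s : State m) : P s := by
  obtain ⟨n, l⟩ := s
  rw [← Int.mul_ediv_add_emod n m]
  obtain hr | hr := (Int.emod_nonneg n (modulus_pos m).ne').eq_or_lt
  · rw [← hr, add_zero]
    cases l with
    | nil => exact nil _
    | cons a l => exact cons _ a l
  · exact add _ ⟨n % m, hr, Int.emod_lt_of_pos n (modulus_pos m)⟩ l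

theorem reflectFun_involutive : Function.Involutive (reflectFun (m := m)) := by
  intro s
  induction s using casesOn_emod with
  | nil q => simp only [reflectFun_mul_nil]
  | cons q a l => rw [reflectFun_mul_cons, reflectFun_mul_add]
  | add q a l => rw [reflectFun_mul_add, reflectFun_mul_cons]

/-- `State.reflectFun` as a permutation. -/
def reflect (m : ℕ) [NeZero m] : Equiv.Perm (State m) := reflectFun_involutive.toPerm

theorem reflect_mul_nil (q : ℤ) : reflect m (m * q, []) = (m * q, []) := reflectFun_mul_nil q

theorem reflect_mul_cons (q : ℤ) (a : Set.Ioo (0 : ℤ) m) (l : List (Set.Ioo (0 : ℤ) m)) :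
    reflect m (m * q, a :: l) = (m * q + a, l) := reflectFun_mul_cons q a l

theorem reflect_mul_add (q : ℤ) (a : Set.Ioo (0 : ℤ) m) (l : List (Set.Ioo (0 : ℤ) m)) :
    reflect m (m * q + a, l) = (m * q, a :: l) := reflectFun_mul_add q a l

theorem reflect_mul_self : reflect m * reflect m = 1 :=
  Equiv.ext reflectFun_involutive

theorem commute_reflect_rotate_pow : Commute (reflect m) (rotate m ^ m) := by
  have hshift (q : ℤ) : m * q + m = m * (q + 1) := by ring
  refine Equiv.ext fun s => ?_
  simp only [Equiv.Perm.mul_apply]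
  induction s using casesOn_emod with
  | nil q => simp only [rotate_pow_mk, hshift, reflect_mul_nil]
  | cons q a l =>
    simp only [rotate_pow_mk, hshift, reflect_mul_cons, add_right_comm _ (a : ℤ) (m : ℤ)]
  | add q a l =>
    simp only [add_right_comm _ (a : ℤ) (m : ℤ), rotate_pow_mk, hshift, reflect_mul_add]

variable {T : ℤ}

theorem potential_reflect (hT : 0 ≤ T) (s : State m) :
    potential T (reflect m s) = potential T s := by
  induction s using casesOn_emod with
  | nil q => rw [reflect_mul_nil]
  | cons q a l =>
    simp [reflect_mul_cons, potential_mk, zigzag_mul_add (modulus_pos m) hT, add_assoc]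
  | add q a l =>
    simp [reflect_mul_add, potential_mk, zigzag_mul_add (modulus_pos m) hT, add_assoc]

theorem potential_rotate (hT : T ∈ Set.Icc 0 (m : ℤ)) (s : State m) :
    potential T (rotate m s) = potential T s + if s.1 % m < T then 1 else -1 := by
  obtain ⟨n, l⟩ := s
  rw [rotate_mk, potential_mk, potential_mk, zigzag_add_one (modulus_pos m) hT, add_right_comm]

theorem abs_potential_rotate_sub_le (hT : T ∈ Set.Icc 0 (m : ℤ)) (s : State m) :
    |potential T (rotate m s) - potential T s| ≤ 1 := by
  rw [potential_rotate hT, add_sub_cancel_left]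
  split_ifs <;> simp

theorem reflect_fst_emod_lt (hT : T ≤ m) {s : State m} (hs : (s.1 - 1) % m < T) :
    (reflect m s).1 % m < T := by
  have hmul (q : ℤ) (hq : (m * q - 1) % m < T) : T = m := by
    have hmod : (m * q - 1) % m = (m - 1 : ℤ) := by
      rw [show (m * q - 1 : ℤ) = m * (q - 1) + (m - 1) by ring, Int.mul_add_emod_self_left]
      exact Int.emod_eq_of_lt (by linarith [modulus_pos m]) (by linarith)
    omega
  induction s using casesOn_emod with
  | nil q => exact (hmul q hs).symm ▸ Int.emod_lt_of_pos _ (modulus_pos m)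
  | cons q a l => exact (hmul q hs).symm ▸ Int.emod_lt_of_pos _ (modulus_pos m)
  | add q a l =>
    rw [reflect_mul_add, Int.mul_emod_right]
    exact (Int.emod_nonneg _ (modulus_pos m).ne').trans_lt hs

theorem two_mul_potential_le (hT : T ∈ Set.Icc 0 (m : ℤ)) (s : State m) :
    2 * potential T s ≤
      potential T (rotate m (reflect m s)) + potential T ((rotate m)⁻¹ s) := by
  have hup := potential_rotate hT (reflect m s)
  have hdown := potential_rotate hT ((rotate m)⁻¹ s)
  have hslope := reflect_fst_emod_lt hT.2 (s := s)
  have hcancel : rotate m ((rotate m)⁻¹ s) = s := (rotate m).apply_symm_apply s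
  rw [potential_reflect hT.1] at hup
  rw [hcancel, rotate_inv_fst] at hdown
  split_ifs at hup hdown <;> grind

end State

/-! ### The dihedral Artin group -/

theorem map_altProd_s7 {G H F : Type*} [Monoid G] [Monoid H] [FunLike F G H] [MonoidHomClass F G H]
    (f : F) (n : ℕ) (x y : G) : f (altProd n x y) = altProd n (f x) (f y) := by
  induction n generalizing x y with
  | zero => exact map_one f
  | succ n ih => rw [altProd, altProd, map_mul, ih]

section AltProd

variable {G : Type*} [Group G] {u s : G}

theorem altProd_mul_involution (hs : s * s = 1) (n : ℕ) :
    altProd n (u * s) (s * u) = u ^ n * s ^ n ∧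
      altProd n (s * u) (u * s) = s * u ^ n * s * s ^ n := by
  induction n with
  | zero => simp [altProd, hs]
  | succ n ih =>
    obtain ⟨ih₁, ih₂⟩ := ih
    constructor
    · calc altProd (n + 1) (u * s) (s * u) = u * (s * s) * u ^ n * (s * s ^ n) := by
            simp only [altProd, ih₂, mul_assoc]
        _ = u ^ (n + 1) * s ^ (n + 1) := by rw [hs, mul_one, ← pow_succ', ← pow_succ']
    · calc altProd (n + 1) (s * u) (u * s) = s * (u * u ^ n) * 1 * s ^ n := by
            simp only [altProd, ih₁, mul_assoc, one_mul]
        _ = s * u ^ (n + 1) * s * s ^ (n + 1) := by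
            simp only [← hs, ← pow_succ', mul_assoc]

theorem altProd_mul_involution_comm_iff (hs : s * s = 1) (n : ℕ) :
    altProd n (u * s) (s * u) = altProd n (s * u) (u * s) ↔ Commute s (u ^ n) := by
  obtain ⟨h₁, h₂⟩ := altProd_mul_involution (u := u) hs n
  rw [h₁, h₂, mul_left_inj, ← mul_left_inj s, mul_assoc _ s s, hs, mul_one, eq_comm]
  rfl

end AltProd

namespace DA

variable {m : ℕ}

theorem altProd_gen :
    altProd m (gen 2 (DMat m) 0) (gen 2 (DMat m) 1) =
      altProd m (gen 2 (DMat m) 1) (gen 2 (DMat m) 0) := by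
  have hrel : altProd m (FreeGroup.of 0) (FreeGroup.of 1) *
      (altProd m (FreeGroup.of 1) (FreeGroup.of 0))⁻¹ ∈ artinRels 2 (DMat m) :=
    ⟨0, 1, by decide, m, rfl, rfl⟩
  have hone := PresentedGroup.one_of_mem hrel
  rwa [map_mul, map_inv, map_altProd_s7, map_altProd_s7, mul_inv_eq_one] at hone

section Lift

variable {G : Type*} [Group G]

/-- The universal property of `DA m`: the homomorphism sending the two generators to `a` and
`b`. -/
def lift (a b : G) (h : altProd m a b = altProd m b a) : DA m →* G :=
  PresentedGroup.toGroup (f := ![a, b]) <| by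
    rintro _ ⟨i, j, hij, k, hk, rfl⟩
    obtain rfl : k = m := by simpa [DMat, hij, eq_comm] using hk
    rw [map_mul, map_inv, map_altProd_s7, map_altProd_s7, mul_inv_eq_one]
    fin_cases i <;> fin_cases j <;> simp_all

variable {a b : G} (h : altProd m a b = altProd m b a)

theorem lift_gen_zero : lift a b h (gen 2 (DMat m) 0) = a := PresentedGroup.toGroup.of _

theorem lift_gen_one : lift a b h (gen 2 (DMat m) 1) = b := PresentedGroup.toGroup.of _

end Lift

theorem induction_on {P : DA m → Prop} (one : P 1) (gen_zero : P (gen 2 (DMat m) 0))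
    (gen_one : P (gen 2 (DMat m) 1)) (mul : ∀ g h, P g → P h → P (g * h))
    (inv : ∀ g, P g → P g⁻¹) (g : DA m) : P g := by
  have hg : g ∈ Subgroup.closure (Set.range PresentedGroup.of) :=
    PresentedGroup.closure_range_of (artinRels 2 (DMat m)) ▸ Subgroup.mem_top g
  induction hg using Subgroup.closure_induction with
  | mem _ hx =>
    obtain ⟨i, rfl⟩ := hx
    exact (Fin.forall_fin_two (p := fun i => P (gen 2 (DMat m) i))).2 ⟨gen_zero, gen_one⟩ i
  | one => exact one
  | mul g h _ _ hg hh => exact mul g h hg hh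
  | inv g _ hg => exact inv g hg

/-- The automorphism `σ` exchanging the two generators. -/
def swap (m : ℕ) : DA m ≃* DA m :=
  let f : DA m →* DA m := lift (gen 2 (DMat m) 1) (gen 2 (DMat m) 0) altProd_gen.symm
  have hf : f.comp f = MonoidHom.id _ :=
    PresentedGroup.ext <| (Fin.forall_fin_two (p := fun i => f (f (gen 2 (DMat m) i)) = _)).2
      ⟨by simp only [f, lift_gen_zero, lift_gen_one]; rfl,
        by simp only [f, lift_gen_zero, lift_gen_one]; rfl⟩
  f.toMulEquiv f hf hf

theorem swap_gen_zero : swap m (gen 2 (DMat m) 0) = gen 2 (DMat m) 1 :=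
  lift_gen_zero (m := m) altProd_gen.symm

theorem swap_gen_one : swap m (gen 2 (DMat m) 1) = gen 2 (DMat m) 0 :=
  lift_gen_one (m := m) altProd_gen.symm

theorem swap_swap (g : DA m) : swap m (swap m g) = g := (swap m).symm_apply_apply g

/-- Left multiplication by `u = x₁ σ` on `DA m = (DA m ⋊ ⟨σ⟩) / ⟨σ⟩`. -/
def turn (m : ℕ) : Equiv.Perm (DA m) :=
  MulAction.toPermHom (DA m) (DA m) (gen 2 (DMat m) 0) * (swap m).toEquiv

theorem turn_apply (g : DA m) : turn m g = gen 2 (DMat m) 0 * swap m g := rfl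

theorem swap_turn (g : DA m) : swap m (turn m g) = gen 2 (DMat m) 1 * g := by
  rw [turn_apply, map_mul, swap_gen_zero, swap_swap]

theorem commute_swap_turn_pow : Commute (swap m).toEquiv (turn m ^ m) := by
  have hswap : (swap m).toEquiv * (swap m).toEquiv = 1 := Equiv.ext swap_swap
  have hzero : turn m * (swap m).toEquiv = MulAction.toPermHom _ _ (gen 2 (DMat m) 0) := by
    rw [turn, mul_assoc, hswap, mul_one]
  have hone : (swap m).toEquiv * turn m = MulAction.toPermHom _ _ (gen 2 (DMat m) 1) :=
    Equiv.ext swap_turn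
  rw [← altProd_mul_involution_comm_iff hswap, hzero, hone, ← map_altProd_s7, ← map_altProd_s7,
    altProd_gen]

theorem swap_turn_zpow_mul (q : ℤ) (g : DA m) :
    swap m ((turn m ^ (m * q)) g) = (turn m ^ (m * q)) (swap m g) := by
  have h : Commute (swap m).toEquiv (turn m ^ (m * q)) := by
    rw [zpow_mul, zpow_natCast]
    exact commute_swap_turn_pow.zpow_right q
  exact DFunLike.congr_fun h.eq g

/-- The element `u ^ a₁ σ u ^ a₂ σ ⋯ u ^ aᵣ`, up to a factor `σ` on the right, with exponents
`[a₁, …, aᵣ]`. -/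
def realise : List ℤ → DA m
  | [] => 1
  | n :: l => (turn m ^ n) (swap m (realise l))

theorem realise_cons (n : ℤ) (l : List ℤ) :
    realise (m := m) (n :: l) = (turn m ^ n) (swap m (realise l)) := rfl

theorem realise_ofFn_add_mul {k : ℕ} (a q : Fin k → ℤ) :
    realise (m := m) (List.ofFn fun i => a i + m * q i) =
      (turn m ^ (m * ∑ i, q i)) (realise (List.ofFn a)) := by
  induction k with
  | zero => simp
  | succ k ih =>
    rw [List.ofFn_succ, realise_cons, ih, swap_turn_zpow_mul, List.ofFn_succ, realise_cons,
      Fin.sum_univ_succ, ← Equiv.Perm.mul_apply, ← Equiv.Perm.mul_apply, ← zpow_add, ← zpow_add]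
    ring_nf

section NormalForm

open State

theorem realise_exponents_rotate (s : State m) :
    realise (rotate m s).exponents = turn m (realise s.exponents) := by
  obtain ⟨n, l⟩ := s
  rw [rotate_mk, exponents_mk, exponents_mk, realise_cons, realise_cons, add_comm, zpow_one_add,
    Equiv.Perm.mul_apply]

variable [NeZero m]

theorem realise_exponents_reflect (s : State m) :
    realise (reflect m s).exponents = swap m (realise s.exponents) := by
  induction s using casesOn_emod with
  | nil q =>
    rw [reflect_mul_nil, exponents_mk, List.map_nil, realise_cons, swap_turn_zpow_mul, realise,
      swap_swap, map_one]
  | cons q a l =>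
    rw [reflect_mul_cons, exponents_mk, exponents_mk, List.map_cons, realise_cons, realise_cons,
      realise_cons, swap_turn_zpow_mul, swap_swap, zpow_add, Equiv.Perm.mul_apply]
  | add q a l =>
    rw [reflect_mul_add, exponents_mk, exponents_mk, List.map_cons, realise_cons, realise_cons,
      realise_cons, zpow_add, Equiv.Perm.mul_apply, swap_turn_zpow_mul]

/-- The action of `DA m` on normal forms by left multiplication. -/
def action (m : ℕ) [NeZero m] : DA m →* Equiv.Perm (State m) :=
  lift (rotate m * reflect m) (reflect m * rotate m)
    ((altProd_mul_involution_comm_iff reflect_mul_self m).2 commute_reflect_rotate_pow)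

theorem action_gen_zero (s : State m) :
    action m (gen 2 (DMat m) 0) s = rotate m (reflect m s) :=
  DFunLike.congr_fun (lift_gen_zero _) s

theorem action_gen_one (s : State m) :
    action m (gen 2 (DMat m) 1) s = reflect m (rotate m s) :=
  DFunLike.congr_fun (lift_gen_one _) s

theorem realise_exponents_action (g : DA m) (s : State m) :
    realise (action m g s).exponents = g * realise s.exponents := by
  induction g using induction_on generalizing s with
  | one => rw [map_one, one_mul, Equiv.Perm.one_apply]
  | gen_zero =>
    rw [action_gen_zero, realise_exponents_rotate, realise_exponents_reflect, turn_apply, swap_swap]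
  | gen_one => rw [action_gen_one, realise_exponents_reflect, realise_exponents_rotate, swap_turn]
  | mul g h hg hh => rw [map_mul, Equiv.Perm.mul_apply, hg, hh, mul_assoc]
  | inv g hg =>
    rw [eq_inv_mul_iff_mul_eq, ← hg, ← Equiv.Perm.mul_apply, ← map_mul, mul_inv_cancel, map_one,
      Equiv.Perm.one_apply]

/-- The normal form of an element of `DA m`. -/
def normalForm (g : DA m) : State m := action m g (0, [])

theorem normalForm_mul (g h : DA m) : normalForm (g * h) = action m g (normalForm h) := by
  rw [normalForm, map_mul, Equiv.Perm.mul_apply, normalForm]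

theorem realise_normalForm (g : DA m) : realise (normalForm g).exponents = g := by
  rw [normalForm, realise_exponents_action, exponents_mk, List.map_nil, realise_cons, zpow_zero,
    Equiv.Perm.one_apply, realise, map_one, mul_one]

end NormalForm

theorem length_mul_le (g h : DA m) : ℓD m (g * h) ≤ ℓD m g + ℓD m h :=
  wordLength_mul_le submonoid_closure_genSet g h

theorem length_inv (g : DA m) : ℓD m g⁻¹ = ℓD m g :=
  wordLength_inv submonoid_closure_genSet (fun _ => inv_mem_genSet) g

theorem length_gen_le_one (i : Fin 2) : ℓD m (gen 2 (DMat m) i) ≤ 1 :=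
  wordLength_le_one (gen_mem_genSet i)

theorem length_swap_le (g : DA m) : ℓD m (swap m g) ≤ ℓD m g := by
  have hgen : ∀ i, swap m (gen 2 (DMat m) i) ∈ genSet 2 (DMat m) :=
    Fin.forall_fin_two.2
      ⟨swap_gen_zero ▸ gen_mem_genSet 1, swap_gen_one ▸ gen_mem_genSet 0⟩
  refine wordLength_map_le submonoid_closure_genSet (swap m).toMonoidHom ?_ g
  rintro _ ⟨i, rfl | rfl⟩
  · exact hgen i
  · exact map_inv (swap m) _ ▸ inv_mem_genSet (hgen i)

theorem length_swap (g : DA m) : ℓD m (swap m g) = ℓD m g :=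
  (length_swap_le g).antisymm <| by simpa only [swap_swap] using length_swap_le (swap m g)

theorem length_turn_le (g : DA m) : ℓD m (turn m g) ≤ ℓD m g + 1 := by
  rw [turn_apply, ← length_swap g, add_comm]
  exact (length_mul_le _ _).trans (Nat.add_le_add_right (length_gen_le_one 0) _)

theorem length_le_length_turn (g : DA m) : ℓD m g ≤ ℓD m (turn m g) + 1 := by
  calc ℓD m g = ℓD m ((gen 2 (DMat m) 0)⁻¹ * turn m g) := by
        rw [turn_apply, inv_mul_cancel_left, length_swap]
    _ ≤ ℓD m (gen 2 (DMat m) 0) + ℓD m (turn m g) := by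
        simpa only [length_inv] using length_mul_le (gen 2 (DMat m) 0)⁻¹ (turn m g)
    _ ≤ ℓD m (turn m g) + 1 := by rw [add_comm]; gcongr; exact length_gen_le_one 0

theorem length_turn_zpow_le (n : ℤ) (g : DA m) : (ℓD m ((turn m ^ n) g) : ℤ) ≤ |n| + ℓD m g := by
  induction n using Int.induction_on with
  | zero => simp
  | succ k ih =>
    have hstep := length_turn_le ((turn m ^ (k : ℤ)) g)
    rw [← Equiv.Perm.mul_apply, ← zpow_one_add, add_comm 1 (k : ℤ)] at hstep
    grind
  | pred k ih =>
    have hstep := length_le_length_turn ((turn m ^ (-k - 1 : ℤ)) g)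
    rw [← Equiv.Perm.mul_apply, ← zpow_one_add, add_sub_cancel] at hstep
    grind

theorem length_realise_le (l : List ℤ) : (ℓD m (realise l) : ℤ) ≤ (l.map fun a => |a|).sum := by
  induction l with
  | nil => exact (congrArg Nat.cast (wordLength_one _)).le
  | cons n l ih =>
    rw [realise_cons, List.map_cons, List.sum_cons]
    refine (length_turn_zpow_le _ _).trans ?_
    rw [length_swap]
    gcongr

section Potential

open State

variable [NeZero m] {T : ℤ}

theorem abs_potential_action_gen_sub_le (hT : T ∈ Set.Icc 0 (m : ℤ)) (i : Fin 2) (s : State m) :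
    |potential T (action m (gen 2 (DMat m) i) s) - potential T s| ≤ 1 := by
  revert i
  refine Fin.forall_fin_two.2 ⟨?_, ?_⟩
  · rw [action_gen_zero, ← potential_reflect hT.1 s]
    exact abs_potential_rotate_sub_le hT _
  · rw [action_gen_one, potential_reflect hT.1]
    exact abs_potential_rotate_sub_le hT _

theorem potential_le_length (hT : T ∈ Set.Icc 0 (m : ℤ)) (g : DA m) :
    potential T (normalForm g) ≤ ℓD m g := by
  refine le_wordLength (F := fun g => potential T (normalForm g)) submonoid_closure_genSet
    ?_ ?_ g
  · rw [normalForm, map_one, Equiv.Perm.one_apply, potential_mk, List.map_nil, List.sum_nil,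
      add_zero, zigzag_of_mem_Ico ⟨le_rfl, modulus_pos m⟩]
    exact min_le_left _ _
  · rintro _ ⟨i, rfl | rfl⟩ g
    · have h := abs_potential_action_gen_sub_le hT i (normalForm g)
      rw [← normalForm_mul] at h
      linarith [le_of_abs_le h]
    · have h := abs_potential_action_gen_sub_le hT i (normalForm ((gen 2 (DMat m) i)⁻¹ * g))
      rw [← normalForm_mul, mul_inv_cancel_left] at h
      linarith [neg_le_of_abs_le h]

theorem exists_length_eq_potential (g : DA m) :
    ∃ T ∈ Set.Icc 0 (m : ℤ), (ℓD m g : ℤ) = potential T (normalForm g) := by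
  set l := (normalForm g).exponents with hl
  obtain ⟨T, hT, q, hq, hsum⟩ := exists_sum_abs_eq_sum_zigzag (modulus_pos m) l.get
  have hg : realise (List.ofFn fun i => l.get i + m * q i) = g := by
    rw [realise_ofFn_add_mul, hq, mul_zero, zpow_zero, Equiv.Perm.one_apply, List.ofFn_get, hl,
      realise_normalForm]
  have hofFn (f : ℤ → ℤ) (b : Fin l.length → ℤ) : ((List.ofFn b).map f).sum = ∑ i, f (b i) := by
    rw [List.map_ofFn, List.sum_ofFn, Function.comp_def]
  refine ⟨T, hT, le_antisymm ?_ (potential_le_length hT g)⟩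
  calc (ℓD m g : ℤ) = ℓD m (realise (List.ofFn fun i => l.get i + m * q i)) := by rw [hg]
    _ ≤ ∑ i, |l.get i + m * q i| := (length_realise_le _).trans_eq (hofFn _ _)
    _ = ∑ i, zigzag m T (l.get i) := hsum
    _ = potential T (normalForm g) := by rw [← hofFn, List.ofFn_get, hl, potential]

theorem two_mul_length_le_gen_zero (g : DA m) :
    2 * ℓD m g ≤ ℓD m (gen 2 (DMat m) 0 * g) + ℓD m ((gen 2 (DMat m) 0)⁻¹ * g) := by
  obtain ⟨T, hT, hg⟩ := exists_length_eq_potential g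
  have hup := potential_le_length hT (gen 2 (DMat m) 0 * g)
  have hdown := potential_le_length hT ((gen 2 (DMat m) 0)⁻¹ * g)
  have haction : action m (gen 2 (DMat m) 0) = rotate m * reflect m :=
    Equiv.ext action_gen_zero
  have hreflect : (reflect m)⁻¹ = reflect m := inv_eq_of_mul_eq_one_left reflect_mul_self
  rw [normalForm_mul, haction, Equiv.Perm.mul_apply] at hup
  rw [normalForm_mul, map_inv, haction, mul_inv_rev, hreflect, Equiv.Perm.mul_apply,
    potential_reflect hT.1] at hdown
  linarith [two_mul_potential_le hT (normalForm g)]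

theorem two_mul_length_le (i : Fin 2) (g : DA m) :
    2 * ℓD m g ≤ ℓD m (gen 2 (DMat m) i * g) + ℓD m ((gen 2 (DMat m) i)⁻¹ * g) := by
  revert i
  refine Fin.forall_fin_two.2 ⟨two_mul_length_le_gen_zero g, ?_⟩
  have h := two_mul_length_le_gen_zero (swap m g)
  rwa [← swap_gen_one, ← map_inv, ← map_mul, ← map_mul, length_swap, length_swap,
    length_swap] at h

end Potential

theorem length_gen_mul (i : Fin 2) (g : DA m) :
    ℓD m (gen 2 (DMat m) i * g) = ℓD m g + 1 ∨ ℓD m g = ℓD m (gen 2 (DMat m) i * g) + 1 := by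
  let parity : DA m →* Multiplicative (ZMod 2) := lift (.ofAdd 1) (.ofAdd 1) rfl
  have hgen : ∀ i, parity (gen 2 (DMat m) i) = .ofAdd 1 :=
    Fin.forall_fin_two.2 ⟨lift_gen_zero _, lift_gen_one _⟩
  have hgenSet : ∀ a ∈ genSet 2 (DMat m), parity a = .ofAdd 1 := by
    rintro _ ⟨i, rfl | rfl⟩
    · exact hgen i
    · rw [map_inv, hgen]
      rfl
  have hparity (g : DA m) : parity g = .ofAdd (ℓD m g : ZMod 2) :=
    map_eq_ofAdd_wordLength submonoid_closure_genSet hgenSet g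
  have hmod : ℓD m (gen 2 (DMat m) i * g) % 2 = (1 + ℓD m g) % 2 := by
    have hmul := map_mul parity (gen 2 (DMat m) i) g
    rw [hgen, hparity, hparity, ← ofAdd_add, Equiv.apply_eq_iff_eq] at hmul
    exact (ZMod.natCast_eq_natCast_iff' _ _ 2).1 (by exact_mod_cast hmul)
  have hle := length_mul_le (gen 2 (DMat m) i) g
  have hge := length_mul_le (gen 2 (DMat m) i)⁻¹ (gen 2 (DMat m) i * g)
  rw [inv_mul_cancel_left, length_inv] at hge
  have hgen_le := length_gen_le_one (m := m) i
  omega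

theorem exists_length_zpow_mul_eq [NeZero m] (i : Fin 2) (g : DA m) :
    ∃ c : ℤ, ∀ s : ℤ, ℓD m (gen 2 (DMat m) i ^ s * g) =
      ℓD m (gen 2 (DMat m) i ^ c * g) + (s - c).natAbs := by
  refine exists_eq_add_natAbs_sub (f := fun s => ℓD m (gen 2 (DMat m) i ^ s * g))
    (fun s => ?_) (fun s => ?_)
  · rw [add_comm, zpow_one_add, mul_assoc]
    exact length_gen_mul i _
  · rw [add_comm s, sub_eq_neg_add, zpow_one_add, zpow_add, zpow_neg_one, mul_assoc, mul_assoc]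
    exact two_mul_length_le i _

end DA

/-- **Lemma.** If `g h` lies in the cyclic subgroup `⟨x_i⟩` of a dihedral Artin group,
then `g` and `h` have geodesic factorisations `x_i^s w` and `w⁻¹ x_i^t`. -/
theorem factorisation_of_product_in_cyclic
    (m : ℕ) (hm : 2 ≤ m) (g h : DA m) (i : Fin 2)
    (hgh : g * h ∈ Subgroup.zpowers (gen 2 (DMat m) i)) :
    ∃ (w : DA m) (s t : ℤ),
      g = gen 2 (DMat m) i ^ s * w ∧ ℓD m g = s.natAbs + ℓD m w ∧
      h = w⁻¹ * gen 2 (DMat m) i ^ t ∧ ℓD m h = ℓD m w + t.natAbs := by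
  have : NeZero m := ⟨by omega⟩
  set x := gen 2 (DMat m) i
  obtain ⟨k, hk⟩ := Subgroup.mem_zpowers_iff.1 hgh
  obtain ⟨c, hc⟩ : ∃ c : ℤ, ∀ s : ℤ, ℓD m (x ^ s * g) = ℓD m (x ^ c * g) + (s - c).natAbs :=
    DA.exists_length_zpow_mul_eq i g
  have hh : h = g⁻¹ * x ^ k := by rw [hk, inv_mul_cancel_left]
  have hh_inv : h⁻¹ = x ^ (-k) * g := by rw [hh, mul_inv_rev, inv_inv, zpow_neg]
  refine ⟨x ^ c * g, -c, c + k, ?_, ?_, ?_, ?_⟩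
  · rw [zpow_neg, inv_mul_cancel_left]
  · have hg := hc 0
    rw [zpow_zero, one_mul] at hg
    omega
  · rw [hh, mul_inv_rev, mul_assoc, zpow_add, inv_mul_cancel_left]
  · have hh_length := hc (-k)
    rw [← hh_inv, DA.length_inv] at hh_length
    omega

end ArtinRD
end
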